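/- arXiv:1407.5041 — 2 statements merged into one kernel-verified Lean document; each statement's English description precedes it below -/
import Mathlib

section
/- Let F be a field of characteristic not p (p prime), A a central simple F-algebra of degree p, and L/F a field extension of degree p. Then there exists a field extension E/F such that: (1) the restriction map Br(F)[p] → Br(E)[p] is injective; and (2) the compositum EL splits A ⊗_F E. -/
open scoped TensorProduct
universe u

/-- A finite-dimensional `F`-algebra is *split* if it is a matrix algebra over `F`. -/
def IsSplit (F : Type u) [Field F] (A : Type u) [Ring A] [Algebra F A] : Prop :=
  ∃ n : ℕ, 0 < n ∧ Nonempty (A ≃ₐ[F] Matrix (Fin n) (Fin n) F)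

/-- Brauer equivalence of two `F`-algebras. -/
def BrauerEquiv (F : Type u) [Field F] (A B : Type u) [Ring A] [Algebra F A]
    [Ring B] [Algebra F B] : Prop :=
  ∃ n m : ℕ, 0 < n ∧ 0 < m ∧ Nonempty (Matrix (Fin n) (Fin n) A ≃ₐ[F] Matrix (Fin m) (Fin m) B)

/-- `A` is a finite-dimensional central simple `F`-algebra. -/
def IsCSA (F A : Type u) [Field F] [Ring A] [Algebra F A] : Prop :=
  Algebra.IsCentral F A ∧ IsSimpleRing A ∧ FiniteDimensional F A

/-- The `n`-fold tensor power of an `F`-algebra. -/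
abbrev tpow (F : Type u) [Field F] (A : Type u) [Ring A] [Algebra F A] (n : ℕ) : Type u :=
  ⨂[F] _ : Fin n, A

/-- The Brauer class of `A` is killed by `p`: its `p`-th tensor power is split. -/
def IsPTorsion (F : Type u) [Field F] (A : Type u) [Ring A] [Algebra F A] (p : ℕ) : Prop :=
  IsSplit F (tpow F A p)

/-- The restriction map `Br(F)[p] → Br(E)[p]` along `f : F →+* E` is injective:
two `p`-torsion Brauer classes that agree after scalar extension agree already over `F`. -/
def ResInjP (p : ℕ) (F E : Type u) [Field F] [Field E] (f : F →+* E) : Prop :=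
  letI : Algebra F E := f.toAlgebra
  ∀ (A B : Type u) [Ring A] [Algebra F A] [Ring B] [Algebra F B],
    IsCSA F A → IsCSA F B → IsPTorsion F A p → IsPTorsion F B p →
    BrauerEquiv E (E ⊗[F] A) (E ⊗[F] B) → BrauerEquiv F A B

/-- The restriction map `Br(F) → Br(E)` along `f : F →+* E` is injective. -/
def ResInj (F E : Type u) [Field F] [Field E] (f : F →+* E) : Prop :=
  letI : Algebra F E := f.toAlgebra
  ∀ (A B : Type u) [Ring A] [Algebra F A] [Ring B] [Algebra F B],
    IsCSA F A → IsCSA F B →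
    BrauerEquiv E (E ⊗[F] A) (E ⊗[F] B) → BrauerEquiv F A B

/-- `D` is a central division algebra of degree `p` over `K`. -/
def IsCentralDivisionOfDeg (K D : Type u) [Field K] [DivisionRing D] [Algebra K D]
    (p : ℕ) : Prop :=
  Algebra.IsCentral K D ∧ FiniteDimensional K D ∧ Module.finrank K D = p ^ 2

/-- Witness for STATEMENT 8: a field extension `E/F` with injective restriction on
`p`-torsion Brauer classes, together with a compositum `N = EL` splitting `A ⊗_F E`. -/
structure SplittingExtension (p : ℕ) (F : Type u) [Field F]
    (A : Type u) [Ring A] [Algebra F A] (L : Type u) [Field L] [Algebra F L] :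
    Type (u + 1) where
  E : Type u
  [fieldE : Field E]
  [algFE : Algebra F E]
  resInj : ResInjP p F E (algebraMap F E)
  /-- the compositum `EL` -/
  N : Type u
  [fieldN : Field N]
  [algFN : Algebra F N]
  [algEN : Algebra E N]
  [algLN : Algebra L N]
  [towerE : IsScalarTower F E N]
  [towerL : IsScalarTower F L N]
  compositum : Algebra.adjoin E (Set.range (algebraMap L N)) = ⊤
  splits : IsSplit N (N ⊗[F] A)

/-!
Let `X` be a generic `n × n` matrix over a separable closure `K` of `F`, where `n = [L : F]`. Then
`X` conjugates the diagonal representation of `L`, whose entries are the embeddings of `L` into `K`,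
to a generic embedding of `L` into the split form of `A`. This embedding is unchanged by the
semilinear substitutions `X ↦ a⁻¹ X d` of `K(X)`, with `a` twisting the representation of `A` and
`d` that of `L`, so it descends to the fixed field `E`: the function field of the variety of
embeddings `L → A`. Thus `EL` becomes a maximal subfield of `A ⊗ E`, and so splits it.

Suppose `E` splits a central simple algebra `D` over `F`. Choose an invertible matrix `u` over
`K(X)` that conjugates the constant representation of `D` to the one defined over `E`. It can be
taken with polynomial entries having no common factor, and then each substitution multiplies `u` by
a constant matrix, since the remaining scalar factor is a unit of `K[X]`. The diagonal torus acts
through `X ↦ X t` by a character of weight `e`. The Galois group permutes the embeddings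
transitively, so `e` is constant and `u / det X ^ e` is invariant under the torus. What is left is a
semilinear action of the Galois group by constant matrices, and Hilbert 90 splits `D` over `F`.
-/

namespace GenericConjugator

open scoped Topology
open MulOpposite
open Matrix (GeneralLinearGroup)

section CentralSimple

variable (F A : Type*) [Field F] [Ring A] [Algebra F A] [Algebra.IsCentral F A] [IsSimpleRing A]
  [FiniteDimensional F A]

theorem mulLeftRight_surjective : Function.Surjective (AlgHom.mulLeftRight F A) := by
  let _ : Module (A ⊗[F] Aᵐᵒᵖ) A := TensorProduct.Algebra.module
  have smul_eq (t : A ⊗[F] Aᵐᵒᵖ) (x : A) : t • x = AlgHom.mulLeftRight F A t x := rfl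
  have : IsSimpleModule (A ⊗[F] Aᵐᵒᵖ) A := by
    rw [isSimpleModule_iff_toSpanSingleton_surjective]
    refine ⟨inferInstance, fun x hx ↦ LinearMap.range_eq_top.mp ?_⟩
    let I := LinearMap.range (LinearMap.toSpanSingleton (A ⊗[F] Aᵐᵒᵖ) A x)
    have mul_mem (a b y : A) (hy : y ∈ I) : a * y * b ∈ I := by
      simpa [smul_eq] using I.smul_mem (a ⊗ₜ[F] op b) hy
    let J : TwoSidedIdeal A := .mk' I I.zero_mem I.add_mem I.neg_mem
      (fun {a y} hy ↦ by simpa using mul_mem a 1 y hy)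
      (fun {y b} hy ↦ by simpa using mul_mem 1 b y hy)
    have one_mem : (1 : A) ∈ I := by
      have : (1 : A) ∈ J := IsSimpleRing.one_mem_of_ne_zero_mem J hx
        ((TwoSidedIdeal.mem_mk' ..).2 ⟨1, one_smul ..⟩)
      simpa [J, TwoSidedIdeal.mem_mk'] using this
    exact eq_top_iff.2 fun y _ ↦ by simpa only [mul_one] using mul_mem y 1 1 one_mem
  have scalar (g : Module.End (A ⊗[F] Aᵐᵒᵖ) A) : ∃ c : F, ∀ x, g x = c • x := by
    have map_mul (a b x : A) : g (a * x * b) = a * g x * b := by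
      simpa [smul_eq] using g.map_smul (a ⊗ₜ[F] op b) x
    have hleft (a : A) : g a = a * g 1 := by simpa using map_mul a 1 1
    have hright (a : A) : g a = g 1 * a := by simpa using map_mul 1 a 1
    have : g 1 ∈ Subalgebra.center F A :=
      Subalgebra.mem_center_iff.2 fun a ↦ (hleft a).symm.trans (hright a)
    obtain ⟨c, hc⟩ := Algebra.IsCentral.mem_center_iff F |>.1 this
    exact ⟨c, fun x ↦ by rw [hright, hc, Algebra.smul_def]⟩
  intro f
  let f' : Module.End (Module.End (A ⊗[F] Aᵐᵒᵖ) A) A :=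
    { toFun := f
      map_add' := f.map_add
      map_smul' := fun g x ↦ by
        obtain ⟨c, hc⟩ := scalar g
        simp [hc] }
  classical
  obtain ⟨t, ht⟩ := jacobson_density f' (Finset.univ.image (Module.finBasis F A))
  exact ⟨t, (Module.finBasis F A).ext fun i ↦ (ht _ (by simp)).symm⟩

theorem isAzumaya_of_isSimpleRing : IsAzumaya F A where
  bij := by
    refine ⟨?_, mulLeftRight_surjective F A⟩
    have h : Module.finrank F (A ⊗[F] Aᵐᵒᵖ) = Module.finrank F (Module.End F A) := by
      rw [Module.finrank_tensorProduct, Module.finrank_linearMap, (opLinearEquiv F).finrank_eq]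
    exact (LinearMap.injective_iff_surjective_of_finrank_eq_finrank
      (f := (AlgHom.mulLeftRight F A).toLinearMap) h).2 (mulLeftRight_surjective F A)

end CentralSimple

section TensorProduct

variable (F R A : Type*) [Field F] [Ring R] [Algebra F R] [Ring A] [Algebra F A]

theorem isSimpleRing_tensorProduct [IsSimpleRing R] [Algebra.IsCentral F A] [IsSimpleRing A]
    [FiniteDimensional F A] : IsSimpleRing (R ⊗[F] A) := by
  refine .of_eq_bot_or_eq_top fun I ↦ or_iff_not_imp_left.2 fun hI ↦ ?_
  obtain ⟨z, hz, hz0 : z ≠ 0⟩ := SetLike.exists_of_lt (bot_lt_iff_ne_bot.2 hI)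
  have map_mem (t : A ⊗[F] Aᵐᵒᵖ) :
      (AlgHom.mulLeftRight F A t).lTensor R z ∈ I := by
    induction t with
    | zero => simp
    | add s t hs ht => simpa [LinearMap.lTensor_add] using I.add_mem hs ht
    | tmul a b =>
      have : (AlgHom.mulLeftRight F A (a ⊗ₜ b)).lTensor R z = (1 ⊗ₜ a) * z * (1 ⊗ₜ b.unop) := by
        clear hz hz0
        induction z with
        | zero => simp
        | add x y hx hy => simp only [map_add, hx, hy, mul_add, add_mul]
        | tmul r x => simp
      exact this ▸ I.mul_mem_right _ _ (I.mul_mem_left _ _ hz)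
  let c := Module.finBasis F A
  let e := Algebra.TensorProduct.basis R c
  obtain ⟨k, hk⟩ : ∃ k, e.repr z k ≠ 0 := by
    by_contra! h
    exact hz0 (e.repr.map_eq_zero_iff.1 (Finsupp.ext h))
  obtain ⟨t, ht⟩ := mulLeftRight_surjective F A ((c.coord k).smulRight 1)
  have coeff_mem : e.repr z k ⊗ₜ 1 ∈ I := by
    have h : ((c.coord k).smulRight (1 : A)).lTensor R z = e.repr z k ⊗ₜ 1 := by
      clear hz hz0 map_mem hk
      induction z with
      | zero => simp
      | add x y hx hy => simp [hx, hy, TensorProduct.add_tmul]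
      | tmul r x => simp [e, ← Algebra.smul_def, ← Algebra.commutes, ← TensorProduct.smul_tmul']
    exact h ▸ ht ▸ map_mem t
  have one_mem : 1 ∈ I.comap (Algebra.TensorProduct.includeLeft : R →ₐ[F] R ⊗[F] A) :=
    IsSimpleRing.one_mem_of_ne_zero_mem _ hk ((TwoSidedIdeal.mem_comap _).2 coeff_mem)
  exact I.one_mem_iff.1 ((TwoSidedIdeal.mem_comap _).1 one_mem)

variable {F R A} in
theorem mem_range_includeLeft_of_commute [Algebra.IsCentral F A] {z : R ⊗[F] A}
    (hz : ∀ a, Commute z (1 ⊗ₜ a)) :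
    z ∈ (Algebra.TensorProduct.includeLeft : R →ₐ[F] R ⊗[F] A).range := by
  have hmem : z ∈ Subalgebra.centralizer F
      (Algebra.TensorProduct.includeRight : A →ₐ[F] R ⊗[F] A).range :=
    Subalgebra.mem_centralizer_iff F |>.2 <| by rintro _ ⟨a, rfl⟩; exact (hz a).symm
  rw [Subalgebra.centralizer_range_includeRight_eq_center_tensorProduct] at hmem
  obtain ⟨w, rfl⟩ := hmem
  clear hz
  induction w with
  | zero => exact ⟨0, by simp⟩
  | add x y hx hy => simpa using add_mem hx hy
  | tmul r a =>
    obtain ⟨c, hc⟩ := Algebra.IsCentral.mem_center_iff F |>.1 a.2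
    exact ⟨c • r, by simp [hc, Algebra.algebraMap_eq_smul_one]⟩

theorem isCentral_tensorProduct [Algebra.IsCentral F R] [Nontrivial A] [Algebra.IsCentral F A] :
    Algebra.IsCentral F (R ⊗[F] A) where
  out := by
    intro z hz
    rw [Subalgebra.mem_center_iff] at hz
    obtain ⟨r, rfl⟩ := mem_range_includeLeft_of_commute fun a ↦ (hz (1 ⊗ₜ a)).symm
    have hr : r ∈ Subalgebra.center F R := Subalgebra.mem_center_iff.2 fun s ↦
      Algebra.TensorProduct.includeLeft_injective (S := F) (B := A)
        (FaithfulSMul.algebraMap_injective F A) (by simpa using hz (s ⊗ₜ 1))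
    obtain ⟨c, rfl⟩ := Algebra.IsCentral.mem_center_iff F |>.1 hr
    exact ⟨c, rfl⟩

theorem isCentral_baseChange (N : Type*) [Field N] [Algebra F N] [Algebra.IsCentral F A] :
    Algebra.IsCentral N (N ⊗[F] A) where
  out := by
    intro z hz
    rw [Subalgebra.mem_center_iff] at hz
    obtain ⟨r, rfl⟩ := mem_range_includeLeft_of_commute fun a ↦ (hz (1 ⊗ₜ a)).symm
    exact ⟨r, rfl⟩

end TensorProduct

section BaseChange

variable {F N A B : Type*} [Field F] [Field N] [Algebra F N] [Ring A] [Algebra F A]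
  [Algebra.IsCentral F A] [IsSimpleRing A] [FiniteDimensional F A] [Ring B] [Nontrivial B]
  [Algebra F B] [Algebra N B] [IsScalarTower F N B] [FiniteDimensional N B]

/-- The identification `N ⊗ A ≃ B` induced by a homomorphism from a central simple `F`-algebra `A`
to an `N`-algebra `B` of the same dimension. -/
noncomputable def baseChangeEquiv (φ : A →ₐ[F] B) (h : Module.finrank F A = Module.finrank N B) :
    N ⊗[F] A ≃ₐ[N] B :=
  let f := Algebra.TensorProduct.lift (Algebra.ofId N B) φ fun c a ↦ Algebra.commutes c (φ a)
  have _ := isSimpleRing_tensorProduct F N A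
  have hf : Function.Injective f := f.toRingHom.injective
  .ofBijective f ⟨hf, (LinearMap.injective_iff_surjective_of_finrank_eq_finrank
    (f := f.toLinearMap) (by rw [Module.finrank_baseChange, h])).1 hf⟩

@[simp]
theorem baseChangeEquiv_tmul (φ : A →ₐ[F] B) (h : Module.finrank F A = Module.finrank N B) (c : N)
    (a : A) : baseChangeEquiv φ h (c ⊗ₜ a) = c • φ a :=
  (Algebra.smul_def c (φ a)).symm

end BaseChange

section Brauer

variable {F : Type u} [Field F]

theorem isSplit_of_algEquiv_matrix {A : Type u} [Ring A] [Algebra F A] {ι : Type*} [Fintype ι]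
    [DecidableEq ι] [Nonempty ι] (e : A ≃ₐ[F] Matrix ι ι F) : IsSplit F A :=
  ⟨Fintype.card ι, Fintype.card_pos,
    ⟨e.trans (Matrix.reindexAlgEquiv F F (Fintype.equivFin ι))⟩⟩

theorem isSplit_of_algEquiv_end {A V : Type u} [Ring A] [Algebra F A] [AddCommGroup V] [Module F V]
    [FiniteDimensional F V] [Nontrivial V] (e : A ≃ₐ[F] Module.End F V) : IsSplit F A :=
  have : NeZero (Module.finrank F V) := ⟨Module.finrank_pos.ne'⟩
  isSplit_of_algEquiv_matrix (e.trans (algEquivMatrix (Module.finBasis F V)))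

variable {B C : Type u} [Ring B] [Algebra F B] [Ring C] [Algebra F C]

theorem brauerEquiv_of_matrix {n m : ℕ} (hn : 0 < n) (hm : 0 < m)
    (h : BrauerEquiv F (Matrix (Fin n) (Fin n) B) (Matrix (Fin m) (Fin m) C)) :
    BrauerEquiv F B C := by
  obtain ⟨k, l, hk, hl, ⟨e⟩⟩ := h
  let flatten (R : Type u) [Ring R] [Algebra F R] (a b : ℕ) :
      Matrix (Fin a) (Fin a) (Matrix (Fin b) (Fin b) R) ≃ₐ[F]
        Matrix (Fin (a * b)) (Fin (a * b)) R :=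
    (Matrix.compAlgEquiv (Fin a) (Fin b) R F).trans (Matrix.reindexAlgEquiv F R finProdFinEquiv)
  exact ⟨k * n, l * m, Nat.mul_pos hk hn, Nat.mul_pos hl hm,
    ⟨(flatten B k n).symm.trans (e.trans (flatten C l m))⟩⟩

theorem brauerEquiv_of_isSplit_tensor_op [Algebra.IsCentral F C] [IsSimpleRing C]
    [FiniteDimensional F C] (h : IsSplit F (B ⊗[F] Cᵐᵒᵖ)) : BrauerEquiv F B C := by
  obtain ⟨k, hk, ⟨e⟩⟩ := h
  have := isAzumaya_of_isSimpleRing F C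
  let endEquiv : C ⊗[F] Cᵐᵒᵖ ≃ₐ[F] _ :=
    (AlgEquiv.ofBijective _ (IsAzumaya.AlgHom.mulLeftRight_bij F C)).trans
      (algEquivMatrix (Module.finBasis F C))
  refine ⟨Module.finrank F C, k, Module.finrank_pos, hk, ⟨?_⟩⟩
  exact (matrixEquivTensor _ F B).trans <|
    (Algebra.TensorProduct.congr .refl endEquiv.symm).trans <|
    (Algebra.TensorProduct.leftComm F B C Cᵐᵒᵖ).trans <|
    (Algebra.TensorProduct.congr .refl e).trans (matrixEquivTensor _ F C).symm

variable [Algebra.IsCentral F B] [IsSimpleRing B] [FiniteDimensional F B]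
  [Algebra.IsCentral F C] [IsSimpleRing C] [FiniteDimensional F C]
  {E : Type u} [Field E] [Algebra F E]

theorem isSplit_baseChange_tensor_op (e : E ⊗[F] B ≃ₐ[E] E ⊗[F] C) :
    IsSplit E (E ⊗[F] (B ⊗[F] Cᵐᵒᵖ)) := by
  let β : B →ₐ[F] Module.End E (E ⊗[F] C) :=
    ((Algebra.lmul E (E ⊗[F] C)).comp e.toAlgHom).restrictScalars F |>.comp
      Algebra.TensorProduct.includeRight
  let γ : Cᵐᵒᵖ →ₐ[F] Module.End E (E ⊗[F] C) := .ofLinearMap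
    { toFun c := LinearMap.mulRight E (1 ⊗ₜ c.unop)
      map_add' := by intros; ext; simp [mul_add, TensorProduct.tmul_add]
      map_smul' := by intros; ext; simp }
    (by ext; simp) (by intros; ext; simp [mul_assoc])
  let φ : B ⊗[F] Cᵐᵒᵖ →ₐ[F] Module.End E (E ⊗[F] C) :=
    Algebra.TensorProduct.lift β γ fun _ _ ↦ LinearMap.commute_mulLeft_right ..
  have := isCentral_tensorProduct F B Cᵐᵒᵖ
  have := isSimpleRing_tensorProduct F B Cᵐᵒᵖ
  have := isSimpleRing_tensorProduct F E C
  refine isSplit_of_algEquiv_end (baseChangeEquiv φ ?_)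
  have hBC : Module.finrank F B = Module.finrank F C := by
    simpa only [Module.finrank_baseChange] using e.toLinearEquiv.finrank_eq
  rw [Module.finrank_tensorProduct, Module.finrank_linearMap, ← (opLinearEquiv F).finrank_eq,
    Module.finrank_baseChange, hBC]

/-- The relative Brauer group `Br(E/F)` is trivial: `E` splits no nonsplit central simple
`F`-algebra. -/
def RelativeBrauerTrivial (F E : Type u) [Field F] [Field E] [Algebra F E] : Prop :=
  ∀ (D : Type u) [Ring D] [Algebra F D], IsCSA F D → IsSplit E (E ⊗[F] D) → IsSplit F D

theorem brauerEquiv_of_baseChange (h : RelativeBrauerTrivial F E)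
    (hBC : BrauerEquiv E (E ⊗[F] B) (E ⊗[F] C)) : BrauerEquiv F B C := by
  obtain ⟨n, m, hn, hm, ⟨e⟩⟩ := hBC
  have : NeZero n := ⟨hn.ne'⟩
  have : NeZero m := ⟨hm.ne'⟩
  let baseChangeMatrix (R : Type u) [Ring R] [Algebra F R] [Algebra.IsCentral F R] [IsSimpleRing R]
      [FiniteDimensional F R] (k : ℕ) [NeZero k] :
      E ⊗[F] Matrix (Fin k) (Fin k) R ≃ₐ[E] Matrix (Fin k) (Fin k) (E ⊗[F] R) :=
    have := isSimpleRing_tensorProduct F E R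
    baseChangeEquiv (Algebra.TensorProduct.includeRight.mapMatrix)
      (by simp only [Module.finrank_matrix, Module.finrank_baseChange])
  refine brauerEquiv_of_matrix hn hm (brauerEquiv_of_isSplit_tensor_op (h _ ?_ ?_))
  · exact ⟨isCentral_tensorProduct .., isSimpleRing_tensorProduct .., inferInstance⟩
  · exact isSplit_baseChange_tensor_op
      ((baseChangeMatrix B n).trans (e.trans (baseChangeMatrix C m).symm))

theorem resInj_of_relativeBrauerTrivial (h : RelativeBrauerTrivial F E) :
    ResInj F E (algebraMap F E) := by
  have hE : (algebraMap F E).toAlgebra = ‹Algebra F E› := Algebra.algebra_ext _ _ fun _ ↦ rfl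
  generalize algebraMap F E = f at hE ⊢
  subst hE
  let _ := f.toAlgebra
  rintro B C _ _ _ _ ⟨_, _, _⟩ ⟨_, _, _⟩ hBC
  exact brauerEquiv_of_baseChange h hBC

end Brauer

section SepClosed

theorem algebraMap_bijective_of_isSepClosed (K D : Type*) [Field K] [IsSepClosed K]
    [DivisionRing D] [Algebra K D] [Algebra.IsCentral K D] [FiniteDimensional K D] :
    Function.Bijective (algebraMap K D) := by
  rw [Algebra.bijective_algebraMap_iff]
  by_contra! h
  obtain ⟨x, hx, hsep⟩ := JacobsonNoether.exists_separable_and_not_isCentral' h.symm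
  have hxint := Algebra.IsIntegral.isIntegral (R := K) x
  obtain ⟨r, hr⟩ := IsSepClosed.exists_root _ (minpoly.degree_pos hxint).ne' hsep
  exact hx <| Algebra.mem_bot.2 <| minpoly.mem_range_of_degree_eq_one K x <|
    Polynomial.degree_eq_one_of_irreducible_of_root (minpoly.irreducible hxint) hr

theorem isCentral_of_isCentral_matrix (K D : Type*) [CommSemiring K] [Semiring D] [Algebra K D]
    (n : Type*) [Fintype n] [DecidableEq n] [Nonempty n]
    [h : Algebra.IsCentral K (Matrix n n D)] : Algebra.IsCentral K D where
  out x hx := by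
    have : Matrix.scalar n x ∈ Subalgebra.center K (Matrix n n D) := by
      rw [Matrix.subalgebraCenter_eq_scalarAlgHom_map]
      exact ⟨x, hx, rfl⟩
    obtain ⟨k, hk⟩ := Algebra.IsCentral.mem_center_iff K |>.1 this
    have i := Classical.arbitrary n
    exact ⟨k, by simpa [Matrix.algebraMap_matrix_apply] using congr_fun₂ hk.symm i i⟩

theorem exists_algEquiv_matrix_of_isSepClosed (K R : Type*) [Field K] [IsSepClosed K] [Ring R]
    [Algebra K R] [Algebra.IsCentral K R] [IsSimpleRing R] [FiniteDimensional K R] :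
    ∃ n : ℕ, Nonempty (R ≃ₐ[K] Matrix (Fin n) (Fin n) K) := by
  have := IsArtinianRing.of_finite K R
  obtain ⟨n, _, D, _, _, _, ⟨e⟩⟩ := IsSimpleRing.exists_algEquiv_matrix_divisionRing_finite K R
  have := Algebra.IsCentral.of_algEquiv K _ _ e
  have := isCentral_of_isCentral_matrix K D (Fin n)
  let c : K ≃ₐ[K] D := .ofBijective (Algebra.ofId K D) (algebraMap_bijective_of_isSepClosed K D)
  exact ⟨n, ⟨e.trans c.symm.mapMatrix⟩⟩

end SepClosed

section MatrixRepresentation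

variable {F N A ι : Type*} [Field F] [Field N] [Algebra F N] [Ring A] [Algebra F A]
  [Algebra.IsCentral F A] [IsSimpleRing A] [FiniteDimensional F A] [Fintype ι] [DecidableEq ι]

theorem exists_algHom_matrix [IsSepClosed N] (h : Module.finrank F A = Fintype.card ι ^ 2) :
    Nonempty (A →ₐ[F] Matrix ι ι N) := by
  have := isSimpleRing_tensorProduct F N A
  have := isCentral_baseChange F A N
  obtain ⟨n, ⟨e⟩⟩ := exists_algEquiv_matrix_of_isSepClosed N (N ⊗[F] A)
  have hn : n ^ 2 = Fintype.card ι ^ 2 := by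
    simpa [h, Module.finrank_matrix, sq, eq_comm] using e.toLinearEquiv.finrank_eq
  have hcard : Fintype.card (Fin n) = Fintype.card ι := by
    simpa using Nat.pow_left_injective two_ne_zero hn
  let e' := e.trans (Matrix.reindexAlgEquiv N N (Fintype.equivOfCardEq hcard))
  exact ⟨(e'.toAlgHom.restrictScalars F).comp Algebra.TensorProduct.includeRight⟩

variable [Nonempty ι]

/-- The identification of `N ⊗ A` with a matrix algebra given by an absolutely irreducible matrix
representation of `A`. -/
noncomputable def matrixEquiv (φ : A →ₐ[F] Matrix ι ι N)
    (hA : Module.finrank F A = Fintype.card ι ^ 2) : N ⊗[F] A ≃ₐ[N] Matrix ι ι N :=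
  baseChangeEquiv φ (by simp [hA, Module.finrank_matrix, sq])

@[simp]
theorem matrixEquiv_tmul (φ : A →ₐ[F] Matrix ι ι N) (hA : Module.finrank F A = Fintype.card ι ^ 2)
    (c : N) (x : A) : matrixEquiv φ hA (c ⊗ₜ x) = c • φ x :=
  baseChangeEquiv_tmul ..

variable (hA : Module.finrank F A = Fintype.card ι ^ 2) (φ φ' : A →ₐ[F] Matrix ι ι N)

include hA

theorem exists_units_semiconjBy :
    ∃ g : (Matrix ι ι N)ˣ, ∀ x, SemiconjBy (g : Matrix ι ι N) (φ x) (φ' x) := by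
  let f : Matrix ι ι N ≃ₐ[N] Matrix ι ι N := (matrixEquiv φ hA).symm.trans (matrixEquiv φ' hA)
  have hf (x : A) : f (φ x) = φ' x := by
    have : (matrixEquiv φ hA).symm (φ x) = 1 ⊗ₜ x := by simp [AlgEquiv.symm_apply_eq]
    simp [f, this]
  let toEnd : Matrix ι ι N ≃ₐ[N] Module.End N (ι → N) := Matrix.toLinAlgEquiv'
  obtain ⟨T, hT⟩ := AlgEquiv.eq_linearEquivConjAlgEquiv (toEnd.symm.trans (f.trans toEnd))
  refine ⟨Units.map toEnd.symm (LinearMap.GeneralLinearGroup.ofLinearEquiv T), fun x ↦ ?_⟩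
  have hconj : toEnd (φ' x) = T.conjAlgEquiv N (toEnd (φ x)) := by simp [← hT, hf]
  refine toEnd.injective (LinearMap.ext fun v ↦ ?_)
  simp [hconj, LinearEquiv.conjAlgEquiv_apply]

variable {φ}

theorem exists_eq_smul_one_of_commute {z : Matrix ι ι N} (hz : ∀ x, Commute z (φ x)) :
    ∃ c : N, z = c • 1 := by
  have : z ∈ Subalgebra.center N (Matrix ι ι N) := by
    rw [Subalgebra.mem_center_iff]
    intro b
    obtain ⟨t, rfl⟩ := (matrixEquiv φ hA).surjective b
    induction t with
    | zero => simp
    | add s t hs ht => simp only [map_add, add_mul, mul_add, hs, ht]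
    | tmul c x => simp [(hz x).eq]
  simpa [Algebra.algebraMap_eq_smul_one] using (Algebra.IsCentral.mem_center_iff N).1 this

theorem exists_eq_smul_of_semiconjBy {Y : A → Matrix ι ι N} (g : (Matrix ι ι N)ˣ)
    {h : Matrix ι ι N} (hg : ∀ x, SemiconjBy (g : Matrix ι ι N) (φ x) (Y x))
    (hh : ∀ x, SemiconjBy h (φ x) (Y x)) :
    ∃ c : N, h = c • (g : Matrix ι ι N) := by
  obtain ⟨c, hc⟩ := exists_eq_smul_one_of_commute hA (φ := φ)
    (z := (↑g⁻¹ : Matrix ι ι N) * h) fun x ↦ (hg x).units_inv_symm_left.mul_left (hh x)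
  exact ⟨c, by simpa using (Units.inv_mul_eq_iff_eq_mul g).1 hc⟩

theorem semiconjBy_map_matrixEquiv {s : N →ₐ[F] N} {a : Matrix ι ι N}
    (ha : ∀ x, SemiconjBy a ((φ x).map s) (φ x)) (z : N ⊗[F] A) :
    SemiconjBy a ((matrixEquiv φ hA z).map s)
      (matrixEquiv φ hA (Algebra.TensorProduct.map s (.id F A) z)) := by
  induction z with
  | zero => simp
  | add x y hx hy => simpa [Matrix.map_add] using hx.add_right hy
  | tmul c x =>
    have : (c • φ x).map s = s c • (φ x).map s := Matrix.map_smul' _ _ _ (map_mul s)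
    simp [SemiconjBy, this, (ha x).eq]

end MatrixRepresentation

section SemilinearDescent

variable {F K : Type*} [Field F] [Field K] [Algebra F K] [Normal F K]

theorem exists_algEquiv_comp_eq {L : Type*} [Field L] [Algebra F L] (i j : L →ₐ[F] K) :
    ∃ σ : Gal(K/F), (σ : K →ₐ[F] K).comp i = j := by
  let _ : Algebra L K := i.toRingHom.toAlgebra
  have : IsScalarTower F L K := .of_algebraMap_eq fun x ↦ (i.commutes x).symm
  exact ⟨.ofBijective (j.liftNormal K) (AlgHom.normal_bijective F K K _),
    AlgHom.ext (j.liftNormal_commutes K)⟩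

variable {G W : Type*} [Group G] [AddCommGroup W] [Module K W] [DistribMulAction G W]
  {π : G →* Gal(K/F)}

theorem mem_span_fixedPoints (hπ : Function.Surjective π)
    (hW : ∀ (s : G) (c : K) (w : W), s • c • w = π s c • s • w) {V : Submodule K W}
    (hV : ∀ (s : G), ∀ v ∈ V, s • v ∈ V) {w : W} (hw : w ∈ V)
    (hsmooth : ∀ᶠ σ in 𝓝 (1 : Gal(K/F)), ∀ s, π s = σ → s • w = w) :
    w ∈ Submodule.span K {v ∈ V | ∀ s : G, s • v = v} := by
  obtain ⟨K', _, hK'⟩ := (krullTopology_mem_nhds_one_iff F K _).1 hsmooth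
  replace hK' (s : G) (hs : ∀ c ∈ K', π s c = c) : s • w = w :=
    hK' ((IntermediateField.mem_fixingSubgroup_iff K' _).2 hs) s rfl
  have smul_eq {s t : G} (h : ∀ c ∈ K', π s c = π t c) : s • w = t • w := by
    rw [← inv_smul_eq_iff, ← mul_smul]
    refine hK' _ fun c hc ↦ ?_
    simp [← h c hc, AlgEquiv.symm_apply_eq]
  have exists_lift (τ : K' →ₐ[F] K) : ∃ s : G, ∀ c : K', π s c = τ c := by
    obtain ⟨σ, hσ⟩ := exists_algEquiv_comp_eq K'.val τ
    obtain ⟨s, rfl⟩ := hπ σ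
    exact ⟨s, DFunLike.congr_fun hσ⟩
  choose lift hlift using exists_lift
  let trace (c : K') : W := ∑ τ : K' →ₐ[F] K, τ c • lift τ • w
  have trace_mem (c : K') : trace c ∈ {v ∈ V | ∀ s : G, s • v = v} := by
    refine ⟨V.sum_mem fun τ _ ↦ V.smul_mem _ (hV _ _ hw), fun s ↦ ?_⟩
    rw [Finset.smul_sum]
    refine Fintype.sum_equiv (AlgEquiv.refl.arrowCongr (π s)) _ _ fun τ ↦ ?_
    rw [hW, ← mul_smul]
    congr 1
    refine smul_eq fun c hc ↦ ?_
    simpa [hlift τ ⟨c, hc⟩] using (hlift (AlgEquiv.refl.arrowCongr (π s) τ) ⟨c, hc⟩).symm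
  -- A functional that kills all traces but not `w` would give a dependence between embeddings.
  by_contra hmem
  obtain ⟨f, hfw, hf⟩ := Submodule.exists_le_ker_of_notMem hmem
  have sum_eq_zero : ∑ τ : K' →ₐ[F] K, f (lift τ • w) • τ.toLinearMap = 0 := by
    ext c
    have : f (trace c) = 0 := hf (Submodule.subset_span (trace_mem c))
    simpa [trace, mul_comm] using this
  have :=
    Fintype.linearIndependent_iff.1 (linearIndependent_toLinearMap F K' K) _ sum_eq_zero K'.val
  rw [hK' _ fun c hc ↦ hlift K'.val ⟨c, hc⟩] at this
  exact hfw this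

end SemilinearDescent

section MatrixDescent

theorem exists_units_col_mem {K ν : Type*} [Field K] [Fintype ν] [DecidableEq ν] {S : Set (ν → K)}
    (hS : Submodule.span K S = ⊤) : ∃ P : (Matrix ν ν K)ˣ, ∀ j, P.val.col j ∈ S := by
  let b := Module.Basis.ofSpan hS.ge
  let b' := b.reindex (b.indexEquiv (Pi.basisFun K ν))
  let := (Pi.basisFun K ν).invertibleToMatrix b'
  refine ⟨unitOfInvertible ((Pi.basisFun K ν).toMatrix b'), fun j ↦ ?_⟩
  exact Module.Basis.ofSpan_subset hS.ge ⟨_, (b.reindex_apply ..).symm⟩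

/-- The `K`-linear combinations of the columns of a matrix over an extension `M` of `K`. -/
def colCombination (K : Type*) {M ν : Type*} [CommSemiring K] [CommSemiring M] [Algebra K M]
    [Fintype ν] (h : Matrix ν ν M) : (ν → K) →ₗ[K] ν → M :=
  (h.mulVecLin.restrictScalars K).comp ((Algebra.linearMap K M).compLeft ν)

theorem colCombination_apply {K M ν : Type*} [CommSemiring K] [CommSemiring M] [Algebra K M]
    [Fintype ν] (h : Matrix ν ν M) (v : ν → K) :
    colCombination K h v = h.mulVec (algebraMap K M ∘ v) :=
  rfl

variable {F K M ν : Type*} [Field F] [Field K] [Field M] [Algebra F K] [Algebra F M] [Algebra K M]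
  [IsScalarTower F K M] [Normal F K] [Fintype ν]

theorem smul_colCombination (s : Gal(M/F)) (h : Matrix ν ν M) (v : ν → K) :
    s • colCombination K h v = colCombination K (h.map s) (s.restrictNormal K ∘ v) := by
  ext i
  simp [colCombination, Matrix.mulVec, dotProduct]

theorem eventually_apply_eq (c : K) : ∀ᶠ σ in 𝓝 (1 : Gal(K/F)), σ c = c :=
  (stabilizer_isOpen_of_isIntegral c).mem_nhds (one_mem _)

variable {G : Subgroup Gal(M/F)}

theorem colCombination_mem_span_fixedPoints
    (hG : ∀ σ : Gal(K/F), ∃ s ∈ G, s.restrictNormal K = σ) {h : Matrix ν ν M}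
    (hcol : ∀ s ∈ G, ∃ b : Matrix ν ν K, h.map s = h * b.map (algebraMap K M))
    (hsmooth : ∀ᶠ σ in 𝓝 (1 : Gal(K/F)), ∀ s ∈ G, s.restrictNormal K = σ → h.map s = h)
    (v : ν → K) : colCombination K h v ∈
      Submodule.span K {w ∈ LinearMap.range (colCombination K h) | ∀ s : G, s • w = w} := by
  refine mem_span_fixedPoints (π := (AlgEquiv.restrictNormalHom K).comp G.subtype)
    ?_ ?_ ?_ ⟨v, rfl⟩ ?_
  · exact fun σ ↦ (hG σ).elim fun s hs ↦ ⟨⟨s, hs.1⟩, hs.2⟩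
  · intro s c w
    ext i
    simpa [Algebra.smul_def] using .inl (s.1.restrictNormal_commutes K c).symm
  · rintro s _ ⟨v, rfl⟩
    obtain ⟨b, hb⟩ := hcol s s.2
    refine ⟨b.mulVec (s.1.restrictNormal K ∘ v), ?_⟩
    rw [Subgroup.smul_def, smul_colCombination, hb, colCombination_apply, colCombination_apply,
      ← Matrix.mulVec_mulVec]
    congr 1
    exact funext (RingHom.map_mulVec (algebraMap K M) b _)
  · filter_upwards [hsmooth, Filter.eventually_all.2 fun i ↦ eventually_apply_eq (F := F) (v i)]
      with _ hh hv s rfl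
    rw [Subgroup.smul_def, smul_colCombination, hh s s.2 rfl]
    exact congrArg _ (funext hv)

variable [DecidableEq ν]

theorem exists_units_map_mul_eq (hG : ∀ σ : Gal(K/F), ∃ s ∈ G, s.restrictNormal K = σ)
    (h : (Matrix ν ν M)ˣ)
    (hcol : ∀ s ∈ G, ∃ b : Matrix ν ν K, h.val.map s = h * b.map (algebraMap K M))
    (hsmooth : ∀ᶠ σ in 𝓝 (1 : Gal(K/F)), ∀ s ∈ G, s.restrictNormal K = σ → h.val.map s = h) :
    ∃ P : (Matrix ν ν K)ˣ, ∀ s ∈ G,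
      (h * P.val.map (algebraMap K M)).map s = h * P.val.map (algebraMap K M) := by
  have injective : Function.Injective (colCombination K h.val) :=
    (Matrix.mulVec_injective_of_isUnit h.isUnit).comp (algebraMap K M).injective.comp_left
  have span_fixed :
      Submodule.span K {v | ∀ s ∈ G, s • colCombination K h.val v = colCombination K h v} = ⊤ := by
    refine eq_top_iff.2 fun v _ ↦ (Submodule.apply_mem_span_image_iff_mem_span injective).1 ?_
    refine Submodule.span_mono ?_ (colCombination_mem_span_fixedPoints hG hcol hsmooth v)
    rintro _ ⟨⟨v, rfl⟩, hv⟩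
    exact ⟨v, fun s hs ↦ hv ⟨s, hs⟩, rfl⟩
  obtain ⟨P, hP⟩ := exists_units_col_mem span_fixed
  exact ⟨P, fun s hs ↦ Matrix.ext fun i j ↦ congr_fun (hP j s hs) i⟩

end MatrixDescent

section Splitting

variable {F D : Type u} {K M ν : Type*} [Field F] [Ring D] [Algebra F D] [Algebra.IsCentral F D]
  [IsSimpleRing D] [FiniteDimensional F D] [Field K] [Algebra F K] [Fintype ν] [DecidableEq ν]
  [Nonempty ν] (hD : Module.finrank F D = Fintype.card ν ^ 2)
include hD

theorem isSplit_of_forall_mem_range (φ : D →ₐ[F] Matrix ν ν K)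
    (h : ∀ x i j, φ x i j ∈ Set.range (algebraMap F K)) : IsSplit F D := by
  let incl : Matrix ν ν F →ₐ[F] Matrix ν ν K := (Algebra.ofId F K).mapMatrix
  have hincl : Function.Injective incl := Matrix.map_injective (algebraMap F K).injective
  let φ' : D →ₐ[F] incl.range := φ.codRestrict incl.range fun x ↦ by
    choose y hy using h x
    exact ⟨.of y, Matrix.ext hy⟩
  exact isSplit_of_algEquiv_matrix <| (Algebra.TensorProduct.lid F D).symm.trans <|
    matrixEquiv ((AlgEquiv.ofInjective incl hincl).symm.toAlgHom.comp φ') hD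

variable [IsGalois F K] [Field M] [Algebra F M] [Algebra K M] [IsScalarTower F K M]

theorem isSplit_of_semiconjBy_algebraMap {G : Subgroup Gal(M/F)}
    (hG : ∀ σ : Gal(K/F), ∃ s ∈ G, s.restrictNormal K = σ)
    (φ : D →ₐ[F] Matrix ν ν K) (Y : D → Matrix ν ν M) (hY : ∀ s ∈ G, ∀ x, (Y x).map s = Y x)
    (h : (Matrix ν ν M)ˣ) (hφ : ∀ x, SemiconjBy h.val ((φ x).map (algebraMap K M)) (Y x))
    (hcol : ∀ s ∈ G, ∃ b : Matrix ν ν K, h.val.map s = h * b.map (algebraMap K M))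
    (hsmooth : ∀ᶠ σ in 𝓝 (1 : Gal(K/F)), ∀ s ∈ G, s.restrictNormal K = σ → h.val.map s = h) :
    IsSplit F D := by
  obtain ⟨P, hP⟩ := exists_units_map_mul_eq hG h hcol hsmooth
  let toM : Matrix ν ν K →+* Matrix ν ν M := (algebraMap K M).mapMatrix
  let H : (Matrix ν ν M)ˣ := h * Units.map toM P
  let χ : D →ₐ[F] Matrix ν ν K := (MulSemiringAction.toAlgHom F _ (ConjAct.toConjAct P⁻¹)).comp φ
  have hχ (x : D) : SemiconjBy H.val (toM (χ x)) (Y x) := by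
    have : SemiconjBy P.val (χ x) (φ x) := by
      simp [SemiconjBy, χ, ConjAct.units_smul_def, mul_assoc]
    exact (hφ x).mul_left (this.map toM)
  refine isSplit_of_forall_mem_range hD χ fun x i j ↦ ?_
  rw [InfiniteGalois.mem_range_algebraMap_iff_fixed]
  intro σ
  obtain ⟨s, hs, rfl⟩ := hG σ
  let sMap : Matrix ν ν M →+* Matrix ν ν M := (s : M →+* M).mapMatrix
  have fixed : sMap (toM (χ x)) = toM (χ x) := by
    have hH : sMap H = H := hP s hs
    have hYx : sMap (Y x) = Y x := hY s hs x
    have hsχ := (hχ x).map sMap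
    rw [hH, hYx] at hsχ
    exact H.isUnit.mul_left_cancel (hsχ.trans (hχ x).symm)
  apply (algebraMap K M).injective
  rw [s.restrictNormal_commutes]
  exact congr_fun₂ fixed i j

end Splitting

section SemilinearIntertwiner

variable {F K ι A : Type*} [Field F] [Field K] [Algebra F K] [Fintype ι] [DecidableEq ι]
  [Ring A] [Algebra F A]

/-- The entrywise action of a field automorphism on invertible matrices. -/
abbrev galMap (σ : Gal(K/F)) : GL ι K →* GL ι K :=
  GeneralLinearGroup.map (σ : K →+* K)

theorem galMap_one (b : GL ι K) : galMap (1 : Gal(K/F)) b = b := by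
  ext; simp

theorem galMap_mul (σ τ : Gal(K/F)) (b : GL ι K) : galMap (σ * τ) b = galMap σ (galMap τ b) := by
  ext; simp

/-- The invertible matrices intertwining the `σ`-conjugate of a matrix representation with the
representation itself; together with `σ` they are the semilinear automorphisms of `φ`. -/
def IsSemilinearIntertwiner (φ : A →ₐ[F] Matrix ι ι K) (σ : Gal(K/F)) (a : GL ι K) : Prop :=
  ∀ x, SemiconjBy (a : Matrix ι ι K) ((φ x).map σ) (φ x)

variable {φ : A →ₐ[F] Matrix ι ι K} {σ τ : Gal(K/F)} {a b : GL ι K}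

theorem isSemilinearIntertwiner_one : IsSemilinearIntertwiner φ 1 1 := fun x ↦ by
  have : (φ x).map (1 : Gal(K/F)) = φ x := Matrix.map_id _
  simp [this]

theorem IsSemilinearIntertwiner.mul (ha : IsSemilinearIntertwiner φ σ a)
    (hb : IsSemilinearIntertwiner φ τ b) :
    IsSemilinearIntertwiner φ (σ * τ) (a * galMap σ b) := fun x ↦
  (ha x).mul_left ((hb x).map (σ : K →+* K).mapMatrix)

theorem IsSemilinearIntertwiner.inv (ha : IsSemilinearIntertwiner φ σ a) :
    IsSemilinearIntertwiner φ σ⁻¹ (galMap σ⁻¹ a⁻¹) := fun x ↦ by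
  have hσ : ((σ⁻¹ : Gal(K/F)) : K →+* K).mapMatrix ((φ x).map σ) = φ x := by ext; simp
  have h := (ha x).units_inv_symm_left.map ((σ⁻¹ : Gal(K/F)) : K →+* K).mapMatrix
  rw [hσ] at h
  exact h

end SemilinearIntertwiner

section Substitution

variable {F K : Type*} (ι : Type*) [Field F] [Field K] [Algebra F K]

/-- The field of rational functions in the entries of a generic `ι × ι` matrix. -/
abbrev GenericField (K : Type*) [Field K] (ι : Type*) : Type _ :=
  FractionRing (MvPolynomial (ι × ι) K)

variable [Fintype ι] [DecidableEq ι] {ι}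

/-- The generic matrix `X`, with independent indeterminate entries. -/
noncomputable def genericMatrix (K : Type*) [Field K] (ι : Type*) [Fintype ι] [DecidableEq ι] :
    GL ι (GenericField K ι) :=
  GeneralLinearGroup.mkOfDetNeZero
    ((algebraMap (MvPolynomial (ι × ι) K) _).mapMatrix (Matrix.mvPolynomialX ι ι K)) <| by
    rw [← RingHom.map_det]
    simpa using Matrix.det_mvPolynomialX_ne_zero ι K

/-- Matrices of constants, over the polynomial ring. -/
noncomputable abbrev polyConst {ν : Type*} [Fintype ν] [DecidableEq ν] :
    GL ν K →* GL ν (MvPolynomial (ι × ι) K) :=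
  GeneralLinearGroup.map MvPolynomial.C

/-- The `K`-linear substitution `X ↦ a⁻¹ X d`. -/
noncomputable def linearSubst (a d : GL ι K) :
    MvPolynomial (ι × ι) K →ₐ[K] MvPolynomial (ι × ι) K :=
  MvPolynomial.aeval fun ij ↦
    ((polyConst a)⁻¹.val * Matrix.mvPolynomialX ι ι K * (polyConst d).val :
      Matrix ι ι (MvPolynomial (ι × ι) K)) ij.1 ij.2

theorem map_mvPolynomialX_linearSubst (a d : GL ι K) :
    (Matrix.mvPolynomialX ι ι K).map (linearSubst a d) =
      (polyConst a)⁻¹.val * Matrix.mvPolynomialX ι ι K * (polyConst d).val := by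
  ext i j : 2
  simp only [linearSubst, Matrix.map_apply, Matrix.mvPolynomialX_apply, MvPolynomial.aeval_X]

theorem linearSubst_comp (a b c d : GL ι K) :
    (linearSubst a b).comp (linearSubst c d) = linearSubst (a * c) (b * d) := by
  refine MvPolynomial.algHom_ext fun ⟨i, j⟩ ↦ ?_
  have hC (m : GL ι K) : (polyConst m).val.map (linearSubst a b) = (polyConst m).val := by
    ext i j : 2
    simp [GeneralLinearGroup.map_apply]
  have h : ((Matrix.mvPolynomialX ι ι K).map (linearSubst c d)).map (linearSubst a b) =
      (Matrix.mvPolynomialX ι ι K).map (linearSubst (a * c) (b * d)) := by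
    simp only [map_mvPolynomialX_linearSubst, Matrix.map_mul, ← map_inv, hC]
    simp [-Matrix.coe_units_inv, mul_assoc]
  exact congrFun₂ h i j

theorem linearSubst_one : linearSubst (1 : GL ι K) 1 = .id K _ :=
  MvPolynomial.algHom_ext fun ⟨i, j⟩ ↦ by
    simpa using congrFun₂ (map_mvPolynomialX_linearSubst (1 : GL ι K) 1) i j

/-- The automorphism of the polynomial ring that acts by `σ` on constants and by `X ↦ a⁻¹ X d`. -/
noncomputable def polySubst (σ : Gal(K/F)) (a d : GL ι K) :
    MvPolynomial (ι × ι) K ≃ₐ[F] MvPolynomial (ι × ι) K :=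
  (MvPolynomial.mapAlgEquiv _ σ).trans <| AlgEquiv.restrictScalars F <|
    AlgEquiv.ofAlgHom (linearSubst a d) (linearSubst a⁻¹ d⁻¹)
      (by rw [linearSubst_comp, mul_inv_cancel, mul_inv_cancel, linearSubst_one])
      (by rw [linearSubst_comp, inv_mul_cancel, inv_mul_cancel, linearSubst_one])

variable (σ τ : Gal(K/F)) (a b d e : GL ι K)

theorem polySubst_C (c : K) :
    polySubst σ a d (MvPolynomial.C c) = MvPolynomial.C (σ c) := by
  simp [polySubst]

theorem map_mvPolynomialX_polySubst :
    (Matrix.mvPolynomialX ι ι K).map (polySubst σ a d) =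
      (polyConst a)⁻¹.val * Matrix.mvPolynomialX ι ι K * (polyConst d).val := by
  rw [← map_mvPolynomialX_linearSubst]
  ext i j : 2
  simp [polySubst]

/-- The automorphism of the field of rational functions that acts by `σ` on constants and by
`X ↦ a⁻¹ X d`. -/
noncomputable def substitution : Gal(GenericField K ι/F) :=
  IsFractionRing.fieldEquivOfAlgEquiv F _ _ (polySubst σ a d)

theorem substitution_algebraMap_mvPolynomial (f : MvPolynomial (ι × ι) K) :
    substitution σ a d (algebraMap _ _ f) = algebraMap _ _ (polySubst σ a d f) :=
  IsFractionRing.fieldEquivOfAlgEquiv_algebraMap ..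

theorem substitution_algebraMap (c : K) :
    substitution σ a d (algebraMap K _ c) = algebraMap K _ (σ c) := by
  simp only [IsScalarTower.algebraMap_apply K (MvPolynomial (ι × ι) K) (GenericField K ι),
    MvPolynomial.algebraMap_eq, substitution_algebraMap_mvPolynomial, polySubst_C]

/-- Matrices of constants, over the field of rational functions. -/
noncomputable abbrev constMatrix {ν : Type*} [Fintype ν] [DecidableEq ν] :
    GL ν K →* GL ν (GenericField K ι) :=
  GeneralLinearGroup.map (algebraMap K (GenericField K ι))

theorem map_genericMatrix_substitution :
    galMap (substitution σ a d) (genericMatrix K ι) =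
      (constMatrix a)⁻¹ * genericMatrix K ι * constMatrix d := by
  have h := congrArg (algebraMap _ (GenericField K ι)).mapMatrix
    (map_mvPolynomialX_polySubst σ a d)
  rw [map_mul, map_mul] at h
  refine Units.ext (Eq.trans ?_ (h.trans ?_))
  · ext i j
    exact substitution_algebraMap_mvPolynomial ..
  · rw [← map_inv, ← map_inv]
    rfl

theorem map_constMatrix_substitution {ν : Type*} [Fintype ν] [DecidableEq ν] (b : GL ν K) :
    galMap (substitution σ a d) (constMatrix b) = constMatrix (galMap σ b) := by
  ext i j
  exact substitution_algebraMap ..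

theorem genericField_algEquiv_ext {s t : Gal(GenericField K ι/F)}
    (hK : ∀ c : K, s (algebraMap K _ c) = t (algebraMap K _ c))
    (hX : galMap s (genericMatrix K ι) = galMap t (genericMatrix K ι)) : s = t := by
  have h : (s : GenericField K ι →+* GenericField K ι) = t :=
    IsLocalization.ringHom_ext (nonZeroDivisors (MvPolynomial (ι × ι) K)) <|
      MvPolynomial.ringHom_ext hK fun ⟨i, j⟩ ↦ congrFun₂ (congrArg Units.val hX :) i j
  exact AlgEquiv.ext fun x ↦ RingHom.congr_fun h x

theorem substitution_mul : substitution σ a d * substitution τ b e =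
    substitution (σ * τ) (a * galMap σ b) (d * galMap σ e) := by
  refine genericField_algEquiv_ext (fun c ↦ by simp [substitution_algebraMap]) ?_
  rw [galMap_mul, map_genericMatrix_substitution, map_genericMatrix_substitution]
  rw [map_mul, map_mul, map_inv, map_constMatrix_substitution, map_constMatrix_substitution,
    map_genericMatrix_substitution, map_mul, map_mul]
  group

theorem substitution_one : substitution (1 : Gal(K/F)) (1 : GL ι K) 1 = 1 := by
  refine genericField_algEquiv_ext (fun c ↦ by simp [substitution_algebraMap]) ?_
  rw [map_genericMatrix_substitution, galMap_one]
  simp only [map_one, inv_one, one_mul, mul_one]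

end Substitution

section SubstitutionGroup

variable {F K ι A B : Type*} [Field F] [Field K] [Algebra F K] [Fintype ι] [DecidableEq ι]
  [Ring A] [Algebra F A] [Ring B] [Algebra F B]
  (φ : A →ₐ[F] Matrix ι ι K) (ψ : B →ₐ[F] Matrix ι ι K)

/-- The semilinear substitutions `X ↦ a⁻¹ X d` by which the generic matrix may change when the
representations `φ` and `ψ` are replaced by isomorphic ones. -/
def substitutionGroup : Subgroup Gal(GenericField K ι/F) where
  carrier := {s | ∃ σ a d, IsSemilinearIntertwiner φ σ a ∧ IsSemilinearIntertwiner ψ σ d ∧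
    s = substitution σ a d}
  one_mem' := ⟨1, 1, 1, isSemilinearIntertwiner_one, isSemilinearIntertwiner_one,
    substitution_one.symm⟩
  mul_mem' := by
    rintro _ _ ⟨σ, a, d, ha, hd, rfl⟩ ⟨τ, b, e, hb, he, rfl⟩
    exact ⟨_, _, _, ha.mul hb, hd.mul he, substitution_mul ..⟩
  inv_mem' := by
    rintro _ ⟨σ, a, d, ha, hd, rfl⟩
    refine ⟨_, _, _, ha.inv, hd.inv, inv_eq_of_mul_eq_one_left ?_⟩
    rw [substitution_mul, ← map_mul, ← map_mul]
    simp [substitution_one]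

end SubstitutionGroup

section PrimitiveMatrix

variable {R m n : Type*} [CommRing R]

/-- A matrix is primitive if its entries have no common divisor apart from units; an intertwiner
is made unique up to units by requiring it to be primitive. -/
def IsPrimitiveMatrix (g : Matrix m n R) : Prop :=
  ∀ r, (∀ i j, r ∣ g i j) → IsUnit r

theorem IsPrimitiveMatrix.map {g : Matrix m n R} (hg : IsPrimitiveMatrix g) (e : R ≃+* R) :
    IsPrimitiveMatrix (g.map e) := fun r hr ↦
  (MulEquiv.isUnit_map e.symm).1 <| hg _ fun i j ↦ by simpa using map_dvd e.symm (hr i j)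

theorem IsPrimitiveMatrix.mul_units [Fintype n] [DecidableEq n] {g : Matrix m n R}
    (hg : IsPrimitiveMatrix g) (b : (Matrix n n R)ˣ) : IsPrimitiveMatrix (g * b.val) := by
  refine fun r hr ↦ hg r fun i j ↦ ?_
  have h : g * b.val * b⁻¹.val = g := by rw [Matrix.mul_assoc, b.mul_inv, Matrix.mul_one]
  rw [← congrFun₂ h i j, Matrix.mul_apply]
  exact Finset.dvd_sum fun k _ ↦ (hr i k).mul_right _

variable [IsDomain R] [UniqueFactorizationMonoid R] {M : Type*} [Field M] [Algebra R M]
  [IsFractionRing R M]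

theorem exists_isPrimitiveMatrix_map_eq_smul [Finite m] [Finite n] {g : Matrix m n M}
    (hg : g ≠ 0) : ∃ g₀ : Matrix m n R, IsPrimitiveMatrix g₀ ∧
      ∃ c : M, c ≠ 0 ∧ g₀.map (algebraMap R M) = c • g := by
  classical
  have := Fintype.ofFinite m
  have := Fintype.ofFinite n
  obtain ⟨i, j, hij⟩ : ∃ i j, g i j ≠ 0 := by
    contrapose! hg
    exact Matrix.ext hg
  obtain ⟨r, hr⟩ := IsLocalization.exist_integer_multiples_of_finite (nonZeroDivisors R)
    fun x : m × n ↦ g x.1 x.2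
  choose f hf using hr
  have hr0 : algebraMap R M r ≠ 0 := by simp
  obtain ⟨_⟩ : Nonempty (NormalizedGCDMonoid R) := inferInstance
  obtain ⟨g₀, hfg, hgcd⟩ := Finset.extract_gcd f ⟨(i, j), Finset.mem_univ _⟩
  have hmul (x : m × n) : algebraMap R M (Finset.univ.gcd f) * algebraMap R M (g₀ x) =
      algebraMap R M r * g x.1 x.2 := by
    rw [← map_mul, ← hfg x (Finset.mem_univ x), hf x, Algebra.smul_def]
  have hd : algebraMap R M (Finset.univ.gcd f) ≠ 0 :=
    left_ne_zero_of_mul (hmul (i, j) ▸ mul_ne_zero hr0 hij)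
  refine ⟨.of fun i j ↦ g₀ (i, j), fun q hq ↦ ?_, _, div_ne_zero hr0 hd, ?_⟩
  · exact isUnit_of_dvd_one (hgcd ▸ Finset.dvd_gcd fun x _ ↦ hq x.1 x.2)
  · ext i j
    rw [Matrix.smul_apply, smul_eq_mul, div_mul_eq_mul_div, ← hmul (i, j),
      mul_div_cancel_left₀ _ hd]
    rfl

theorem IsPrimitiveMatrix.exists_units_of_map_eq_smul {g h : Matrix m n R}
    (hg : IsPrimitiveMatrix g) (hh : IsPrimitiveMatrix h) {c : M}
    (hc : h.map (algebraMap R M) = c • g.map (algebraMap R M)) :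
    ∃ u : Rˣ, c = algebraMap R M u := by
  obtain ⟨x, y, hxy, rfl⟩ := IsFractionRing.exists_reduced_fraction R c
  have hy : algebraMap R M y ≠ 0 := by simp
  have hmul (i j) : y * h i j = x * g i j := by
    have h := congrFun₂ hc i j
    simp only [Matrix.map_apply, Matrix.smul_apply, smul_eq_mul, IsFractionRing.mk'_eq_div] at h
    apply IsFractionRing.injective R M
    rw [map_mul, map_mul, h]
    field_simp
  obtain ⟨u, hu⟩ := hg _ fun i j ↦ hxy.symm.dvd_of_dvd_mul_left ⟨h i j, (hmul i j).symm⟩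
  obtain ⟨v, hv⟩ := hh _ fun i j ↦ hxy.dvd_of_dvd_mul_left ⟨g i j, hmul i j⟩
  refine ⟨v * u⁻¹, ?_⟩
  rw [IsFractionRing.mk'_eq_div, div_eq_iff hy, ← map_mul, ← hv, ← hu, ← Units.val_mul]
  simp

end PrimitiveMatrix

section Lifting

variable {F K ι A : Type*} [Field F] [Field K] [Algebra F K] [Fintype ι] [DecidableEq ι]

theorem exists_isSemilinearIntertwiner [Ring A] [Algebra F A] [Algebra.IsCentral F A]
    [IsSimpleRing A] [FiniteDimensional F A] [Nonempty ι] (φ : A →ₐ[F] Matrix ι ι K)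
    (hA : Module.finrank F A = Fintype.card ι ^ 2) (σ : Gal(K/F)) :
    ∃ a, IsSemilinearIntertwiner φ σ a :=
  exists_units_semiconjBy hA ((σ : K →ₐ[F] K).mapMatrix.comp φ) φ

theorem restrictNormal_substitution [Normal F K] (σ : Gal(K/F)) (a d : GL ι K) :
    (substitution σ a d).restrictNormal K = σ :=
  AlgEquiv.ext fun c ↦ (algebraMap K (GenericField K ι)).injective <| by
    rw [AlgEquiv.restrictNormal_commutes, substitution_algebraMap]

theorem eventually_isSemilinearIntertwiner_one [Normal F K] [Ring A] [Algebra F A]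
    [FiniteDimensional F A] (φ : A →ₐ[F] Matrix ι ι K) :
    ∀ᶠ σ in 𝓝 (1 : Gal(K/F)), IsSemilinearIntertwiner φ σ 1 := by
  let b := Module.finBasis F A
  have h : ∀ᶠ σ in 𝓝 (1 : Gal(K/F)), ∀ k i j, σ (φ (b k) i j) = φ (b k) i j := by
    simp only [Filter.eventually_all]
    exact fun k i j ↦ eventually_apply_eq _
  filter_upwards [h] with σ hσ x
  have : (σ : K →ₐ[F] K).mapMatrix.toLinearMap ∘ₗ φ.toLinearMap = φ.toLinearMap :=
    b.ext fun k ↦ Matrix.ext (hσ k)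
  simpa [SemiconjBy] using DFunLike.congr_fun this x

theorem eventually_substitution_one_one_apply_eq [Normal F K]
    (f : GenericField K ι) : ∀ᶠ σ in 𝓝 (1 : Gal(K/F)), substitution σ 1 1 f = f := by
  have hpoly (p : MvPolynomial (ι × ι) K) :
      ∀ᶠ σ in 𝓝 (1 : Gal(K/F)), polySubst σ 1 1 p = p := by
    induction p using MvPolynomial.induction_on with
    | C c => filter_upwards [eventually_apply_eq c] with σ hσ using by rw [polySubst_C, hσ]
    | add p q hp hq => filter_upwards [hp, hq] with σ hp hq using by rw [map_add, hp, hq]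
    | mul_X p ij hp =>
      filter_upwards [hp] with σ hp
      rw [map_mul, hp]
      simpa using congrArg (p * ·) (congrFun₂ (map_mvPolynomialX_polySubst σ 1 1) ij.1 ij.2)
  obtain ⟨p, q, -, rfl⟩ := IsFractionRing.div_surjective (MvPolynomial (ι × ι) K) f
  filter_upwards [hpoly p, hpoly q] with σ hp hq
  rw [map_div₀, substitution_algebraMap_mvPolynomial, substitution_algebraMap_mvPolynomial, hp, hq]

end Lifting

section EmbeddingRep

variable (F K L : Type*) [Field F] [Field K] [Field L] [Algebra F K] [Algebra F L]

/-- The diagonal matrix representation of `L` whose characters are all embeddings of `L`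
into `K`. -/
def embeddingRep [Fintype (L →ₐ[F] K)] [DecidableEq (L →ₐ[F] K)] :
    L →ₐ[F] Matrix (L →ₐ[F] K) (L →ₐ[F] K) K :=
  (Matrix.diagonalAlgHom F).comp (AlgHom.pi fun i ↦ i)

variable {F K L} [Fintype (L →ₐ[F] K)] [DecidableEq (L →ₐ[F] K)]

theorem embeddingRep_apply (y : L) : embeddingRep F K L y = Matrix.diagonal fun i ↦ i y :=
  rfl

theorem exists_isSemilinearIntertwiner_embeddingRep (σ : Gal(K/F)) :
    ∃ d, IsSemilinearIntertwiner (embeddingRep F K L) σ d := by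
  let π : Equiv.Perm (L →ₐ[F] K) := AlgEquiv.refl.arrowCongr σ
  refine ⟨Units.map (Matrix.permMatrixHom) (toUnits π), fun y ↦ ?_⟩
  have hπ (i j : L →ₐ[F] K) :
      (Matrix.permMatrixHom π : Matrix _ _ K) i j = if i = π j then 1 else 0 := by
    simp [PEquiv.toMatrix_apply, ← Equiv.Perm.inv_eq_iff_eq (f := π)]
  ext i j
  rw [embeddingRep_apply, Matrix.diagonal_map (map_zero σ), Matrix.mul_diagonal,
    Matrix.diagonal_mul, Units.coe_map, val_toUnits_apply, hπ]
  split_ifs with h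
  · simp [h, π]
  · simp

theorem IsSemilinearIntertwiner.eq_comp_of_apply_ne_zero {σ : Gal(K/F)} {d : GL (L →ₐ[F] K) K}
    (hd : IsSemilinearIntertwiner (embeddingRep F K L) σ d) {i j : L →ₐ[F] K}
    (hij : d i j ≠ 0) : i = (σ : K →ₐ[F] K).comp j := by
  ext y
  have h := congrFun₂ (hd y) i j
  rw [embeddingRep_apply, Matrix.diagonal_map (map_zero σ), Matrix.mul_diagonal,
    Matrix.diagonal_mul, mul_comm] at h
  exact (mul_right_cancel₀ hij h).symm

end EmbeddingRep

section Torus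

variable {K ι : Type*} [Field K] [Fintype ι] [DecidableEq ι]

/-- Invertible diagonal matrices. -/
def diagonalGL : (ι → Kˣ) →* GL ι K :=
  (Units.map (Matrix.diagonalRingHom ι K).toMonoidHom).comp MulEquiv.piUnits.symm.toMonoidHom

theorem coe_diagonalGL (t : ι → Kˣ) :
    (diagonalGL t : Matrix ι ι K) = Matrix.diagonal fun i ↦ (t i : K) :=
  rfl

theorem exists_eq_diagonalGL {d : GL ι K} (hd : ∀ i j, d i j ≠ 0 → i = j) :
    ∃ t : ι → Kˣ, d = diagonalGL t := by
  have h : d.val.IsDiag := fun i j hij ↦ by_contra fun h ↦ hij (hd i j h)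
  have hdet : ∏ i, d i i ≠ 0 := by
    have := d.det_ne_zero
    rwa [← h.diagonal_diag, Matrix.det_diagonal] at this
  refine ⟨fun i ↦ .mk0 (d i i) (Finset.prod_ne_zero_iff.1 hdet i (Finset.mem_univ i)), ?_⟩
  exact Units.ext h.diagonal_diag.symm

/-- The degree of a monomial in the entries of the `j`-th column of the generic matrix. -/
def columnDegree (m : ι × ι →₀ ℕ) (j : ι) : ℕ :=
  ∑ i, m (i, j)

variable {F : Type*} [Field F] [Algebra F K]

theorem coeff_polySubst_diagonalGL (t : ι → Kˣ) (p : MvPolynomial (ι × ι) K) (m : ι × ι →₀ ℕ) :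
    (polySubst (1 : Gal(K/F)) 1 (diagonalGL t) p).coeff m =
      (∏ j, (t j : K) ^ columnDegree m j) * p.coeff m := by
  have hX (ij : ι × ι) : polySubst (1 : Gal(K/F)) 1 (diagonalGL t) (.X ij) =
      .C (t ij.2 : K) * .X ij := by
    have h := congrFun₂ (map_mvPolynomialX_polySubst (1 : Gal(K/F)) 1 (diagonalGL t)) ij.1 ij.2
    have hd : (polyConst (diagonalGL t)).val =
        Matrix.diagonal fun j ↦ MvPolynomial.C (σ := ι × ι) (t j : K) :=
      Matrix.diagonal_map (map_zero _)
    rw [map_one, inv_one, Units.val_one, one_mul, hd, Matrix.mul_diagonal, mul_comm] at h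
    exact h
  have hm (m : ι × ι →₀ ℕ) (c : K) : polySubst (1 : Gal(K/F)) 1 (diagonalGL t) (.monomial m c) =
      .monomial m ((∏ j, (t j : K) ^ columnDegree m j) * c) := by
    have ht : (m.prod fun ij k ↦ MvPolynomial.C (σ := ι × ι) (t ij.2 : K) ^ k) =
        .C (∏ j, (t j : K) ^ columnDegree m j) := by
      rw [Finsupp.prod_fintype _ _ fun _ ↦ pow_zero _, Fintype.prod_prod_type_right, map_prod]
      simp only [columnDegree, Finset.prod_pow_eq_pow_sum, map_pow]
    rw [MvPolynomial.monomial_eq, map_mul, polySubst_C, map_finsuppProd,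
      MvPolynomial.monomial_eq, MvPolynomial.C_mul, ← ht, mul_right_comm, mul_comm]
    simp only [map_pow, hX, mul_pow, Finsupp.prod_mul, AlgEquiv.one_apply]
  induction p using MvPolynomial.induction_on' with
  | monomial m' c =>
    rw [hm, MvPolynomial.coeff_monomial, MvPolynomial.coeff_monomial]
    split_ifs with h
    · rw [h]
    · rw [mul_zero]
  | add p q hp hq => rw [map_add, MvPolynomial.coeff_add, MvPolynomial.coeff_add, hp, hq, mul_add]

variable (F) in
/-- The action of the diagonal torus on the rational functions, scaling the columns of the generic
matrix. -/
noncomputable abbrev torusAction (t : ι → Kˣ) : Gal(GenericField K ι/F) :=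
  substitution (1 : Gal(K/F)) 1 (diagonalGL t)

variable (F) in
/-- `f` is a semi-invariant of the diagonal torus, for the character `t ↦ ∏ j, t j ^ e j`. -/
def HasTorusWeight (e : ι → ℕ) (f : GenericField K ι) : Prop :=
  ∀ t : ι → Kˣ, torusAction F t f = algebraMap K _ (∏ j, (t j : K) ^ e j) * f

variable {e e' : ι → ℕ} {f f' : GenericField K ι}

theorem HasTorusWeight.eq [Infinite K] (hf : HasTorusWeight F e f) (hf' : HasTorusWeight F e' f)
    (h0 : f ≠ 0) : e = e' := by
  funext j
  have hpow (u : Kˣ) : (u : K) ^ e j = (u : K) ^ e' j := by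
    have h := mul_right_cancel₀ h0 ((hf (Pi.mulSingle j u)).symm.trans (hf' (Pi.mulSingle j u)))
    have h := (algebraMap K (GenericField K ι)).injective h
    simpa [Pi.mulSingle_apply, apply_ite, ite_pow, Finset.prod_ite_eq'] using h
  have hX : (Polynomial.X : Polynomial K) ^ (e j + 1) = Polynomial.X ^ (e' j + 1) := by
    refine Polynomial.funext fun u ↦ ?_
    rcases eq_or_ne u 0 with rfl | hu
    · simp
    · simpa [pow_succ, hu] using hpow (.mk0 u hu)
  simpa using congrArg Polynomial.natDegree hX

theorem HasTorusWeight.mul_algebraMap (hf : HasTorusWeight F e f) (c : K) :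
    HasTorusWeight F e (f * algebraMap K _ c) := fun t ↦ by
  rw [map_mul, hf t, substitution_algebraMap, mul_assoc, AlgEquiv.one_apply]

theorem HasTorusWeight.sum {κ : Type*} {s : Finset κ} {f : κ → GenericField K ι}
    (hf : ∀ k ∈ s, HasTorusWeight F e (f k)) : HasTorusWeight F e (∑ k ∈ s, f k) := fun t ↦ by
  rw [map_sum, Finset.mul_sum]
  exact Finset.sum_congr rfl fun k hk ↦ hf k hk t

theorem substitution_det_genericMatrix (σ : Gal(K/F)) (a d : GL ι K) :
    substitution σ a d (genericMatrix K ι).val.det =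
      algebraMap K _ (a.val.det⁻¹ * d.val.det) * (genericMatrix K ι).val.det := by
  have h := congrArg GeneralLinearGroup.det (map_genericMatrix_substitution σ a d)
  rw [map_mul, map_mul, map_inv, GeneralLinearGroup.map_det, GeneralLinearGroup.map_det,
    GeneralLinearGroup.map_det, mul_right_comm] at h
  simpa using congrArg Units.val h

theorem torusAction_div_det_pow (k : ℕ) (hf : HasTorusWeight F (fun _ ↦ k) f) (t : ι → Kˣ) :
    torusAction F t (f / (genericMatrix K ι).val.det ^ k) =
      f / (genericMatrix K ι).val.det ^ k := by
  rw [map_div₀, map_pow, substitution_det_genericMatrix, hf t, Units.val_one, Matrix.det_one,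
    inv_one, one_mul, coe_diagonalGL, Matrix.det_diagonal, Finset.prod_pow, map_pow, mul_pow]
  refine mul_div_mul_left _ _ (pow_ne_zero _ ?_)
  simp [Finset.prod_eq_zero_iff]

end Torus

section TorusOfEmbeddings

variable {F K L : Type*} [Field F] [Field K] [Field L] [Algebra F K] [Algebra F L]
  [Fintype (L →ₐ[F] K)] [DecidableEq (L →ₐ[F] K)]
  {σ : Gal(K/F)} {d : GL (L →ₐ[F] K) K}

theorem substitution_mul_torusAction (hd : IsSemilinearIntertwiner (embeddingRep F K L) σ d)
    (a : GL (L →ₐ[F] K) K) {t t' : (L →ₐ[F] K) → Kˣ}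
    (ht : ∀ j, (t' ((σ : K →ₐ[F] K).comp j) : K) = σ (t j)) :
    substitution σ a d * torusAction F t = torusAction F t' * substitution σ a d := by
  have hdt : d * galMap σ (diagonalGL t) = diagonalGL t' * d := by
    refine Units.ext (Matrix.ext fun i j ↦ ?_)
    have hσ : (galMap σ (diagonalGL t)).val = Matrix.diagonal fun j ↦ σ (t j) :=
      Matrix.diagonal_map (map_zero σ)
    rw [Units.val_mul, Units.val_mul, hσ, coe_diagonalGL, Matrix.mul_diagonal,
      Matrix.diagonal_mul]
    by_cases hij : d i j = 0
    · rw [hij, zero_mul, mul_zero]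
    · rw [hd.eq_comp_of_apply_ne_zero hij, ht, mul_comm]
  rw [substitution_mul, substitution_mul, hdt]
  simp only [galMap_one, map_one, mul_one, one_mul]

theorem HasTorusWeight.map_substitution {e e' : (L →ₐ[F] K) → ℕ} {f : GenericField K (L →ₐ[F] K)}
    (hf : HasTorusWeight F e f) (hd : IsSemilinearIntertwiner (embeddingRep F K L) σ d)
    (a : GL (L →ₐ[F] K) K) (he : ∀ j, e' ((σ : K →ₐ[F] K).comp j) = e j) :
    HasTorusWeight F e' (substitution σ a d f) := fun t' ↦ by
  let π : Equiv.Perm (L →ₐ[F] K) := AlgEquiv.refl.arrowCongr σ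
  let t (j : L →ₐ[F] K) : Kˣ := Units.mapEquiv (σ⁻¹ : Gal(K/F)) (t' (π j))
  have ht (j : L →ₐ[F] K) : (t' (π j) : K) = σ (t j) := (σ.apply_symm_apply _).symm
  have hπ (j : L →ₐ[F] K) : π j = (σ : K →ₐ[F] K).comp j := rfl
  have h := AlgEquiv.congr_fun (substitution_mul_torusAction hd a ht) f
  rw [AlgEquiv.mul_apply, AlgEquiv.mul_apply, hf t, map_mul, substitution_algebraMap] at h
  have ht' : ∏ j, (t' j : K) ^ e' j = σ (∏ j, (t j : K) ^ e j) := by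
    rw [← Equiv.prod_comp π, map_prod]
    exact Finset.prod_congr rfl fun j _ ↦ by rw [ht, hπ, he, map_pow]
  rw [← h, ht']

theorem exists_substitution_eq_torusAction {A : Type*} [Ring A] [Algebra F A]
    [Algebra.IsCentral F A] [IsSimpleRing A] [FiniteDimensional F A] [Nonempty (L →ₐ[F] K)]
    {φ : A →ₐ[F] Matrix (L →ₐ[F] K) (L →ₐ[F] K) K}
    (hA : Module.finrank F A = Fintype.card (L →ₐ[F] K) ^ 2) {a : GL (L →ₐ[F] K) K}
    (ha : IsSemilinearIntertwiner φ 1 a) (hd : IsSemilinearIntertwiner (embeddingRep F K L) 1 d) :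
    ∃ t, substitution (1 : Gal(K/F)) a d = torusAction F t := by
  obtain ⟨t, rfl⟩ := exists_eq_diagonalGL fun i j ↦ hd.eq_comp_of_apply_ne_zero
  obtain ⟨c, hc⟩ := exists_eq_smul_one_of_commute hA ha
  have hc0 : c ≠ 0 := by
    rintro rfl
    exact a.ne_zero (hc.trans (zero_smul _ _))
  obtain rfl : a = .scalar _ (.mk0 c hc0) := Units.ext (hc.trans (Matrix.smul_one_eq_diagonal c))
  have hu : diagonalGL (fun _ ↦ .mk0 c hc0) = GeneralLinearGroup.scalar (L →ₐ[F] K) (.mk0 c hc0) :=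
    rfl
  refine ⟨(fun _ ↦ .mk0 c hc0)⁻¹ * t,
    genericField_algEquiv_ext (fun c ↦ by simp [substitution_algebraMap]) ?_⟩
  rw [map_genericMatrix_substitution, map_genericMatrix_substitution, map_mul diagonalGL,
    map_inv diagonalGL, hu, map_mul, map_inv, map_one, inv_one, one_mul, ← mul_assoc,
    GeneralLinearGroup.map_scalar, ← map_inv, GeneralLinearGroup.scalar_commute]

end TorusOfEmbeddings

theorem exists_apply_ne_zero {ν R : Type*} [Fintype ν] [DecidableEq ν] [Nonempty ν] [CommRing R]
    [Nontrivial R] (u : GL ν R) : ∃ i j, u i j ≠ 0 := by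
  by_contra! h
  exact u.ne_zero (Matrix.ext h)

section ProjectivelyEquivariant

variable {F K ι ν D : Type*} [Field F] [Field K] [Algebra F K] [Fintype ι] [DecidableEq ι]
  [Fintype ν] [DecidableEq ν] [Ring D] [Algebra F D]

/-- Every substitution in `G`, acting by `σ` on constants, changes `u` by a constant scalar and by a
constant matrix that identifies the `σ`-conjugate of `φ` with `φ`. -/
def IsProjectivelyEquivariant (G : Subgroup Gal(GenericField K ι/F)) (φ : D →ₐ[F] Matrix ν ν K)
    (u : GL ν (GenericField K ι)) : Prop :=
  ∀ σ a d, substitution σ a d ∈ G → ∀ β, IsSemilinearIntertwiner φ σ β →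
    ∃ c : K, u.val.map (substitution σ a d) =
      algebraMap K (GenericField K ι) c • (u * constMatrix β).val

variable {G : Subgroup Gal(GenericField K ι/F)} {φ : D →ₐ[F] Matrix ν ν K}
  {u : GL ν (GenericField K ι)}

/-- The matrix `u` divided by the `k`-th power of the determinant of the generic matrix. -/
noncomputable def divDetPow (u : GL ν (GenericField K ι)) (k : ℕ) : GL ν (GenericField K ι) :=
  (GeneralLinearGroup.det (genericMatrix K ι) ^ k)⁻¹ • u

theorem divDetPow_apply (k : ℕ) (i j : ν) :
    divDetPow u k i j = u i j / (genericMatrix K ι).val.det ^ k := by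
  rw [div_eq_inv_mul]
  simp [divDetPow, Units.smul_def]

theorem IsProjectivelyEquivariant.exists_map_divDetPow_eq_mul
    (hu : IsProjectivelyEquivariant G φ u) (k : ℕ) {σ : Gal(K/F)} {a d : GL ι K}
    (hs : substitution σ a d ∈ G) {β : GL ν K} (hβ : IsSemilinearIntertwiner φ σ β) :
    ∃ b : Matrix ν ν K, (divDetPow u k).val.map (substitution σ a d) =
      (divDetPow u k).val * b.map (algebraMap K (GenericField K ι)) := by
  obtain ⟨c, hc⟩ := hu σ a d hs β hβ
  refine ⟨(c / (a.val.det⁻¹ * d.val.det) ^ k) • β.val, Matrix.ext fun i j ↦ ?_⟩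
  have hcij : substitution σ a d (u i j) =
      algebraMap K _ c * ∑ r, u i r * algebraMap K _ (β r j) := congrFun₂ hc i j
  rw [Matrix.map_apply, divDetPow_apply, map_div₀, map_pow, substitution_det_genericMatrix, hcij,
    Matrix.mul_apply, Finset.mul_sum, Finset.sum_div]
  refine Finset.sum_congr rfl fun r _ ↦ ?_
  rw [Matrix.map_apply, divDetPow_apply, Matrix.smul_apply, smul_eq_mul,
    map_mul (algebraMap K _) (_ / _), map_div₀, map_pow]
  ring

section Existence

variable [Algebra.IsCentral F D] [IsSimpleRing D] [FiniteDimensional F D] [Nonempty ν]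
  (hD : Module.finrank F D = Fintype.card ν ^ 2)
  {Y : D → Matrix ν ν (GenericField K ι)} (hY : ∀ s ∈ G, ∀ x, (Y x).map s = Y x)
include hD hY

theorem isProjectivelyEquivariant_of_isPrimitiveMatrix
    (hu : ∀ x, SemiconjBy u.val ((φ x).map (algebraMap K _)) (Y x))
    {g : Matrix ν ν (MvPolynomial (ι × ι) K)} (hg : IsPrimitiveMatrix g)
    (hgu : g.map (algebraMap _ _) = u.val) : IsProjectivelyEquivariant G φ u := by
  intro σ a d hs β hβ
  let s := substitution σ a d
  let toM : Matrix ν ν K →+* Matrix ν ν (GenericField K ι) := (algebraMap K _).mapMatrix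
  let φσ : D →ₐ[F] Matrix ν ν (GenericField K ι) :=
    ((IsScalarTower.toAlgHom F K (GenericField K ι)).comp (σ : K →ₐ[F] K)).mapMatrix.comp φ
  have hsu (x : D) : SemiconjBy (u.val.map s) (φσ x) (Y x) := by
    have h := (hu x).map (s : GenericField K ι →+* GenericField K ι).mapMatrix
    have hφ : ((φ x).map (algebraMap K (GenericField K ι))).map s = φσ x :=
      Matrix.ext fun i j ↦ substitution_algebraMap ..
    rw [← hY _ hs x, ← hφ]
    exact h
  have huβ (x : D) : SemiconjBy (u * constMatrix β).val (φσ x) (Y x) :=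
    (hu x).mul_left ((hβ x).map toM)
  obtain ⟨c, hc⟩ := exists_eq_smul_of_semiconjBy hD (u * constMatrix β) huβ hsu
  have hgβ : IsPrimitiveMatrix (g * (polyConst β).val) := hg.mul_units _
  have hgs : (g.map (polySubst σ a d)).map (algebraMap _ (GenericField K ι)) =
      c • (g * (polyConst β).val).map (algebraMap _ _) := by
    have hsg : (g.map (polySubst σ a d)).map (algebraMap _ (GenericField K ι)) = u.val.map s := by
      rw [← hgu]
      exact Matrix.ext fun i j ↦ (substitution_algebraMap_mvPolynomial ..).symm
    rw [hsg, hc, Matrix.map_mul, hgu]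
    rfl
  obtain ⟨w, rfl⟩ := hgβ.exists_units_of_map_eq_smul (hg.map (polySubst σ a d).toRingEquiv) hgs
  obtain ⟨k, -, hk⟩ := MvPolynomial.isUnit_iff_eq_C_of_isReduced.1 w.isUnit
  exact ⟨k, by rw [hc, hk]; rfl⟩

theorem exists_isPrimitiveMatrix_isProjectivelyEquivariant
    (hu : ∀ x, SemiconjBy u.val ((φ x).map (algebraMap K _)) (Y x)) :
    ∃ v : GL ν (GenericField K ι), (∀ x, SemiconjBy v.val ((φ x).map (algebraMap K _)) (Y x)) ∧
      IsProjectivelyEquivariant G φ v ∧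
      ∃ g : Matrix ν ν (MvPolynomial (ι × ι) K), g.map (algebraMap _ _) = v.val := by
  obtain ⟨g, hg, c, hc, hgu⟩ :=
    exists_isPrimitiveMatrix_map_eq_smul (R := MvPolynomial (ι × ι) K) u.ne_zero
  have hv (x : D) : SemiconjBy (Units.mk0 c hc • u).val ((φ x).map (algebraMap K _)) (Y x) :=
    (hu x).smul_left c
  exact ⟨Units.mk0 c hc • u, hv, isProjectivelyEquivariant_of_isPrimitiveMatrix hD hY hv hg hgu,
    g, hgu⟩

end Existence

theorem IsProjectivelyEquivariant.exists_hasTorusWeight [Nonempty ν]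
    (hu : IsProjectivelyEquivariant G φ u)
    {g : Matrix ν ν (MvPolynomial (ι × ι) K)} (hgu : g.map (algebraMap _ _) = u.val)
    (hG : ∀ t, torusAction F t ∈ G) : ∃ e, ∀ i j, HasTorusWeight F e (u i j) := by
  have hentry (i j) : algebraMap _ (GenericField K ι) (g i j) = u i j := congrFun₂ hgu i j
  obtain ⟨i₀, j₀, h₀⟩ := exists_apply_ne_zero u
  have hg₀ : g i₀ j₀ ≠ 0 := fun h ↦ h₀ (by rw [← hentry, h, map_zero])
  obtain ⟨m, hm⟩ := MvPolynomial.ne_zero_iff.1 hg₀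
  refine ⟨columnDegree m, fun i j t ↦ ?_⟩
  obtain ⟨c, hc⟩ := hu 1 1 (diagonalGL t) (hG t) 1 isSemilinearIntertwiner_one
  rw [map_one, mul_one] at hc
  have hc₀ : polySubst (1 : Gal(K/F)) 1 (diagonalGL t) (g i₀ j₀) = .C c * g i₀ j₀ := by
    apply IsFractionRing.injective (MvPolynomial (ι × ι) K) (GenericField K ι)
    rw [← substitution_algebraMap_mvPolynomial, map_mul, hentry]
    exact congrFun₂ hc i₀ j₀
  have hcm := congrArg (MvPolynomial.coeff m) hc₀
  rw [coeff_polySubst_diagonalGL, MvPolynomial.coeff_C_mul] at hcm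
  rw [mul_right_cancel₀ hm hcm]
  exact congrFun₂ hc i j

end ProjectivelyEquivariant

section RelativeBrauer

variable {F K L A : Type*} [Field F] [Field K] [Field L] [Algebra F K] [Algebra F L]
  [Fintype (L →ₐ[F] K)] [DecidableEq (L →ₐ[F] K)] [Ring A] [Algebra F A]
  (φ : A →ₐ[F] Matrix (L →ₐ[F] K) (L →ₐ[F] K) K)

theorem torusAction_mem_substitutionGroup (t : (L →ₐ[F] K) → Kˣ) :
    torusAction F t ∈ substitutionGroup φ (embeddingRep F K L) := by
  refine ⟨1, 1, _, isSemilinearIntertwiner_one, fun y ↦ ?_, rfl⟩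
  have h : (embeddingRep F K L y).map (1 : Gal(K/F)) = embeddingRep F K L y := Matrix.map_id _
  rw [h, embeddingRep_apply, coe_diagonalGL]
  exact Matrix.commute_diagonal _ _

variable [Algebra.IsCentral F A] [IsSimpleRing A] [FiniteDimensional F A]
  [Nonempty (L →ₐ[F] K)] (hA : Module.finrank F A = Fintype.card (L →ₐ[F] K) ^ 2)
include hA

theorem exists_substitution_mem_substitutionGroup (σ : Gal(K/F)) :
    ∃ a d, IsSemilinearIntertwiner (embeddingRep F K L) σ d ∧
      substitution σ a d ∈ substitutionGroup φ (embeddingRep F K L) := by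
  obtain ⟨a, ha⟩ := exists_isSemilinearIntertwiner φ hA σ
  obtain ⟨d, hd⟩ := exists_isSemilinearIntertwiner_embeddingRep (L := L) σ
  exact ⟨a, d, hd, σ, a, d, ha, hd, rfl⟩

theorem exists_mem_substitutionGroup_restrictNormal_eq [Normal F K] (σ : Gal(K/F)) :
    ∃ s ∈ substitutionGroup φ (embeddingRep F K L), s.restrictNormal K = σ := by
  obtain ⟨a, d, -, hs⟩ := exists_substitution_mem_substitutionGroup φ hA σ
  exact ⟨_, hs, restrictNormal_substitution ..⟩

variable {φ}

section Weight

variable {D ν : Type*} [Fintype ν] [DecidableEq ν] [Ring D] [Algebra F D] [Nonempty ν]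
  [Algebra.IsCentral F D] [IsSimpleRing D] [FiniteDimensional F D]
  (hD : Module.finrank F D = Fintype.card ν ^ 2) {φD : D →ₐ[F] Matrix ν ν K}
  {u : GL ν (GenericField K (L →ₐ[F] K))}
  (hu : IsProjectivelyEquivariant (substitutionGroup φ (embeddingRep F K L)) φD u)
include hD hu

theorem torusWeight_apply_eq_of_isProjectivelyEquivariant [Infinite K] [Normal F K]
    {e : (L →ₐ[F] K) → ℕ} (he : ∀ i j, HasTorusWeight F e (u i j)) (i j : L →ₐ[F] K) :
    e i = e j := by
  obtain ⟨σ, hσ⟩ := exists_algEquiv_comp_eq j i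
  obtain ⟨a, d, hd, hs⟩ := exists_substitution_mem_substitutionGroup φ hA σ
  obtain ⟨β, hβ⟩ := exists_isSemilinearIntertwiner φD hD σ
  obtain ⟨c, hc⟩ := hu σ a d hs β hβ
  obtain ⟨r, l, hrl⟩ := exists_apply_ne_zero u
  let e' (k : L →ₐ[F] K) : ℕ := e ((σ⁻¹ : Gal(K/F)).toAlgHom.comp k)
  have he' (k : L →ₐ[F] K) : e' ((σ : K →ₐ[F] K).comp k) = e k :=
    congrArg e (AlgHom.ext fun y ↦ σ.symm_apply_apply (k y))
  have hsu : substitution σ a d (u r l) =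
      (∑ k, u r k * algebraMap K _ (β k l)) * algebraMap K _ c :=
    (congrFun₂ hc r l).trans (mul_comm ..)
  have hweight : HasTorusWeight F e (substitution σ a d (u r l)) := by
    rw [hsu]
    exact .mul_algebraMap (.sum fun k _ ↦ (he r k).mul_algebraMap _) c
  have hee' : e = e' := hweight.eq ((he r l).map_substitution hd a he') (by simpa using hrl)
  rw [← hσ, hee', he', ← hee']

end Weight

theorem eventually_apply_eq_of_torusAction_apply_eq [Normal F K] [FiniteDimensional F L]
    {f : GenericField K (L →ₐ[F] K)} (hf : ∀ t, torusAction F t f = f) :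
    ∀ᶠ σ in 𝓝 (1 : Gal(K/F)), ∀ s ∈ substitutionGroup φ (embeddingRep F K L),
      s.restrictNormal K = σ → s f = f := by
  filter_upwards [eventually_isSemilinearIntertwiner_one φ,
    eventually_isSemilinearIntertwiner_one (embeddingRep F K L),
    eventually_substitution_one_one_apply_eq f] with σ hφ hψ hσ
  rintro _ ⟨σ, a, d, ha, hd, rfl⟩ rfl
  rw [restrictNormal_substitution] at hφ hψ hσ
  have ha' : IsSemilinearIntertwiner φ 1 a := by simpa using ha.mul hφ.inv
  have hd' : IsSemilinearIntertwiner (embeddingRep F K L) 1 d := by simpa using hd.mul hψ.inv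
  obtain ⟨t, ht⟩ := exists_substitution_eq_torusAction hA ha' hd'
  have hmul : substitution σ a d = torusAction F t * substitution σ 1 1 := by
    rw [← ht, substitution_mul]
    simp only [one_mul, map_one, mul_one]
  rw [hmul, AlgEquiv.mul_apply, hσ, hf]

end RelativeBrauer

theorem infinite_of_isSepClosed (K : Type*) [Field K] [IsSepClosed K] : Infinite K := by
  by_contra h
  -- A finite field is perfect, so `K` would be algebraically closed.
  have := not_infinite_iff_finite.1 h
  exact h inferInstance

section FixedField

variable {F K L A : Type u} [Field F] [Field K] [Field L] [Algebra F K] [Algebra F L]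
  [Fintype (L →ₐ[F] K)] [DecidableEq (L →ₐ[F] K)] [Ring A] [Algebra F A]
  [Algebra.IsCentral F A] [IsSimpleRing A] [FiniteDimensional F A]
  [Nonempty (L →ₐ[F] K)] (hA : Module.finrank F A = Fintype.card (L →ₐ[F] K) ^ 2)
  [IsGalois F K] [FiniteDimensional F L]
  (φ : A →ₐ[F] Matrix (L →ₐ[F] K) (L →ₐ[F] K) K)
include hA

theorem isSplit_of_isProjectivelyEquivariant {D : Type u} {ν : Type*} [Fintype ν] [DecidableEq ν]
    [Ring D] [Algebra F D] [Nonempty ν]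
    [Algebra.IsCentral F D] [IsSimpleRing D] [FiniteDimensional F D]
    (hD : Module.finrank F D = Fintype.card ν ^ 2) {φD : D →ₐ[F] Matrix ν ν K}
    {Y : D → Matrix ν ν (GenericField K (L →ₐ[F] K))}
    (hY : ∀ s ∈ substitutionGroup φ (embeddingRep F K L), ∀ x, (Y x).map s = Y x)
    {u : GL ν (GenericField K (L →ₐ[F] K))}
    (hu : ∀ x, SemiconjBy u.val ((φD x).map (algebraMap K _)) (Y x))
    (huG : IsProjectivelyEquivariant (substitutionGroup φ (embeddingRep F K L)) φD u)
    {k : ℕ} (hk : ∀ i j, HasTorusWeight F (fun _ ↦ k) (u i j)) : IsSplit F D := by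
  refine isSplit_of_semiconjBy_algebraMap hD (exists_mem_substitutionGroup_restrictNormal_eq φ hA)
    φD Y hY (divDetPow u k) (fun x ↦ (hu x).smul_left _) ?_ ?_
  · rintro _ ⟨σ, a, d, ha, hd, rfl⟩
    obtain ⟨β, hβ⟩ := exists_isSemilinearIntertwiner φD hD σ
    exact huG.exists_map_divDetPow_eq_mul k ⟨σ, a, d, ha, hd, rfl⟩ hβ
  · have hfixed (i j : ν) := eventually_apply_eq_of_torusAction_apply_eq hA (φ := φ)
      (f := divDetPow u k i j) fun t ↦ by rw [divDetPow_apply, torusAction_div_det_pow _ (hk i j)]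
    filter_upwards [Filter.eventually_all.2 fun i ↦ Filter.eventually_all.2 (hfixed i)]
      with σ hσ s hs hsσ
    exact Matrix.ext fun i j ↦ hσ i j s hs hsσ

theorem relativeBrauerTrivial_fixedField [IsSepClosed K] : RelativeBrauerTrivial F
    (IntermediateField.fixedField (substitutionGroup φ (embeddingRep F K L))) := by
  rintro D _ _ ⟨_, _, _⟩ ⟨n, hn, ⟨e⟩⟩
  have : NeZero n := ⟨hn.ne'⟩
  set G := substitutionGroup φ (embeddingRep F K L)
  let E := IntermediateField.fixedField G
  have hD : Module.finrank F D = Fintype.card (Fin n) ^ 2 := by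
    rw [← Module.finrank_baseChange (R := E), e.toLinearEquiv.finrank_eq]
    simp [Module.finrank_matrix, sq]
  have := infinite_of_isSepClosed K
  obtain ⟨φD⟩ := exists_algHom_matrix (N := K) hD
  let M := GenericField K (L →ₐ[F] K)
  let Y : D →ₐ[F] Matrix (Fin n) (Fin n) M :=
    E.val.mapMatrix.comp
      ((e : E ⊗[F] D →ₐ[E] _).restrictScalars F |>.comp Algebra.TensorProduct.includeRight)
  have hY : ∀ s ∈ G, ∀ x, (Y x).map s = Y x := fun s hs x ↦
    Matrix.ext fun i j ↦ (e (1 ⊗ₜ x) i j).2 ⟨s, hs⟩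
  obtain ⟨u₀, hu₀⟩ :=
    exists_units_semiconjBy hD ((IsScalarTower.toAlgHom F K M).mapMatrix.comp φD) Y
  obtain ⟨u, hu, huG, g, hg⟩ := exists_isPrimitiveMatrix_isProjectivelyEquivariant hD hY hu₀
  obtain ⟨e, he⟩ := huG.exists_hasTorusWeight hg (torusAction_mem_substitutionGroup φ)
  obtain ⟨i⟩ := ‹Nonempty (L →ₐ[F] K)›
  have hconst : e = fun _ ↦ e i :=
    funext fun j ↦ torusWeight_apply_eq_of_isProjectivelyEquivariant hA hD huG he j i
  exact isSplit_of_isProjectivelyEquivariant hA φ hD hY hu huG (hconst ▸ he)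

end FixedField

section MaximalSubfield

theorem isSplit_baseChange_of_finrank_eq_sq {E N B : Type u} [Field E] [Field N] [Algebra E N]
    [FiniteDimensional E N] [Ring B] [Algebra E B] [Algebra.IsCentral E B] [IsSimpleRing B]
    [FiniteDimensional E B] (j : N →ₐ[E] B)
    (h : Module.finrank E B = Module.finrank E N ^ 2) : IsSplit N (N ⊗[E] B) := by
  let right : N →ₐ[E] Bᵐᵒᵖ := j.toOpposite fun x y ↦ (Commute.all x y).map j
  let _ : Module N B := Module.compHom B (right : N →+* Bᵐᵒᵖ)
  have smul_eq (c : N) (b : B) : c • b = b * j c := rfl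
  have : IsScalarTower E N B := ⟨fun e c b ↦ by simp [smul_eq]⟩
  have : SMulCommClass B N B := ⟨fun a c b ↦ (mul_assoc a b (j c)).symm⟩
  have : SMulCommClass N B B := .symm ..
  have : FiniteDimensional N B := .right E N B
  have hNB : Module.finrank N B = Module.finrank E N :=
    Nat.eq_of_mul_eq_mul_left (Module.finrank_pos (R := E) (M := N)) <| by
      rw [Module.finrank_mul_finrank, h, sq]
  exact isSplit_of_algEquiv_end <| baseChangeEquiv (Algebra.lsmul E N B) <| by
    rw [h, Module.finrank_linearMap, hNB, sq]

section Compositum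

variable {F E L N : Type*} [Field F] [Field E] [Field L] [Field N] [Algebra F E] [Algebra F L]
  [Algebra F N] [Algebra E N] [Algebra L N] [IsScalarTower F E N] [IsScalarTower F L N]
  (hEL : Algebra.adjoin E (Set.range (algebraMap L N)) = ⊤)
include hEL

theorem productLeftAlgHom_surjective_of_adjoin_eq_top :
    Function.Surjective (Algebra.TensorProduct.productLeftAlgHom (Algebra.ofId E N)
      (IsScalarTower.toAlgHom F L N)) := by
  rw [← AlgHom.range_eq_top, eq_top_iff, ← hEL, Algebra.adjoin_le_iff]
  rintro _ ⟨y, rfl⟩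
  exact ⟨1 ⊗ₜ y, by simp⟩

variable (F) in
theorem finiteDimensional_of_adjoin_eq_top [FiniteDimensional F L] : FiniteDimensional E N :=
  .of_surjective _ (productLeftAlgHom_surjective_of_adjoin_eq_top (F := F) hEL)

theorem nonempty_algEquiv_tensorProduct_of_finrank_le [FiniteDimensional F L]
    (hle : Module.finrank F L ≤ Module.finrank E N) : Nonempty (E ⊗[F] L ≃ₐ[E] N) := by
  let mulMap := Algebra.TensorProduct.productLeftAlgHom (Algebra.ofId E N)
    (IsScalarTower.toAlgHom F L N)
  have hsurj : Function.Surjective mulMap := productLeftAlgHom_surjective_of_adjoin_eq_top hEL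
  have := finiteDimensional_of_adjoin_eq_top F hEL
  have hfinrank : Module.finrank E (E ⊗[F] L) = Module.finrank E N :=
    (Module.finrank_baseChange.trans_le hle).antisymm
      (mulMap.toLinearMap.finrank_le_finrank_of_surjective hsurj)
  exact ⟨.ofBijective mulMap ⟨(LinearMap.injective_iff_surjective_of_finrank_eq_finrank
    (f := mulMap.toLinearMap) hfinrank).2 hsurj, hsurj⟩⟩

end Compositum

theorem isSplit_baseChange_of_algHom_tensorProduct {F E L N A : Type u} [Field F] [Field E]
    [Field L] [Field N] [Algebra F E] [Algebra F L] [Algebra F N] [Algebra E N]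
    [IsScalarTower F E N] [FiniteDimensional F L] [Ring A] [Algebra F A]
    [Algebra.IsCentral F A] [IsSimpleRing A] [FiniteDimensional F A]
    (hA : Module.finrank F A = Module.finrank F L ^ 2) (e : E ⊗[F] L ≃ₐ[E] N)
    (ρ : L →ₐ[F] E ⊗[F] A) : IsSplit N (N ⊗[F] A) := by
  let j : N →ₐ[E] E ⊗[F] A :=
    (Algebra.TensorProduct.lift (Algebra.ofId E _) ρ fun _ _ ↦ Algebra.commutes ..).comp
      e.symm.toAlgHom
  have hEN : Module.finrank E N = Module.finrank F L := by
    rw [← e.toLinearEquiv.finrank_eq, Module.finrank_baseChange]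
  have : FiniteDimensional E N := .of_surjective e.toLinearMap e.surjective
  have := isSimpleRing_tensorProduct F E A
  have := isCentral_baseChange F A E
  obtain ⟨n, hn, ⟨f⟩⟩ := isSplit_baseChange_of_finrank_eq_sq j <| by
    rw [Module.finrank_baseChange, hEN, hA]
  let includeA : A →ₐ[F] N ⊗[E] (E ⊗[F] A) :=
    (Algebra.TensorProduct.includeRight.restrictScalars F).comp Algebra.TensorProduct.includeRight
  exact ⟨n, hn, ⟨(baseChangeEquiv includeA (by simp)).trans f⟩⟩

end MaximalSubfield

section GenericEmbedding

theorem mem_range_map_val_fixedField {F M A : Type*} [Field F] [Field M] [Algebra F M] [Ring A]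
    [Algebra F A] {G : Subgroup Gal(M/F)} {z : M ⊗[F] A}
    (hz : ∀ s ∈ G, Algebra.TensorProduct.map (s : M →ₐ[F] M) (.id F A) z = z) :
    z ∈ (Algebra.TensorProduct.map (IntermediateField.fixedField G).val (.id F A)).range := by
  let b := Module.Free.chooseBasis F A
  let B := Algebra.TensorProduct.basis M b
  have repr_map (s : Gal(M/F)) (w : M ⊗[F] A) (i) :
      B.repr (Algebra.TensorProduct.map (s : M →ₐ[F] M) (.id F A) w) i = s (B.repr w i) := by
    induction w with
    | zero => simp
    | add x y hx hy => simp [hx, hy]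
    | tmul c x => simp [B]
  rw [← B.linearCombination_repr z]
  refine sum_mem fun i _ ↦ ⟨⟨B.repr z i, fun s ↦ ?_⟩ ⊗ₜ b i, ?_⟩
  · exact (repr_map s z i).symm.trans (by rw [hz s s.2])
  · simp [B, TensorProduct.smul_tmul']

theorem nonempty_algHom_fixedField_tensorProduct_of_forall_map_eq {F M L A : Type*} [Field F]
    [Field M] [Algebra F M] [Ring L] [Algebra F L] [Ring A] [Algebra F A] {G : Subgroup Gal(M/F)}
    (ζ : L →ₐ[F] M ⊗[F] A)
    (hζ : ∀ s ∈ G, ∀ y, Algebra.TensorProduct.map (s : M →ₐ[F] M) (.id F A) (ζ y) = ζ y) :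
    Nonempty (L →ₐ[F] IntermediateField.fixedField G ⊗[F] A) := by
  let descend := Algebra.TensorProduct.map (IntermediateField.fixedField G).val (.id F A)
  have hdescend : Function.Injective descend :=
    Module.Flat.rTensor_preserves_injective_linearMap (M := A)
      _ (IntermediateField.fixedField G).val.injective
  exact ⟨(AlgEquiv.ofInjective descend hdescend).symm.toAlgHom.comp
    (ζ.codRestrict descend.range fun y ↦ mem_range_map_val_fixedField fun s hs ↦ hζ s hs y)⟩

section ConstMatrix

variable {F K ι A : Type*} [Field F] [Field K] [Algebra F K] [Fintype ι] [DecidableEq ι]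
  [Ring A] [Algebra F A] {σ : Gal(K/F)} {a d e : GL ι K} {ψ : A →ₐ[F] Matrix ι ι K}

theorem IsSemilinearIntertwiner.semiconjBy_constMatrix (he : IsSemilinearIntertwiner ψ σ e)
    (x : A) : SemiconjBy (constMatrix e).val
      (((ψ x).map (algebraMap K (GenericField K ι))).map (substitution σ a d))
      ((ψ x).map (algebraMap K (GenericField K ι))) := by
  have h : ((ψ x).map (algebraMap K (GenericField K ι))).map (substitution σ a d) =
      ((ψ x).map σ).map (algebraMap K (GenericField K ι)) :=
    Matrix.ext fun i j ↦ substitution_algebraMap ..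
  rw [h]
  exact (he x).map (algebraMap K (GenericField K ι)).mapMatrix

theorem IsSemilinearIntertwiner.semiconjBy_constMatrix_of_genericMatrix
    (hd : IsSemilinearIntertwiner ψ σ d) {x : A} {y : Matrix ι ι (GenericField K ι)}
    (hy : SemiconjBy (genericMatrix K ι).val ((ψ x).map (algebraMap K _)) y) :
    SemiconjBy (constMatrix a).val (y.map (substitution σ a d)) y := by
  let s := substitution σ a d
  have hsy : SemiconjBy (galMap s (genericMatrix K ι)).val
      (((ψ x).map (algebraMap K _)).map s) (y.map s) :=
    hy.map (s : GenericField K ι →+* GenericField K ι).mapMatrix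
  have hX : constMatrix a =
      genericMatrix K ι * constMatrix d * (galMap s (genericMatrix K ι))⁻¹ := by
    rw [map_genericMatrix_substitution]
    group
  rw [hX, Units.val_mul, Units.val_mul]
  exact (hy.mul_left (hd.semiconjBy_constMatrix x)).mul_left hsy.units_inv_symm_left

end ConstMatrix

variable {F K L A : Type*} [Field F] [Field K] [Field L] [Algebra F K] [Algebra F L]
  [Ring A] [Algebra F A] [Fintype (L →ₐ[F] K)] [DecidableEq (L →ₐ[F] K)]
  [Algebra.IsCentral F A] [IsSimpleRing A] [FiniteDimensional F A] [Nonempty (L →ₐ[F] K)]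
  (hA : Module.finrank F A = Fintype.card (L →ₐ[F] K) ^ 2)
  (φ : A →ₐ[F] Matrix (L →ₐ[F] K) (L →ₐ[F] K) K)
include hA

theorem nonempty_algHom_fixedField_tensorProduct : Nonempty
    (L →ₐ[F] IntermediateField.fixedField (substitutionGroup φ (embeddingRep F K L)) ⊗[F] A) := by
  let ι := L →ₐ[F] K
  let M := GenericField K ι
  let toM : Matrix ι ι K →ₐ[F] Matrix ι ι M := (IsScalarTower.toAlgHom F K M).mapMatrix
  let Y : L →ₐ[F] Matrix ι ι M :=
    (MulSemiringAction.toAlgHom F _ (ConjAct.toConjAct (genericMatrix K ι))).comp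
      (toM.comp (embeddingRep F K L))
  have hXY (y : L) : SemiconjBy (genericMatrix K ι).val (toM (embeddingRep F K L y)) (Y y) := by
    simp [SemiconjBy, Y, ConjAct.units_smul_def, mul_assoc]
  let Θ := matrixEquiv (toM.comp φ) hA
  refine nonempty_algHom_fixedField_tensorProduct_of_forall_map_eq
    ((Θ.symm : _ →ₐ[M] M ⊗[F] A).restrictScalars F |>.comp Y) ?_
  rintro _ ⟨σ, a, d, ha, hd, rfl⟩ y
  let s : M →ₐ[F] M := substitution σ a d
  have hφ (x : A) : SemiconjBy (constMatrix a).val ((toM (φ x)).map s) (toM (φ x)) :=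
    ha.semiconjBy_constMatrix x
  have hY : SemiconjBy (constMatrix a).val ((Y y).map s) (Y y) :=
    hd.semiconjBy_constMatrix_of_genericMatrix (hXY y)
  have h := semiconjBy_map_matrixEquiv (φ := toM.comp φ) hA hφ (Θ.symm (Y y))
  rw [AlgEquiv.apply_symm_apply] at h
  exact Θ.eq_symm_apply.2 <| (constMatrix a).isUnit.mul_right_cancel (h.eq.symm.trans hY.eq)

end GenericEmbedding

section Degree

theorem card_algHom_le_finrank_of_algHom {F K L M N : Type*} [Field F] [Field K] [Field L] [Field M]
    [Field N] [Algebra F K] [Normal F K] [Algebra F L] [Algebra F M] [Algebra K M]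
    [IsScalarTower F K M] {G : Subgroup Gal(M/F)}
    (hG : ∀ σ : Gal(K/F), ∃ s ∈ G, s.restrictNormal K = σ)
    [Algebra (IntermediateField.fixedField G) N]
    [FiniteDimensional (IntermediateField.fixedField G) N]
    (v : N →ₐ[IntermediateField.fixedField G] M) {incl : L → N} {i₀ : L →ₐ[F] K}
    (hv : ∀ y, v (incl y) = algebraMap K M (i₀ y)) :
    Nat.card (L →ₐ[F] K) ≤ Module.finrank (IntermediateField.fixedField G) N := by
  have extend (i : L →ₐ[F] K) : ∃ f : N →ₐ[IntermediateField.fixedField G] M,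
      ∀ y, f (incl y) = algebraMap K M (i y) := by
    obtain ⟨σ, rfl⟩ := exists_algEquiv_comp_eq i₀ i
    obtain ⟨s, hs, rfl⟩ := hG σ
    let sE : M →ₐ[IntermediateField.fixedField G] M :=
      { (s : M →+* M) with commutes' := fun e ↦ e.2 ⟨s, hs⟩ }
    refine ⟨sE.comp v, fun y ↦ ?_⟩
    exact (congrArg s (hv y)).trans (s.restrictNormal_commutes K (i₀ y)).symm
  choose f hf using extend
  have hinj : Function.Injective f := fun i j hij ↦ AlgHom.ext fun y ↦
    (algebraMap K M).injective <| by rw [← hf, ← hf, hij]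
  exact (Nat.card_le_card_of_injective f hinj).trans (card_algHom_le_finrank _ _ _)

end Degree

section SplittingExtension

theorem adjoin_range_eq_top_of_coe_eq {E M L : Type*} [Field E] [Field M] [Algebra E M]
    {g : L → M} (hg : ∀ y, IsAlgebraic E (g y))
    {b : L → IntermediateField.adjoin E (Set.range g)} (hb : ∀ y, (b y : M) = g y) :
    Algebra.adjoin E (Set.range b) = ⊤ := by
  let N := IntermediateField.adjoin E (Set.range g)
  have hval : N.val ∘ b = g := funext hb
  apply Subalgebra.map_injective N.val.injective
  rw [AlgHom.map_adjoin, ← Set.range_comp, hval, Algebra.map_top, IntermediateField.range_val,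
    IntermediateField.adjoin_toSubalgebra_of_isAlgebraic (Set.forall_mem_range.2 hg)]

theorem exists_splittingExtension_of_compositum (q : ℕ) {F A L E M : Type u} [Field F] [Ring A]
    [Algebra F A] [Field L] [Algebra F L] [Algebra.IsAlgebraic F L] [Field E] [Algebra F E]
    [Field M] [Algebra F M] [Algebra E M] [IsScalarTower F E M]
    (hres : ResInj F E (algebraMap F E)) (g : L →ₐ[F] M)
    (hsplit : ∀ (N : Type u) [Field N] [Algebra F N] [Algebra E N] [Algebra L N]
      [IsScalarTower F E N] [IsScalarTower F L N],
      Algebra.adjoin E (Set.range (algebraMap L N)) = ⊤ →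
      ∀ v : N →ₐ[E] M, (∀ y, v (algebraMap L N y) = g y) → IsSplit N (N ⊗[F] A)) :
    ∃ S : SplittingExtension q F A L,
      letI := S.fieldE
      letI := S.algFE
      ResInj F S.E (algebraMap F S.E) := by
  let N := IntermediateField.adjoin E (Set.range g)
  let _ : Algebra L N := ((g : L →+* M).codRestrict N fun y ↦
    IntermediateField.subset_adjoin E _ ⟨y, rfl⟩).toAlgebra
  have : IsScalarTower F L N :=
    .of_algebraMap_eq fun c ↦ Subtype.ext (g.commutes c).symm
  have hEL : Algebra.adjoin E (Set.range (algebraMap L N)) = ⊤ :=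
    adjoin_range_eq_top_of_coe_eq
      (fun y ↦ ((Algebra.IsAlgebraic.isAlgebraic (R := F) y).algHom g).tower_top E) fun _ ↦ rfl
  exact ⟨{ E, N
           resInj := fun B C _ _ _ _ hB hC _ _ ↦ hres B C hB hC
           compositum := hEL
           splits := hsplit N hEL N.val fun _ ↦ rfl }, hres⟩

end SplittingExtension

theorem isSeparable_of_natCast_finrank_ne_zero {F L : Type*} [Field F] [Field L] [Algebra F L]
    [FiniteDimensional F L] (h : (Module.finrank F L : F) ≠ 0) : Algebra.IsSeparable F L where
  isSeparable' x := by
    have hx : IsIntegral F x := .of_finite F x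
    have hdeg : ((minpoly F x).natDegree : F) ≠ 0 :=
      ne_zero_of_dvd_ne_zero h (Nat.cast_dvd_cast (minpoly.degree_dvd hx))
    refine (Polynomial.separable_iff_derivative_ne_zero (minpoly.irreducible hx)).2 fun h0 ↦ hdeg ?_
    have hcoeff := Polynomial.coeff_derivative (minpoly F x) ((minpoly F x).natDegree - 1)
    rw [h0, Polynomial.coeff_zero, ← Nat.cast_succ, Nat.succ_eq_add_one,
      Nat.sub_add_cancel (minpoly.natDegree_pos hx), (minpoly.monic hx).coeff_natDegree,
      one_mul] at hcoeff
    exact hcoeff.symm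

end GenericConjugator

open GenericConjugator in
theorem exists_splitting_extension_general (q : ℕ) {F A L : Type u} [Field F] [Ring A]
    [Algebra F A] (hA : IsCSA F A) [Field L] [Algebra F L] [FiniteDimensional F L]
    [Algebra.IsSeparable F L] (hdeg : Module.finrank F A = Module.finrank F L ^ 2) :
    ∃ S : SplittingExtension q F A L,
      letI := S.fieldE
      letI := S.algFE
      ResInj F S.E (algebraMap F S.E) := by
  classical
  obtain ⟨_, _, _⟩ := hA
  let K := SeparableClosure F
  let M := GenericField K (L →ₐ[F] K)
  have hcard : Fintype.card (L →ₐ[F] K) = Module.finrank F L := AlgHom.card_of_splits F L K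
    fun x ↦ IsSepClosed.splits_codomain _ (Algebra.IsSeparable.isSeparable F x)
  have : Nonempty (L →ₐ[F] K) := Fintype.card_pos_iff.1 (hcard ▸ Module.finrank_pos)
  let i₀ : L →ₐ[F] K := Classical.arbitrary _
  have hdegK : Module.finrank F A = Fintype.card (L →ₐ[F] K) ^ 2 := hcard ▸ hdeg
  obtain ⟨φ⟩ := exists_algHom_matrix (N := K) hdegK
  refine exists_splittingExtension_of_compositum q
    (resInj_of_relativeBrauerTrivial (relativeBrauerTrivial_fixedField hdegK φ))
    ((IsScalarTower.toAlgHom F K M).comp i₀) fun N _ _ _ _ _ _ hEL v hv ↦ ?_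
  have := finiteDimensional_of_adjoin_eq_top F hEL
  have hle := card_algHom_le_finrank_of_algHom
    (exists_mem_substitutionGroup_restrictNormal_eq φ hdegK) v hv
  rw [Nat.card_eq_fintype_card, hcard] at hle
  obtain ⟨e⟩ := nonempty_algEquiv_tensorProduct_of_finrank_le hEL hle
  obtain ⟨ρ⟩ := nonempty_algHom_fixedField_tensorProduct hdegK φ
  exact isSplit_baseChange_of_algHom_tensorProduct hdeg e ρ

/-- for `F` of characteristic not `p`, a central simple `F`-algebra `A` of
degree `p` and a degree-`p` extension `L/F`, there is a field extension `E/F` with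
`Br(F)[p] → Br(E)[p]` injective such that `EL` splits `A ⊗_F E`. -/
theorem exists_splitting_extension (p : ℕ) (hp : p.Prime)
    (F : Type u) [Field F] (hchar : ringChar F ≠ p)
    (A : Type u) [Ring A] [Algebra F A] (hA : IsCSA F A)
    (hdegA : Module.finrank F A = p ^ 2)
    (L : Type u) [Field L] [Algebra F L] (hL : Module.finrank F L = p) :
    Nonempty (SplittingExtension p F A L) := by
  have : FiniteDimensional F L := .of_finrank_pos (hL ▸ hp.pos)
  have hpF : (p : F) ≠ 0 := fun h ↦
    ((Nat.dvd_prime hp).1 (ringChar.dvd h)).elim CharP.ringChar_ne_one hchar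
  have := GenericConjugator.isSeparable_of_natCast_finrank_ne_zero (hL ▸ hpF)
  exact (exists_splitting_extension_general p hA (hL ▸ hdegA)).nonempty
end

section
/- Let F be a field of characteristic not p, A a set of central division F-algebras of degree p, and S a set of field extensions of F of degree p. Then there exists a field extension E/F such that: (1) the restriction Br(F)[p] → Br(E)[p] is injective; and (2) for every D ∈ A and every L ∈ S, the compositum EL splits D ⊗_F E. -/
open scoped TensorProduct
universe u

/-- Witness for STATEMENT 9: a field extension `E/F` with injective restriction on
`p`-torsion Brauer classes, and for every pair `(D i, L j)` a compositum `N i j = E·(L j)`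
splitting `(D i) ⊗_F E`. -/
structure SplittingExtensionFamily (p : ℕ) (F : Type u) [Field F] {ι μ : Type u}
    (D : ι → Type u) [∀ i, DivisionRing (D i)] [∀ i, Algebra F (D i)]
    (L : μ → Type u) [∀ j, Field (L j)] [∀ j, Algebra F (L j)] : Type (u + 1) where
  E : Type u
  [fieldE : Field E]
  [algFE : Algebra F E]
  resInj : ResInjP p F E (algebraMap F E)
  /-- the composita `E · (L j)` -/
  N : ι → μ → Type u
  [fieldN : ∀ i j, Field (N i j)]
  [algFN : ∀ i j, Algebra F (N i j)]
  [algEN : ∀ i j, Algebra E (N i j)]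
  [algLN : ∀ i j, Algebra (L j) (N i j)]
  [towerE : ∀ i j, IsScalarTower F E (N i j)]
  [towerL : ∀ i j, IsScalarTower F (L j) (N i j)]
  compositum : ∀ i j, Algebra.adjoin E (Set.range (algebraMap (L j) (N i j))) = ⊤
  splits : ∀ i j, IsSplit (N i j) ((N i j) ⊗[F] (D i))

/-!
Let `N` be a separable closure of `F`. By Skolem–Noether, a splitting `ρ` of `D` over `N` yields
matrices `Y_g ∈ GL_d(N)` that form a cocycle up to scalars. For every `D` and `L` take one vector of
`d` indeterminates for each embedding `L → N`. On the rational function field `K` in all of them,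
`Gal(N/F)` acts semilinearly by permuting the vectors and applying the `Y_g`; being defined up to
scalars, this is an action only together with the torus that scales each vector separately.
The field `E` is the fixed field of the group of these automorphisms.

The coordinate vector of an embedding `t : L → N` is fixed up to `Y_g` and scalars by the
automorphisms fixing `t(L)`, that is, over `E L`. Hence `D` splits over `E L`.

Conversely, let `C` be split by `E`, and let `W` be the analogous cocycle of `C`. Skolem–Noether
over `K` gives an invertible matrix of polynomials without common factor; under the action twisted
by `W` it is multiplied by units of the polynomial ring, that is, by elements of `N`. The torus acts
on it through a character whose exponents are constant on Galois orbits, so that its total degree in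
the vectors of the pair `(D, L)` is a multiple of `[L : F]`, hence of `d`. Correcting the
multipliers by the corresponding powers of `det Y_g` gives a cochain whose coboundary is the
obstruction of `W`, so `C` is already split over `F`.
-/

section TensorProduct

variable {F A R : Type*} [Field F] [Ring A] [Algebra F A] [Ring R] [Algebra F R]

lemma lTensor_mulLeftRight_tmul (a : A) (b : Aᵐᵒᵖ) (z : R ⊗[F] A) :
    LinearMap.lTensor R (AlgHom.mulLeftRight F A (a ⊗ₜ b)) z =
      (1 ⊗ₜ a) * z * (1 ⊗ₜ b.unop) := by
  induction z with
  | zero => simp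
  | tmul r x => simp
  | add x y hx hy => simp [hx, hy, mul_add, add_mul]

lemma lTensor_algebraLinearMap_comp (f : A →ₗ[F] F) (z : R ⊗[F] A) :
    LinearMap.lTensor R (Algebra.linearMap F A ∘ₗ f) z =
      TensorProduct.rid F R (LinearMap.lTensor R f z) ⊗ₜ 1 := by
  induction z with
  | zero => simp
  | tmul r a => simp [Algebra.algebraMap_eq_smul_one, TensorProduct.smul_tmul]
  | add x y hx hy => simp only [map_add, hx, hy, TensorProduct.add_tmul]

attribute [local instance] instModuleTensorProductMop in
lemma isSimpleModule_tensor_mulOpposite [IsSimpleRing A] :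
    IsSimpleModule (A ⊗[F] Aᵐᵒᵖ) A := by
  have smul_eq (a : A) (b : Aᵐᵒᵖ) (x : A) : (a ⊗ₜ[F] b) • x = a * x * b.unop :=
    AlgHom.mulLeftRight_apply F A a b x
  refine isSimpleModule_iff _ _ |>.2
    { exists_pair_ne := ⟨⊥, ⊤, bot_ne_top⟩, eq_bot_or_eq_top := fun N => ?_ }
  let I : TwoSidedIdeal A := .mk' (N : Set A) N.zero_mem N.add_mem N.neg_mem
    (fun {x y} hy => by simpa [smul_eq] using N.smul_mem (x ⊗ₜ 1) hy)
    (fun {x y} hx => by simpa [smul_eq] using N.smul_mem (1 ⊗ₜ MulOpposite.op y) hx)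
  have mem_I (x : A) : x ∈ I ↔ x ∈ N := TwoSidedIdeal.mem_mk' ..
  rcases eq_bot_or_eq_top I with h | h
  · refine Or.inl (eq_bot_iff.2 fun x hx => ?_)
    simpa [h] using (mem_I x).2 hx
  · exact Or.inr (eq_top_iff.2 fun x _ => (mem_I x).1 (h ▸ trivial))

attribute [local instance] instModuleTensorProductMop in
lemma exists_smul_eq_of_end_tensor_mulOpposite [Algebra.IsCentral F A]
    (e : Module.End (A ⊗[F] Aᵐᵒᵖ) A) :
    ∃ c : F, ∀ x, e x = c • x := by
  have smul_eq (a : A) (b : Aᵐᵒᵖ) (x : A) : (a ⊗ₜ[F] b) • x = a * x * b.unop :=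
    AlgHom.mulLeftRight_apply F A a b x
  have left (y : A) : e y = e 1 * y := by
    simpa [smul_eq] using e.map_smul (1 ⊗ₜ MulOpposite.op y) 1
  have right (y : A) : e y = y * e 1 := by
    simpa [smul_eq] using e.map_smul (y ⊗ₜ 1) 1
  have central : e 1 ∈ Subalgebra.center F A :=
    Subalgebra.mem_center_iff.2 fun y => by rw [← left, ← right]
  obtain ⟨c, hc⟩ := Algebra.IsCentral.mem_center_iff F |>.1 central
  exact ⟨c, fun x => by rw [left, hc, Algebra.smul_def]⟩

variable [Algebra.IsCentral F A] [IsSimpleRing A] [FiniteDimensional F A]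

attribute [local instance] instModuleTensorProductMop in
lemma mulLeftRight_surjective : Function.Surjective (AlgHom.mulLeftRight F A) := by
  classical
  intro φ
  have := isSimpleModule_tensor_mulOpposite (F := F) (A := A)
  let f : Module.End (Module.End (A ⊗[F] Aᵐᵒᵖ) A) A :=
    { φ with
      map_smul' := fun e x => by
        obtain ⟨c, hc⟩ := exists_smul_eq_of_end_tensor_mulOpposite e
        simp [hc] }
  let b := Module.finBasis F A
  obtain ⟨z, hz⟩ := jacobson_density (R := A ⊗[F] Aᵐᵒᵖ) f (Finset.univ.image b)
  exact ⟨z, b.ext fun i => (hz (b i) (by simp)).symm⟩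

lemma lTensor_mem_twoSidedIdeal (I : TwoSidedIdeal (R ⊗[F] A)) (φ : A →ₗ[F] A)
    {z : R ⊗[F] A} (hz : z ∈ I) : LinearMap.lTensor R φ z ∈ I := by
  obtain ⟨w, rfl⟩ := mulLeftRight_surjective φ
  induction w with
  | zero => simp
  | tmul a b =>
    rw [lTensor_mulLeftRight_tmul]
    exact I.mul_mem_right _ _ (I.mul_mem_left _ _ hz)
  | add x y hx hy => simpa [LinearMap.lTensor_add] using I.add_mem hx hy

lemma lTensor_eq_mul_of_commute (φ : A →ₗ[F] A) {z : R ⊗[F] A}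
    (hz : ∀ a : A, Commute (1 ⊗ₜ a) z) : LinearMap.lTensor R φ z = z * (1 ⊗ₜ φ 1) := by
  obtain ⟨w, rfl⟩ := mulLeftRight_surjective φ
  induction w with
  | zero => simp
  | tmul a b => rw [lTensor_mulLeftRight_tmul, (hz a).eq, mul_assoc]; simp
  | add x y hx hy => simp [LinearMap.lTensor_add, hx, hy, TensorProduct.tmul_add, mul_add]

lemma exists_eq_tmul_one_of_commute {z : R ⊗[F] A} (hz : ∀ a : A, Commute (1 ⊗ₜ a) z) :
    ∃ r : R, z = r ⊗ₜ 1 := by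
  obtain ⟨f, hf⟩ := (Algebra.linearMap F A).exists_leftInverse_of_injective
    (LinearMap.ker_eq_bot.2 (FaithfulSMul.algebraMap_injective F A))
  have hf1 : f 1 = 1 := by simpa using LinearMap.congr_fun hf 1
  have := lTensor_eq_mul_of_commute (Algebra.linearMap F A ∘ₗ f) hz
  rw [lTensor_algebraLinearMap_comp] at this
  exact ⟨_, by simpa [hf1, ← Algebra.TensorProduct.one_def] using this.symm⟩

instance isSimpleRing_tensorProduct [IsSimpleRing R] : IsSimpleRing (R ⊗[F] A) := by
  refine ⟨{ exists_pair_ne := ⟨⊥, ⊤, bot_ne_top⟩,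
            eq_bot_or_eq_top := fun I => or_iff_not_imp_left.2 fun hI => ?_ }⟩
  obtain ⟨z, hz, hz0⟩ : ∃ z ∈ I, z ≠ 0 := by
    by_contra! h
    exact hI (eq_bot_iff.2 fun x hx => by simpa using h x hx)
  let b := Module.finBasis F A
  obtain ⟨i, hi⟩ : ∃ i, TensorProduct.equivFinsuppOfBasisRight b z i ≠ 0 := by
    by_contra! h
    exact hz0 ((TensorProduct.equivFinsuppOfBasisRight b).injective (Finsupp.ext (by simp [h])))
  let J : TwoSidedIdeal R := I.comap (Algebra.TensorProduct.includeLeft : R →ₐ[F] R ⊗[F] A)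
  have mem_J (x : R) : x ∈ J ↔ x ⊗ₜ[F] (1 : A) ∈ I := by simp [J, TwoSidedIdeal.mem_comap]
  have coord_mem : TensorProduct.equivFinsuppOfBasisRight b z i ∈ J := by
    have := lTensor_mem_twoSidedIdeal I (Algebra.linearMap F A ∘ₗ b.coord i) hz
    rw [lTensor_algebraLinearMap_comp] at this
    rw [mem_J]
    convert this using 2
    exact TensorProduct.equivFinsuppOfBasisRight_apply ..
  have J_eq_top : J = ⊤ := (eq_bot_or_eq_top J).resolve_left fun h =>
    hi (by simpa [h] using coord_mem)
  have one_mem : (1 : R ⊗[F] A) ∈ I := (mem_J 1).1 (J_eq_top ▸ trivial)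
  exact eq_top_iff.2 fun x _ => by simpa using I.mul_mem_left x 1 one_mem

instance isCentral_baseChange {K : Type*} [Field K] [Algebra F K] :
    Algebra.IsCentral K (K ⊗[F] A) := by
  refine ⟨fun z hz => ?_⟩
  obtain ⟨r, rfl⟩ := exists_eq_tmul_one_of_commute fun a => Subalgebra.mem_center_iff.1 hz _
  exact ⟨r, by simp [Algebra.TensorProduct.algebraMap_apply]⟩

instance isCentral_tensorProduct [Nontrivial R] [Algebra.IsCentral F R] :
    Algebra.IsCentral F (R ⊗[F] A) := by
  refine ⟨fun z hz => ?_⟩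
  rw [Subalgebra.mem_center_iff] at hz
  obtain ⟨r, rfl⟩ := exists_eq_tmul_one_of_commute fun a => hz _
  have hr : r ∈ Subalgebra.center F R := Subalgebra.mem_center_iff.2 fun b =>
    Algebra.TensorProduct.includeLeft_injective (R := F) (S := F) (A := R) (B := A)
      (FaithfulSMul.algebraMap_injective F A) (by simpa using hz (b ⊗ₜ 1))
  obtain ⟨c, rfl⟩ := Algebra.IsCentral.mem_center_iff F |>.1 hr
  exact ⟨c, by simp [Algebra.TensorProduct.algebraMap_apply]⟩

end TensorProduct

section MatrixAlgebra

lemma exists_generalLinearGroup_conj {K : Type*} [Field K] {d : ℕ}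
    (φ : Matrix (Fin d) (Fin d) K ≃ₐ[K] Matrix (Fin d) (Fin d) K) :
    ∃ S : GL (Fin d) K, ∀ x, φ x * S = S * x := by
  let e := Matrix.toLinAlgEquiv' (R := K) (n := Fin d)
  obtain ⟨T, hT⟩ := AlgEquiv.eq_linearEquivConjAlgEquiv ((e.symm.trans φ).trans e)
  let S := Matrix.GeneralLinearGroup.toLin.symm (LinearMap.GeneralLinearGroup.ofLinearEquiv T)
  have hS : e S = T.toLinearMap := Matrix.toLin'_toMatrix' T.toLinearMap
  refine ⟨S, fun x => e.injective ?_⟩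
  have hφ : e (φ x) = T.conjAlgEquiv K (e x) := by simpa using congr($hT (e x))
  rw [map_mul, map_mul, hS, hφ]
  ext v
  simp [LinearEquiv.conjAlgEquiv_apply]

lemma bot_eq_top_of_isSepClosed (K D : Type*) [Field K] [IsSepClosed K] [DivisionRing D]
    [Algebra K D] [Algebra.IsCentral K D] [FiniteDimensional K D] : (⊥ : Subalgebra K D) = ⊤ := by
  by_contra hne
  obtain ⟨x, hx, hsep⟩ := JacobsonNoether.exists_separable_and_not_isCentral' hne
  have hdeg := IsSepClosed.degree_eq_one_of_irreducible K
    (minpoly.irreducible (Algebra.IsIntegral.isIntegral x)) hsep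
  obtain ⟨c, hc⟩ := minpoly.mem_range_of_degree_eq_one K x hdeg
  exact hx ⟨c, hc⟩

lemma exists_algEquiv_matrix_of_isSepClosed (K A : Type u) [Field K] [IsSepClosed K] [Ring A]
    [Algebra K A] [Algebra.IsCentral K A] [IsSimpleRing A] [FiniteDimensional K A] :
    ∃ d : ℕ, Nonempty (A ≃ₐ[K] Matrix (Fin d) (Fin d) K) := by
  have : IsArtinianRing A := IsArtinianRing.of_finite K A
  obtain ⟨n, _, D, _, _, _, ⟨e⟩⟩ := IsSimpleRing.exists_algEquiv_matrix_divisionRing_finite K A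
  have : Algebra.IsCentral K D := by
    have : Algebra.IsCentral K (Matrix (Fin n) (Fin n) K ⊗[K] D) :=
      have := Algebra.IsCentral.of_algEquiv K _ _ e
      .of_algEquiv K _ _ ((matrixEquivTensor (Fin n) K D).trans
        (Algebra.TensorProduct.comm K _ _))
    exact Algebra.IsCentral.right_of_tensor_of_field K (Matrix (Fin n) (Fin n) K) D
  let eD : D ≃ₐ[K] K := (Subalgebra.topEquiv.symm.trans
    (Subalgebra.equivOfEq _ _ (bot_eq_top_of_isSepClosed K D).symm)).trans (Algebra.botEquiv K D)
  exact ⟨n, ⟨e.trans eD.mapMatrix⟩⟩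

lemma exists_algHom_matrix_of_isSepClosed (F : Type*) (C K : Type u) [Field F] [Ring C]
    [Algebra F C] [Algebra.IsCentral F C] [IsSimpleRing C] [FiniteDimensional F C] [Field K]
    [Algebra F K] [IsSepClosed K] :
    ∃ d : ℕ, Module.finrank F C = d ^ 2 ∧ Nonempty (C →ₐ[F] Matrix (Fin d) (Fin d) K) := by
  obtain ⟨d, ⟨e⟩⟩ := exists_algEquiv_matrix_of_isSepClosed K (K ⊗[F] C)
  refine ⟨d, ?_, ⟨(e.toAlgHom.restrictScalars F).comp Algebra.TensorProduct.includeRight⟩⟩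
  simpa [Module.finrank_matrix, sq] using e.toLinearEquiv.finrank_eq

lemma neZero_of_finrank_eq_sq {F C : Type*} [Field F] [Ring C] [Algebra F C] [Nontrivial C]
    [FiniteDimensional F C] {d : ℕ} (hC : Module.finrank F C = d ^ 2) : NeZero d :=
  ⟨by rintro rfl; exact Module.finrank_pos.ne' hC⟩

end MatrixAlgebra

section Splitting

variable {F C K : Type*} [Field F] [Ring C] [Algebra F C] [Field K] [Algebra F K] {d : ℕ}
  [Algebra.IsCentral F C] [IsSimpleRing C] [FiniteDimensional F C]

lemma lift_bijective (hC : Module.finrank F C = d ^ 2) (ρ : C →ₐ[F] Matrix (Fin d) (Fin d) K) :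
    Function.Bijective (Algebra.TensorProduct.lift (Algebra.ofId K _) ρ
      fun a b => Algebra.commutes a (ρ b)) := by
  have := neZero_of_finrank_eq_sq hC
  set f := Algebra.TensorProduct.lift (Algebra.ofId K _) ρ fun a b => Algebra.commutes a (ρ b)
  have inj : Function.Injective f := f.toRingHom.injective
  refine ⟨inj, (LinearMap.injective_iff_surjective_of_finrank_eq_finrank
    (f := f.toLinearMap) ?_).1 inj⟩
  simp [hC, Module.finrank_matrix, sq]

/-- The isomorphism `K ⊗ C ≃ M_d(K)` extending a `d`-dimensional representation over `K` of a
central simple `F`-algebra `C` of degree `d`. -/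
noncomputable def splittingEquiv (hC : Module.finrank F C = d ^ 2)
    (ρ : C →ₐ[F] Matrix (Fin d) (Fin d) K) : K ⊗[F] C ≃ₐ[K] Matrix (Fin d) (Fin d) K :=
  AlgEquiv.ofBijective _ (lift_bijective hC ρ)

@[simp]
lemma splittingEquiv_tmul (hC : Module.finrank F C = d ^ 2)
    (ρ : C →ₐ[F] Matrix (Fin d) (Fin d) K) (k : K) (x : C) :
    splittingEquiv hC ρ (k ⊗ₜ x) = k • ρ x :=
  (Algebra.TensorProduct.lift_tmul _ _ (fun _ _ => Algebra.commute_algebraMap_left _ _) k x).trans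
    (Algebra.smul_def k (ρ x)).symm

lemma exists_eq_smul_one_of_commute (hC : Module.finrank F C = d ^ 2)
    (ρ : C →ₐ[F] Matrix (Fin d) (Fin d) K) {M : Matrix (Fin d) (Fin d) K}
    (hM : ∀ x, Commute (ρ x) M) : ∃ c : K, M = c • (1 : Matrix (Fin d) (Fin d) K) := by
  have : M ∈ Subalgebra.center K (Matrix (Fin d) (Fin d) K) := by
    refine Subalgebra.mem_center_iff.2 fun B => ?_
    obtain ⟨z, rfl⟩ := (splittingEquiv hC ρ).surjective B
    induction z with
    | zero => simp
    | tmul k x => simp [(hM x).eq]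
    | add x y hx hy => simp [add_mul, mul_add, hx, hy]
  obtain ⟨c, hc⟩ := Algebra.IsCentral.mem_center_iff K |>.1 this
  exact ⟨c, by rw [hc, Algebra.algebraMap_eq_smul_one]⟩

lemma skolem_noether (hC : Module.finrank F C = d ^ 2)
    (ρ r : C →ₐ[F] Matrix (Fin d) (Fin d) K) :
    ∃ S : GL (Fin d) K, ∀ x, ρ x * S = S * r x := by
  obtain ⟨S, hS⟩ := exists_generalLinearGroup_conj
    ((splittingEquiv hC r).symm.trans (splittingEquiv hC ρ))
  refine ⟨S, fun x => ?_⟩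
  have hr : (splittingEquiv hC r).symm (r x) = 1 ⊗ₜ x :=
    (splittingEquiv hC r).symm_apply_eq.2 (by simp)
  simpa [hr] using hS (r x)

lemma exists_eq_scalar_mul (hC : Module.finrank F C = d ^ 2)
    (ρ r : C →ₐ[F] Matrix (Fin d) (Fin d) K) {P Q : GL (Fin d) K} (hP : ∀ x, ρ x * P = P * r x)
    (hQ : ∀ x, ρ x * Q = Q * r x) :
    ∃ c : Kˣ, P = Matrix.GeneralLinearGroup.scalar (Fin d) c * Q := by
  have := neZero_of_finrank_eq_sq hC
  have hPQ (x) : Commute (ρ x) ↑(P * Q⁻¹) := by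
    refine Q.isUnit.mul_right_cancel ?_
    rw [mul_assoc, mul_assoc, hQ, ← Units.val_mul, ← mul_assoc, ← Units.val_mul]
    simpa using hP x
  obtain ⟨c, hc⟩ := exists_eq_smul_one_of_commute hC ρ hPQ
  have hc0 : c ≠ 0 := by
    rintro rfl
    exact (P * Q⁻¹).ne_zero (by simpa using hc)
  refine ⟨Units.mk0 c hc0, mul_inv_eq_iff_eq_mul.1 (Units.ext ?_)⟩
  simpa [Matrix.smul_one_eq_diagonal] using hc

end Splitting

section Brauer

attribute [local instance] instModuleTensorProductMop in
lemma nonempty_mulOpposite_tensor_algEquiv_matrix (F B : Type*) [Field F] [Ring B] [Algebra F B]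
    [Algebra.IsCentral F B] [IsSimpleRing B] [FiniteDimensional F B] :
    Nonempty (Bᵐᵒᵖ ⊗[F] B ≃ₐ[F]
      Matrix (Fin (Module.finrank F B)) (Fin (Module.finrank F B)) F) := by
  have hdim : Module.finrank F (B ⊗[F] Bᵐᵒᵖ) = Module.finrank F (Module.End F B) := by
    rw [Module.finrank_tensorProduct, Module.finrank_linearMap,
      ← (MulOpposite.opLinearEquiv F).finrank_eq]
  have inj := (LinearMap.injective_iff_surjective_of_finrank_eq_finrank
    (f := (AlgHom.mulLeftRight F B).toLinearMap) hdim).2 mulLeftRight_surjective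
  exact ⟨(Algebra.TensorProduct.comm F _ _).trans
    ((AlgEquiv.ofBijective (AlgHom.mulLeftRight F B) ⟨inj, mulLeftRight_surjective⟩).trans
      (LinearMap.toMatrixAlgEquiv (Module.finBasis F B)))⟩

lemma BrauerEquiv.of_algEquiv_matrix {F A B : Type u} [Field F] [Ring A] [Algebra F A] [Ring B]
    [Algebra F B] [Algebra.IsCentral F B] [IsSimpleRing B] [FiniteDimensional F B] {n d : ℕ}
    (hn : 0 < n) (hd : 0 < d)
    (e : Matrix (Fin n) (Fin n) A ⊗[F] Bᵐᵒᵖ ≃ₐ[F] Matrix (Fin d) (Fin d) F) :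
    BrauerEquiv F A B := by
  obtain ⟨eB⟩ := nonempty_mulOpposite_tensor_algEquiv_matrix F B
  let e' : Matrix (Fin d) (Fin d) B ≃ₐ[F] _ :=
    (matrixEquivTensor (Fin d) F B).trans <| (Algebra.TensorProduct.comm F _ _).trans <|
    (Algebra.TensorProduct.congr e.symm AlgEquiv.refl).trans <|
    (Algebra.TensorProduct.assoc F F F _ _ _).trans <|
    (Algebra.TensorProduct.congr (AlgEquiv.refl (R := F)) eB).trans <|
    (matrixEquivTensor (Fin (Module.finrank F B)) F (Matrix (Fin n) (Fin n) A)).symm.trans <|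
    (Matrix.compAlgEquiv (Fin (Module.finrank F B)) (Fin n) A F).trans
      (Matrix.reindexAlgEquiv F A finProdFinEquiv)
  exact ⟨_, d, Nat.mul_pos Module.finrank_pos hn, hd, ⟨e'.symm⟩⟩

/-- The action of `M_n(A) ⊗ Bᵒᵖ` on `(E ⊗ B)^m` obtained from an isomorphism
`M_n(E ⊗ A) ≃ M_m(E ⊗ B)`: matrices act from the left, `B` by right multiplication. -/
noncomputable def columnAction {F E A B : Type*} [Field F] [Field E] [Algebra F E] [Ring A]
    [Algebra F A] [Ring B] [Algebra F B] {n m : ℕ}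
    (φ : Matrix (Fin n) (Fin n) (E ⊗[F] A) ≃ₐ[E] Matrix (Fin m) (Fin m) (E ⊗[F] B)) :
    Matrix (Fin n) (Fin n) A ⊗[F] Bᵐᵒᵖ →ₐ[F] Module.End E (Fin m → E ⊗[F] B) :=
  Algebra.TensorProduct.lift
    (((Algebra.lsmul E E (Fin m → E ⊗[F] B)).restrictScalars F).comp <|
      (φ.toAlgHom.restrictScalars F).comp
        (Algebra.TensorProduct.includeRight : A →ₐ[F] E ⊗[F] A).mapMatrix)
    (((Algebra.lsmul E E (Fin m → E ⊗[F] B)).restrictScalars F).comp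
      (AlgHom.op (Algebra.TensorProduct.includeRight : B →ₐ[F] E ⊗[F] B)))
    fun M b => LinearMap.ext fun v =>
      smul_comm (φ (Algebra.TensorProduct.includeRight.mapMatrix M))
        (MulOpposite.op (Algebra.TensorProduct.includeRight b.unop)) v

/-- `C` of degree `d` is split over `F` as soon as it is split over `E`, for every central simple
`C`: the kernel of `Br(F) → Br(E)` is trivial. Representations of dimension `d` stand for
splittings, as they extend to isomorphisms by `splittingEquiv`. -/
def TrivialBrauerKernel (F E : Type u) [Field F] [Field E] [Algebra F E] : Prop :=
  ∀ (C : Type u) [Ring C] [Algebra F C] [Algebra.IsCentral F C] [IsSimpleRing C]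
    [FiniteDimensional F C] (d : ℕ), Module.finrank F C = d ^ 2 →
    (C →ₐ[F] Matrix (Fin d) (Fin d) E) → Nonempty (C →ₐ[F] Matrix (Fin d) (Fin d) F)

variable {F E : Type u} [Field F] [Field E] [Algebra F E]

lemma mul_eq_mul_of_matrix_algEquiv {A B : Type*} [Ring A] [Algebra F A] [Ring B] [Algebra F B]
    {n m a b : ℕ} (hA : Module.finrank F A = a ^ 2) (hB : Module.finrank F B = b ^ 2)
    (φ : Matrix (Fin n) (Fin n) (E ⊗[F] A) ≃ₐ[E] Matrix (Fin m) (Fin m) (E ⊗[F] B)) :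
    n * a = m * b := by
  have := φ.toLinearEquiv.finrank_eq
  simp only [Module.finrank_matrix, Module.finrank_baseChange, hA, hB, Fintype.card_fin] at this
  exact Nat.pow_left_injective (n := 2) two_ne_zero (by linarith)

lemma TrivialBrauerKernel.brauerEquiv (H : TrivialBrauerKernel F E) {A B : Type u}
    [Ring A] [Algebra F A] [Ring B] [Algebra F B] (hA : IsCSA F A) (hB : IsCSA F B)
    (hAB : BrauerEquiv E (E ⊗[F] A) (E ⊗[F] B)) : BrauerEquiv F A B := by
  obtain ⟨_, _, _⟩ := hA
  obtain ⟨_, _, _⟩ := hB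
  obtain ⟨n, m, hn, -, ⟨φ⟩⟩ := hAB
  have : NeZero n := ⟨hn.ne'⟩
  obtain ⟨a, hA, -⟩ := exists_algHom_matrix_of_isSepClosed F A (SeparableClosure F)
  obtain ⟨b, hB, -⟩ := exists_algHom_matrix_of_isSepClosed F B (SeparableClosure F)
  have hab : n * a = m * b := mul_eq_mul_of_matrix_algEquiv hA hB φ
  have hV : Module.finrank E (Fin m → E ⊗[F] B) = n * a * b := by
    simp only [Module.finrank_pi_fintype, Module.finrank_baseChange, hB, hab, Finset.sum_const,
      Finset.card_univ, Fintype.card_fin, smul_eq_mul]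
    ring
  have hC : Module.finrank F (Matrix (Fin n) (Fin n) A ⊗[F] Bᵐᵒᵖ) = (n * a * b) ^ 2 := by
    simp only [Module.finrank_tensorProduct, Module.finrank_matrix, Fintype.card_fin, hA, hB,
      ← (MulOpposite.opLinearEquiv F (M := B)).finrank_eq]
    ring
  have := neZero_of_finrank_eq_sq hC
  let toMatrix := LinearMap.toMatrixAlgEquiv (Module.finBasisOfFinrankEq E _ hV)
  obtain ⟨ρ⟩ := H _ _ hC ((toMatrix.toAlgHom.restrictScalars F).comp (columnAction φ))
  exact .of_algEquiv_matrix hn (Nat.pos_of_neZero _)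
    ((Algebra.TensorProduct.lid F _).symm.trans (splittingEquiv hC ρ))

lemma TrivialBrauerKernel.resInj (H : TrivialBrauerKernel F E) :
    ResInj F E (algebraMap F E) := by
  have H' : @TrivialBrauerKernel F E _ _ (algebraMap F E).toAlgebra := by
    rwa [toAlgebra_algebraMap]
  let : Algebra F E := (algebraMap F E).toAlgebra
  exact fun _ _ _ _ _ _ hA hB hAB => TrivialBrauerKernel.brauerEquiv H' hA hB hAB

end Brauer

section Descent

open Matrix.GeneralLinearGroup (map scalar)
open scoped Matrix Topology

variable {F C K N : Type*} [Field F] [Ring C] [Algebra F C] [Field K] [Algebra F K] [Field N]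
  [Algebra F N] {d : ℕ}

lemma exists_generalLinearGroup_col_mem (W : Set (Fin d → K))
    (hW : ∀ w : Fin d → K, (∀ v ∈ W, w ⬝ᵥ v = 0) → w = 0) :
    ∃ S : GL (Fin d) K, ∀ k, (S : Matrix (Fin d) (Fin d) K).col k ∈ W := by
  have span_eq_top : ⊤ ≤ Submodule.span K W := by
    by_contra hne
    obtain ⟨f, hf, hle⟩ :=
      Submodule.exists_le_ker_of_lt_top _ (lt_top_iff_ne_top.2 fun h => hne h.ge)
    obtain ⟨w, rfl⟩ := (dotProductEquiv K (Fin d)).surjective f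
    exact hf (by rw [hW w fun v hv => hle (Submodule.subset_span hv), map_zero])
  let b₀ := Module.Basis.ofSpan span_eq_top
  let b := b₀.reindex (b₀.indexEquiv (Pi.basisFun K (Fin d)))
  let S := (Pi.basisFun K (Fin d)).toMatrix b
  refine ⟨⟨S, b.toMatrix (Pi.basisFun K (Fin d)), Module.Basis.toMatrix_mul_toMatrix_flip _ _,
    Module.Basis.toMatrix_mul_toMatrix_flip _ _⟩, fun k => ?_⟩
  have hcol : S.col k = b k := by
    ext i
    simp [S, Module.Basis.toMatrix_apply]
  exact hcol ▸ Module.Basis.ofSpan_subset span_eq_top (by simp [b, b₀])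

lemma exists_algHom_matrix_of_fixed {M : IntermediateField F K} {s : Set Gal(K/F)}
    (hs : ∀ k, (∀ σ ∈ s, σ k = k) → k ∈ M) (ρ : C →ₐ[F] Matrix (Fin d) (Fin d) K)
    (S : GL (Fin d) K) (hS : ∀ σ ∈ s, ∃ P : GL (Fin d) K,
      (∀ x, ρ x * P = P * (ρ x).map σ) ∧ P * map (σ : K →+* K) S = S) :
    Nonempty (C →ₐ[F] Matrix (Fin d) (Fin d) M) := by
  let r := (MulSemiringAction.toAlgHom F _ (ConjAct.toConjAct S⁻¹)).comp ρ
  have S_mul_r (x) : S * r x = ρ x * S := by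
    simp [r, ConjAct.units_smul_def, mul_assoc]
  have r_fixed (σ) (hσ : σ ∈ s) (x) : (r x).map σ = r x := by
    obtain ⟨P, hρ, hP⟩ := hS σ hσ
    have hP' : (S : Matrix (Fin d) (Fin d) K) = P * (S : Matrix (Fin d) (Fin d) K).map σ :=
      congrArg Units.val hP.symm
    refine S.isUnit.mul_left_cancel ?_
    calc S * (r x).map σ = P * (S * r x).map σ := by
          rw [Matrix.map_mul, ← mul_assoc, ← hP']
      _ = P * (ρ x).map σ * (S : Matrix (Fin d) (Fin d) K).map σ := by
          rw [S_mul_r, Matrix.map_mul, mul_assoc]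
      _ = S * r x := by rw [← hρ, mul_assoc, ← hP', S_mul_r]
  have r_mem (x) : r x ∈ (M.val.mapMatrix (m := Fin d)).range := by
    have mem (i k) : r x i k ∈ M := hs _ fun σ hσ => congr($(r_fixed σ hσ x) i k)
    exact ⟨Matrix.of fun i k => ⟨r x i k, mem i k⟩, rfl⟩
  have inj : Function.Injective (M.val.mapMatrix (m := Fin d)) :=
    Matrix.map_injective M.val.injective
  exact ⟨(AlgEquiv.ofInjective _ inj).symm.toAlgHom.comp (r.codRestrict _ r_mem)⟩

lemma exists_algEquiv_comp_eq [Normal F N] {L : Type*} [Field L] [Algebra F L]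
    (s t : L →ₐ[F] N) : ∃ g : Gal(N/F), g.toAlgHom.comp s = t := by
  let : Algebra L N := s.toRingHom.toAlgebra
  have : IsScalarTower F L N := .of_algebraMap_eq fun x => (s.commutes x).symm
  exact ⟨.ofBijective (t.liftNormal N) (Algebra.IsAlgebraic.algHom_bijective _),
    AlgHom.ext (t.liftNormal_commutes N)⟩

lemma eventually_map_eq_self [FiniteDimensional F C] [Algebra.IsIntegral F N]
    (ρ : C →ₐ[F] Matrix (Fin d) (Fin d) N) :
    ∀ᶠ u : Gal(N/F) in 𝓝 1, ∀ x, (ρ x).map u = ρ x := by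
  let b := Module.finBasis F C
  have entries_fixed : ∀ᶠ u : Gal(N/F) in 𝓝 1, ∀ k i j, u (ρ (b k) i j) = ρ (b k) i j := by
    simp only [Filter.eventually_all]
    exact fun k i j => (stabilizer_isOpen_of_isIntegral (ρ (b k) i j)).mem_nhds (one_smul _ _)
  filter_upwards [entries_fixed] with u hu x
  have : (u.toAlgHom.mapMatrix.comp ρ).toLinearMap = ρ.toLinearMap :=
    b.ext fun k => Matrix.ext (hu k)
  exact congr($this x)

lemma mulVec_comp_sum_mulVec {L : Type*} [Field L] [Algebra F L] [FiniteDimensional F L]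
    {Q : (L →ₐ[F] N) → GL (Fin d) N} {g : Gal(N/F)} {P : GL (Fin d) N}
    (hQ : ∀ τ, Q (g.toAlgHom.comp τ) = P * map (g : N →+* N) (Q τ)) (v : Fin d → L) :
    P.val *ᵥ (g ∘ ∑ τ, (Q τ).val *ᵥ (τ ∘ v)) = ∑ τ, (Q τ).val *ᵥ (τ ∘ v) := by
  have comp_sum : g ∘ ∑ τ, (Q τ).val *ᵥ (τ ∘ v) =
      ∑ τ : L →ₐ[F] N, (Q τ).val.map g *ᵥ (g ∘ τ ∘ v) := by
    ext k
    simp [Matrix.mulVec, dotProduct]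
  rw [comp_sum, Matrix.mulVec_sum]
  refine Fintype.sum_equiv (AlgEquiv.arrowCongr .refl g) _ _ fun τ => ?_
  have : Q (AlgEquiv.arrowCongr .refl g τ) = P * map (g : N →+* N) (Q τ) := hQ τ
  rw [this, Matrix.mulVec_mulVec]
  rfl

lemma eq_zero_of_dotProduct_sum_mulVec {L : Type*} [Field L] [Algebra F L] [FiniteDimensional F L]
    [Nonempty (L →ₐ[F] N)] (Q : (L →ₐ[F] N) → GL (Fin d) N) {w : Fin d → N}
    (hw : ∀ v : Fin d → L, w ⬝ᵥ ∑ τ, (Q τ).val *ᵥ (τ ∘ v) = 0) : w = 0 := by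
  obtain ⟨τ₀⟩ := ‹Nonempty (L →ₐ[F] N)›
  have vecMul_eq_zero : w ᵥ* (Q τ₀).val = 0 := by
    ext k
    refine Fintype.linearIndependent_iff.1 (linearIndependent_algHom_toLinearMap F L N)
      (fun τ => (w ᵥ* (Q τ).val) k) (LinearMap.ext fun y => ?_) τ₀
    have comp_single (τ : L →ₐ[F] N) : τ ∘ Pi.single k y = Pi.single k (τ y) :=
      funext fun l => Pi.apply_single (fun _ => τ) (fun _ => map_zero τ) k y l
    simpa only [comp_single, dotProduct_sum, Matrix.dotProduct_mulVec, dotProduct_single,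
      LinearMap.coe_sum, Finset.sum_apply, LinearMap.smul_apply, AlgHom.toLinearMap_apply,
      smul_eq_mul, LinearMap.zero_apply] using hw (Pi.single k y)
  simpa using congr($vecMul_eq_zero ᵥ* (Q τ₀)⁻¹.val)

/-- A continuous projective 1-cocycle of `Gal(N/F)` with values in `GL_d(N)`: a cocycle up to the
scalars `c g h`. Continuity is expressed as being trivial near `1`. -/
structure ProjectiveCocycle (F N : Type*) [Field F] [Field N] [Algebra F N] (d : ℕ) where
  P : Gal(N/F) → GL (Fin d) N
  c : Gal(N/F) → Gal(N/F) → Nˣ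
  mul (g h) : P g * map (g : N →+* N) (P h) = scalar (Fin d) (c g h) * P (g * h)
  eventually_eq_one : ∀ᶠ u in 𝓝 1, P u = 1

namespace ProjectiveCocycle

/-- The cocycle `P` describes the semilinear action attached to `ρ`: it conjugates each Galois
conjugate of `ρ` back to `ρ`. -/
def Intertwines (Y : ProjectiveCocycle F N d) (ρ : C →ₐ[F] Matrix (Fin d) (Fin d) N) : Prop :=
  ∀ g x, ρ x * Y.P g = Y.P g * (ρ x).map g

lemma exists_intertwines [Algebra.IsCentral F C] [IsSimpleRing C] [FiniteDimensional F C]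
    [Algebra.IsIntegral F N] (hC : Module.finrank F C = d ^ 2)
    (ρ : C →ₐ[F] Matrix (Fin d) (Fin d) N) :
    ∃ Y : ProjectiveCocycle F N d, Y.Intertwines ρ := by
  have exists_conj (g : Gal(N/F)) : ∃ S : GL (Fin d) N,
      (∀ x, ρ x * S = S * (ρ x).map g) ∧ ((∀ x, (ρ x).map g = ρ x) → S = 1) := by
    by_cases hg : ∀ x, (ρ x).map g = ρ x
    · exact ⟨1, fun x => by simp [hg x], fun _ => rfl⟩
    · obtain ⟨S, hS⟩ := skolem_noether hC ρ (g.toAlgHom.mapMatrix.comp ρ)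
      exact ⟨S, hS, fun h => absurd h hg⟩
  choose P hP hP1 using exists_conj
  have mul_conj (g h : Gal(N/F)) (x) : ρ x * (P g * map (g : N →+* N) (P h)).val =
      (P g * map (g : N →+* N) (P h)).val * (ρ x).map ↑(g * h) := by
    have hPh : (ρ x).map g * (P h).val.map g = (P h).val.map g * ((ρ x).map h).map g := by
      simpa only [Matrix.map_mul] using congr(($(hP h x)).map g)
    change ρ x * (P g * (P h).val.map g) = P g * (P h).val.map g * _
    rw [← mul_assoc, hP, mul_assoc, hPh, mul_assoc]
    rfl
  choose c hc using fun g h =>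
    exists_eq_scalar_mul hC ρ ((g * h).toAlgHom.mapMatrix.comp ρ) (mul_conj g h) (hP (g * h))
  exact ⟨⟨P, c, hc, (eventually_map_eq_self ρ).mono hP1⟩, hP⟩

lemma exists_equivariant [IsGalois F N] (Y : ProjectiveCocycle F N d) (hc : ∀ g h, Y.c g h = 1) :
    ∃ (L : IntermediateField F N) (_ : FiniteDimensional F L) (Q : (L →ₐ[F] N) → GL (Fin d) N),
      ∀ (g : Gal(N/F)) τ, Q (g.toAlgHom.comp τ) = Y.P g * map (g : N →+* N) (Q τ) := by
  have mul (g h) : Y.P g * map (g : N →+* N) (Y.P h) = Y.P (g * h) := by simp [Y.mul, hc]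
  obtain ⟨L, hL, hLP⟩ := (krullTopology_mem_nhds_one_iff F N _).1 Y.eventually_eq_one
  have P_congr {g h : Gal(N/F)} (hgh : ∀ x : L, g x = h x) : Y.P g = Y.P h := by
    have : Y.P (g⁻¹ * h) = 1 := hLP <| (IntermediateField.mem_fixingSubgroup_iff _ _).2
      fun x hx => (AlgEquiv.symm_apply_eq _).2 (hgh ⟨x, hx⟩).symm
    simpa [this] using mul g (g⁻¹ * h)
  choose lift hlift using exists_algEquiv_comp_eq L.val
  refine ⟨L, hL, fun τ => Y.P (lift τ), fun g τ => ?_⟩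
  rw [mul]
  refine P_congr fun x => ?_
  have h₁ := congr($(hlift τ) x)
  have h₂ := congr($(hlift (g.toAlgHom.comp τ)) x)
  exact h₂.trans congr(g $h₁.symm)

lemma descent [IsGalois F N] (Y : ProjectiveCocycle F N d) {ρ : C →ₐ[F] Matrix (Fin d) (Fin d) N}
    (hY : Y.Intertwines ρ) (hc : ∀ g h, Y.c g h = 1) :
    Nonempty (C →ₐ[F] Matrix (Fin d) (Fin d) F) := by
  obtain ⟨L, _, Q, hQ⟩ := Y.exists_equivariant hc
  have : Nonempty (L →ₐ[F] N) := ⟨L.val⟩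
  obtain ⟨S, hS⟩ := exists_generalLinearGroup_col_mem
    (Set.range fun v : Fin d → L => ∑ τ, (Q τ).val *ᵥ (τ ∘ v)) fun w hw =>
      eq_zero_of_dotProduct_sum_mulVec Q fun v => hw _ ⟨v, rfl⟩
  have hPS (g : Gal(N/F)) : Y.P g * map (g : N →+* N) S = S := by
    ext i k
    obtain ⟨v, hv⟩ := hS k
    have := mulVec_comp_sum_mulVec (hQ g) v
    simp only at hv
    rw [hv] at this
    exact congr($this i)
  obtain ⟨r⟩ := exists_algHom_matrix_of_fixed (M := ⊥) (s := Set.univ)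
    (fun k hk => (InfiniteGalois.mem_bot_iff_fixed k).2 fun g => hk g trivial) ρ S
    fun g _ => ⟨Y.P g, hY g, hPS g⟩
  exact ⟨(IntermediateField.botEquiv F N).toAlgHom.mapMatrix.comp r⟩

end ProjectiveCocycle

end Descent

section Twist

open MvPolynomial
open Matrix.GeneralLinearGroup (map scalar)
open scoped Topology

variable {F N : Type*} [Field F] [Field N] [Algebra F N] {I : Type*} {T : I → Type*} {d : I → ℕ}
  [∀ q, MulAction Gal(N/F) (T q)]

variable (N T d) in
/-- The coordinate ring of the product of affine `d q`-spaces indexed by the points `t : T q`. -/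
abbrev CoordRing := MvPolynomial (Σ q, T q × Fin (d q)) N

variable (N T d) in
/-- The fraction field of `CoordRing N T d`. -/
abbrev CoordField := FractionRing (CoordRing N T d)

lemma ProjectiveCocycle.scalar_mul {n : ℕ} (Y : ProjectiveCocycle F N n) (a b : Nˣ) (g h) :
    scalar (Fin n) a * Y.P g * map (g : N →+* N) (scalar (Fin n) b * Y.P h) =
      scalar (Fin n) (a * Units.map (g : N →* N) b * Y.c g h) * Y.P (g * h) := by
  have comm := Matrix.GeneralLinearGroup.scalar_commute (n := Fin n) (Units.map (g : N →* N) b)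
    (Y.P g)
  calc scalar (Fin n) a * Y.P g * map (g : N →+* N) (scalar (Fin n) b * Y.P h)
    _ = scalar (Fin n) a * (Y.P g * scalar (Fin n) (Units.map (g : N →* N) b)) *
        map (g : N →+* N) (Y.P h) := by
      rw [map_mul, Matrix.GeneralLinearGroup.map_scalar]
      simp only [mul_assoc]
      rfl
    _ = scalar (Fin n) (a * Units.map (g : N →* N) b * Y.c g h) * Y.P (g * h) := by
      rw [← comm, map_mul, map_mul, mul_assoc _ (scalar _ _), ← Y.mul g h]
      simp only [mul_assoc]

@[simp]
lemma ProjectiveCocycle.P_one {n : ℕ} (Y : ProjectiveCocycle F N n) : Y.P 1 = 1 :=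
  Y.eventually_eq_one.self_of_nhds

/-- The semilinear substitution `X_t ↦ A_t⁻¹ X_{g t}` of the coordinate vectors
`X_t = (X_{t,1}, …, X_{t,d})`, acting as `g` on the coefficients. -/
noncomputable def semilinearSubst (g : Gal(N/F)) (A : ∀ q, T q → GL (Fin (d q)) N) :
    CoordRing N T d →ₐ[F] CoordRing N T d :=
  ((aeval fun v => ∑ l, C ((A v.1 v.2.1)⁻¹.val v.2.2 l) * X ⟨v.1, g • v.2.1, l⟩ :
    _ →ₐ[N] CoordRing N T d).restrictScalars F).comp
      (mapAlgHom (g : N →ₐ[F] N))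

@[simp]
lemma semilinearSubst_C (g : Gal(N/F)) (A : ∀ q, T q → GL (Fin (d q)) N) (z : N) :
    semilinearSubst g A (C z) = C (g z) := by
  simp [semilinearSubst, algebraMap_eq]

lemma semilinearSubst_X (g : Gal(N/F)) (A : ∀ q, T q → GL (Fin (d q)) N) (q) (t : T q) (k) :
    semilinearSubst g A (X ⟨q, t, k⟩) = ∑ l, C ((A q t)⁻¹.val k l) * X ⟨q, g • t, l⟩ := by
  simp [semilinearSubst]

lemma semilinearSubst_comp (g h : Gal(N/F)) (A A' : ∀ q, T q → GL (Fin (d q)) N) :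
    (semilinearSubst g A).comp (semilinearSubst h A') =
      semilinearSubst (g * h) fun q t => A q (h • t) * map (g : N →+* N) (A' q t) := by
  refine AlgHom.coe_ringHom_injective (ringHom_ext (fun z => by simp) ?_)
  rintro ⟨q, t, k⟩
  have : ((A q (h • t) * map (g : N →+* N) (A' q t))⁻¹ : GL (Fin (d q)) N) =
      map (g : N →+* N) (A' q t)⁻¹ * (A q (h • t))⁻¹ := by simp
  simp only [AlgHom.coe_comp, Function.comp_apply, RingHom.coe_coe, semilinearSubst_X, map_sum,
    map_mul, semilinearSubst_C, this, Units.val_mul, Matrix.mul_apply, Finset.sum_mul,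
    Finset.mul_sum, mul_smul, ← mul_assoc]
  exact Finset.sum_comm

lemma semilinearSubst_one :
    semilinearSubst (1 : Gal(N/F)) (fun q (_ : T q) => (1 : GL (Fin (d q)) N)) = .id F _ := by
  refine AlgHom.coe_ringHom_injective (ringHom_ext (fun z => by simp) ?_)
  rintro ⟨q, t, k⟩
  simp [semilinearSubst_X, Matrix.one_apply]

/-- The automorphism `semilinearSubst g A`. -/
noncomputable def semilinearAut (g : Gal(N/F)) (A : ∀ q, T q → GL (Fin (d q)) N) :
    CoordRing N T d ≃ₐ[F] CoordRing N T d :=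
  have map_map_inv (q) (M : GL (Fin (d q)) N) :
      map (g : N →+* N) (map ((g⁻¹ : Gal(N/F)) : N →+* N) M) = M := by
    ext i j
    exact g.apply_symm_apply (M.val i j)
  .ofAlgHom (semilinearSubst g A)
    (semilinearSubst g⁻¹ fun q t => map ((g⁻¹ : Gal(N/F)) : N →+* N) (A q (g⁻¹ • t))⁻¹)
    (by simp only [semilinearSubst_comp, mul_inv_cancel, map_map_inv, semilinearSubst_one])
    (by simp only [semilinearSubst_comp, inv_mul_cancel, inv_smul_smul, map_inv,
      semilinearSubst_one])

variable (Y : ∀ q, ProjectiveCocycle F N (d q))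

/-- The action of `g` on the coordinate ring twisted by the cocycles `Y`, followed by the torus
scaling `X_t ↦ a_t⁻¹ X_t`. -/
noncomputable def twist (a : ∀ q, T q → Nˣ) (g : Gal(N/F)) : Gal(CoordRing N T d/F) :=
  semilinearAut g fun q t => scalar (Fin (d q)) (a q t) * (Y q).P g

lemma twist_apply (a : ∀ q, T q → Nˣ) (g : Gal(N/F)) (f : CoordRing N T d) : twist Y a g f =
    semilinearSubst g (fun q t => scalar (Fin (d q)) (a q t) * (Y q).P g) f :=
  rfl

@[simp]
lemma twist_C (a : ∀ q, T q → Nˣ) (g : Gal(N/F)) (z : N) :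
    twist (d := d) Y a g (C z) = C (g z) := by
  rw [twist_apply, semilinearSubst_C]

lemma twist_mul (a b : ∀ q, T q → Nˣ) (g h : Gal(N/F)) : twist Y a g * twist Y b h =
    twist Y (fun q t => a q (h • t) * Units.map (g : N →* N) (b q t) * (Y q).c g h) (g * h) := by
  refine AlgEquiv.ext fun f => ?_
  rw [AlgEquiv.mul_apply, twist_apply, twist_apply, twist_apply, ← AlgHom.comp_apply,
    semilinearSubst_comp]
  simp only [ProjectiveCocycle.scalar_mul]

lemma twist_one : twist (T := T) Y 1 1 = 1 := by
  refine AlgEquiv.ext fun f => ?_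
  simp [twist_apply, semilinearSubst_one]

lemma twist_X (a : ∀ q, T q → Nˣ) (g : Gal(N/F)) (q) (t : T q) (k) :
    twist Y a g (X ⟨q, t, k⟩) =
      ∑ l, C (((a q t)⁻¹ : N) * ((Y q).P g)⁻¹.val k l) * X ⟨q, g • t, l⟩ := by
  have entry (l) : (scalar (Fin (d q)) (a q t) * (Y q).P g)⁻¹.val k l =
      ((a q t)⁻¹ : N) * ((Y q).P g)⁻¹.val k l := by
    rw [mul_inv_rev, ← map_inv, ← Matrix.GeneralLinearGroup.scalar_commute, Units.val_mul,
      Matrix.GeneralLinearGroup.coe_scalar, Matrix.scalar_apply, Matrix.diagonal_mul,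
      Units.val_inv_eq_inv_val]
  simp only [twist_apply, semilinearSubst_X, entry]

lemma coeff_twist_one (a : ∀ q, T q → Nˣ) (f : CoordRing N T d) (m) :
    coeff m (twist Y a 1 f) = (m.prod fun v n => ((a v.1 v.2.1)⁻¹ : N) ^ n) * coeff m f := by
  have twist_one_X (v) : twist Y a 1 (X v) = C ((a v.1 v.2.1)⁻¹ : N) * X v := by
    obtain ⟨q, t, k⟩ := v
    simp [twist_X, Matrix.one_apply, apply_ite C]
  induction f using MvPolynomial.induction_on' with
  | monomial m' r =>
    have : twist Y a 1 (monomial m' r) =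
        monomial m' ((m'.prod fun v n => ((a v.1 v.2.1)⁻¹ : N) ^ n) * r) := by
      simp only [monomial_eq, map_mul, Finsupp.prod, map_prod, map_pow, twist_C, twist_one_X,
        mul_pow, Finset.prod_mul_distrib, AlgEquiv.one_apply]
      ring
    classical
    rw [this, coeff_monomial, coeff_monomial]
    split_ifs with h <;> simp [h]
  | add f g hf hg => simp [hf, hg, mul_add]

lemma eventually_twist_eq_self [Algebra.IsIntegral F N]
    (hT : ∀ q (t : T q), ∀ᶠ u : Gal(N/F) in 𝓝 1, u • t = t) (f : CoordRing N T d) :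
    ∀ᶠ u in 𝓝 1, twist Y 1 u f = f := by
  induction f using MvPolynomial.induction_on with
  | C z =>
    have : ∀ᶠ u : Gal(N/F) in 𝓝 1, u z = z :=
      (stabilizer_isOpen_of_isIntegral z).mem_nhds (one_smul _ _)
    filter_upwards [this] with u hu
    rw [twist_C, hu]
  | add f f' hf hf' =>
    filter_upwards [hf, hf'] with u hu hu'
    rw [map_add, hu, hu']
  | mul_X f v hf =>
    filter_upwards [hf, (Y v.1).eventually_eq_one, hT v.1 v.2.1] with u hu hP ht
    obtain ⟨q, t, k⟩ := v
    simp_all [twist_X, Matrix.one_apply]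

/-- The extension of `twist` to the field of rational functions. -/
noncomputable def fieldTwist (a : ∀ q, T q → Nˣ) (g : Gal(N/F)) : Gal(CoordField N T d/F) :=
  IsFractionRing.fieldEquivOfAlgEquivHom F _ (twist Y a g)

@[simp]
lemma fieldTwist_algebraMap (a : ∀ q, T q → Nˣ) (g : Gal(N/F)) (f : CoordRing N T d) :
    fieldTwist Y a g (algebraMap _ (CoordField N T d) f) = algebraMap _ _ (twist Y a g f) :=
  IsFractionRing.fieldEquivOfAlgEquiv_algebraMap _ _ _ _ f

@[simp]
lemma fieldTwist_algebraMap_base (a : ∀ q, T q → Nˣ) (g : Gal(N/F)) (z : N) :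
    fieldTwist Y a g (algebraMap N (CoordField N T d) z) = algebraMap N _ (g z) := by
  simp [IsScalarTower.algebraMap_apply N (CoordRing N T d), algebraMap_eq]

lemma fieldTwist_mul (a b : ∀ q, T q → Nˣ) (g h : Gal(N/F)) :
    fieldTwist Y a g * fieldTwist Y b h = fieldTwist Y
      (fun q t => a q (h • t) * Units.map (g : N →* N) (b q t) * (Y q).c g h) (g * h) := by
  rw [fieldTwist, fieldTwist, ← map_mul, twist_mul, fieldTwist]

lemma fieldTwist_one : fieldTwist (T := T) Y 1 1 = 1 := by
  rw [fieldTwist, twist_one, map_one]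

/-- The group of all twisted actions. Its fixed field is the function field of the product of the
twisted forms by `Y` of the products of projective spaces indexed by `T q`. -/
def twistGroup : Subgroup Gal(CoordField N T d/F) where
  carrier := {σ | ∃ a g, fieldTwist Y a g = σ}
  mul_mem' := by
    rintro _ _ ⟨a, g, rfl⟩ ⟨b, h, rfl⟩
    exact ⟨_, _, (fieldTwist_mul Y a b g h).symm⟩
  one_mem' := ⟨1, 1, fieldTwist_one Y⟩
  inv_mem' := by
    rintro _ ⟨a, g, rfl⟩
    refine ⟨fun q t => (Units.map ((g⁻¹ : Gal(N/F)) : N →* N) (a q (g⁻¹ • t)) *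
      (Y q).c g⁻¹ g)⁻¹, g⁻¹, eq_inv_of_mul_eq_one_left ?_⟩
    rw [fieldTwist_mul, inv_mul_cancel, ← fieldTwist_one Y]
    congr
    funext q t
    simp [mul_assoc]

end Twist

section SplittingVector

open Matrix.GeneralLinearGroup (map scalar)
open scoped Matrix

variable {F C K : Type*} [Field F] [Ring C] [Algebra F C] [Field K] [Algebra F K] {d : ℕ}
  [Algebra.IsCentral F C] [IsSimpleRing C] [FiniteDimensional F C]

lemma eq_zero_of_dotProduct_mulVec (hC : Module.finrank F C = d ^ 2)
    (ρ : C →ₐ[F] Matrix (Fin d) (Fin d) K) {v w : Fin d → K} (hv : v ≠ 0)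
    (hw : ∀ x, w ⬝ᵥ ρ x *ᵥ v = 0) : w = 0 := by
  have key (A : Matrix (Fin d) (Fin d) K) : w ⬝ᵥ A *ᵥ v = 0 := by
    obtain ⟨z, rfl⟩ := (splittingEquiv hC ρ).surjective A
    induction z with
    | zero => simp
    | tmul k x => simp [Matrix.smul_mulVec, hw]
    | add x y hx hy => simp [Matrix.add_mulVec, hx, hy]
  obtain ⟨i, hi⟩ := Function.ne_iff.1 hv
  ext j
  simpa [Matrix.single_mulVec_eq, show v i ≠ 0 from hi] using key (Matrix.single j i 1)

lemma exists_algHom_matrix_of_fixed_vector {M : IntermediateField F K} {s : Set Gal(K/F)}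
    (hs : ∀ k, (∀ σ ∈ s, σ k = k) → k ∈ M) (hC : Module.finrank F C = d ^ 2)
    (ρ : C →ₐ[F] Matrix (Fin d) (Fin d) K) {v : Fin d → K} (hv : v ≠ 0)
    (hP : ∀ σ ∈ s, ∃ P : GL (Fin d) K,
      (∀ x, ρ x * P = P * (ρ x).map σ) ∧ P.val *ᵥ (σ ∘ v) = v) :
    Nonempty (C →ₐ[F] Matrix (Fin d) (Fin d) M) := by
  obtain ⟨S, hS⟩ := exists_generalLinearGroup_col_mem (Set.range fun x => ρ x *ᵥ v)
    fun w hw => eq_zero_of_dotProduct_mulVec hC ρ hv fun x => hw _ ⟨x, rfl⟩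
  refine exists_algHom_matrix_of_fixed hs ρ S fun σ hσ => ?_
  obtain ⟨P, hρ, hPv⟩ := hP σ hσ
  refine ⟨P, hρ, ?_⟩
  ext i k
  obtain ⟨x, hx⟩ := hS k
  have map_col : (map (σ : K →+* K) S).val.col k = (ρ x).map σ *ᵥ (σ ∘ v) := by
    change σ ∘ S.val.col k = _
    rw [← hx]
    ext i
    simp [Matrix.mulVec, dotProduct]
  calc (P * map (σ : K →+* K) S).val i k = (P.val *ᵥ (map (σ : K →+* K) S).val.col k) i := rfl
    _ = (ρ x *ᵥ (P.val *ᵥ (σ ∘ v))) i := by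
      rw [map_col, Matrix.mulVec_mulVec, Matrix.mulVec_mulVec, hρ]
    _ = S i k := by
      rw [hPv]
      exact congr($hx i)

end SplittingVector

section SplittingField

open Matrix.GeneralLinearGroup (map scalar)
open scoped Matrix

variable {F N : Type*} [Field F] [Field N] [Algebra F N] {I : Type*} {T : I → Type*} {d : I → ℕ}
  [∀ q, MulAction Gal(N/F) (T q)] (Y : ∀ q, ProjectiveCocycle F N (d q))

open MvPolynomial in
lemma mulVec_fieldTwist_X (a : ∀ q, T q → Nˣ) (g : Gal(N/F)) {q} (t : T q) :
    (map (algebraMap N (CoordField N T d)) (scalar (Fin (d q)) (a q t) * (Y q).P g)).val *ᵥ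
      (fieldTwist Y a g ∘ fun k => algebraMap (CoordRing N T d) _ (X ⟨q, t, k⟩)) =
        fun k => algebraMap (CoordRing N T d) _ (X ⟨q, g • t, k⟩) := by
  have : (fieldTwist Y a g ∘ fun k => algebraMap (CoordRing N T d) _ (X ⟨q, t, k⟩)) =
      (map (algebraMap N (CoordField N T d)) (scalar (Fin (d q)) (a q t) * (Y q).P g))⁻¹.val *ᵥ
        fun k => algebraMap (CoordRing N T d) _ (X ⟨q, g • t, k⟩) := by
    ext k
    rw [← map_inv]
    simp only [Function.comp_apply, fieldTwist_algebraMap, twist_apply, semilinearSubst_X, map_sum,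
      map_mul, Matrix.mulVec, dotProduct]
    rfl
  rw [this, Matrix.mulVec_mulVec, Units.mul_inv, Matrix.one_mulVec]

lemma ProjectiveCocycle.Intertwines.scalar_mul {C : Type*} [Ring C] [Algebra F C] {n : ℕ}
    {Y : ProjectiveCocycle F N n} {ρ : C →ₐ[F] Matrix (Fin n) (Fin n) N} (hY : Y.Intertwines ρ)
    (a : Nˣ) (g : Gal(N/F)) (x) :
    ρ x * (scalar (Fin n) a * Y.P g).val = (scalar (Fin n) a * Y.P g).val * (ρ x).map g := by
  rw [Units.val_mul, mul_assoc, ← hY, ← mul_assoc, ← mul_assoc,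
    Matrix.GeneralLinearGroup.coe_scalar, (Matrix.scalar_commute _ (Commute.all _) _).eq]

open MvPolynomial in
lemma exists_algHom_matrix_of_twistGroup {C : Type*} [Ring C] [Algebra F C]
    [Algebra.IsCentral F C] [IsSimpleRing C] [FiniteDimensional F C] {q : I}
    (hC : Module.finrank F C = d q ^ 2) {ρ : C →ₐ[F] Matrix (Fin (d q)) (Fin (d q)) N}
    (hρ : (Y q).Intertwines ρ) (t : T q) {M : IntermediateField F (CoordField N T d)}
    (hM : ∀ f, (∀ a g, g • t = t → fieldTwist Y a g f = f) → f ∈ M) :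
    Nonempty (C →ₐ[F] Matrix (Fin (d q)) (Fin (d q)) M) := by
  let ν : N →ₐ[F] CoordField N T d := IsScalarTower.toAlgHom F N _
  have := neZero_of_finrank_eq_sq hC
  refine exists_algHom_matrix_of_fixed_vector
    (s := {σ | ∃ a g, g • t = t ∧ fieldTwist Y a g = σ})
    (fun f hf => hM f fun a g hg => hf _ ⟨a, g, hg, rfl⟩) hC (ν.mapMatrix.comp ρ)
    (v := fun k => algebraMap (CoordRing N T d) _ (X ⟨q, t, k⟩)) ?_ ?_
  · intro hv
    have := congr($hv 0)
    simp [X_ne_zero] at this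
  · rintro _ ⟨a, g, hg, rfl⟩
    refine ⟨map ν (scalar (Fin (d q)) (a q t) * (Y q).P g), fun x => ?_, ?_⟩
    · have fieldTwist_map : ((ρ x).map ν).map (fieldTwist Y a g) = ((ρ x).map g).map ν := by
        ext i k
        exact fieldTwist_algebraMap_base Y a g (ρ x i k)
      have := congr(($(hρ.scalar_mul (a q t) g x)).map ν)
      rw [Matrix.map_mul, Matrix.map_mul, ← fieldTwist_map] at this
      exact this
    · have := mulVec_fieldTwist_X Y a g t
      rwa [hg] at this

end SplittingField

section Compositum

open IntermediateField

lemma mem_adjoin_of_fixed {F K L : Type*} [Field F] [Field K] [Algebra F K] [Field L] [Algebra F L]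
    [FiniteDimensional F L] [Algebra.IsSeparable F L] (Γ : Subgroup Gal(K/F)) (s : L →ₐ[F] K)
    {f : K} (hf : ∀ σ ∈ Γ, (∀ x, σ (s x) = s x) → σ f = f) :
    f ∈ adjoin (fixedField Γ) (Set.range s) := by
  classical
  let b := Field.powerBasisOfFiniteOfSeparable F L
  let conj (σ : Γ) : L →ₐ[F] K := σ.1.toAlgHom.comp s
  have exists_value : ∃ r : (L →ₐ[F] K) → K, ∀ σ : Γ, r (conj σ) = σ.1 f := by
    refine ⟨_, Function.FactorsThrough.extend_apply (g := fun σ : Γ => σ.1 f) (fun σ τ h => ?_)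
      fun _ => 0⟩
    have := hf (σ⁻¹ * τ).1 (σ⁻¹ * τ).2 fun x =>
      (AlgEquiv.symm_apply_eq σ.1).2 congr($h.symm x)
    exact ((AlgEquiv.symm_apply_eq σ.1).1 this).symm
  obtain ⟨r, hr⟩ := exists_value
  have node_inj : Function.Injective fun τ : L →ₐ[F] K => τ b.gen :=
    fun τ τ' h => b.algHom_ext h
  let O := (Set.range conj).toFinset
  -- `Γ` permutes the interpolation data of `q`, so it fixes the coefficients of `q`.
  let q := Lagrange.interpolate O (fun τ => τ b.gen) r
  have eval_q (σ : Γ) : q.eval (σ.1 (s b.gen)) = σ.1 f := by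
    rw [← hr]
    exact Lagrange.eval_interpolate_at_node r node_inj.injOn (i := conj σ) (by simp [O])
  have q_fixed (σ : Γ) : q.map (σ.1 : K →+* K) = q := by
    refine Lagrange.eq_interpolate_of_eval_eq r node_inj.injOn ?_ fun τ hτ => ?_
    · rw [Polynomial.degree_map]
      exact Lagrange.degree_interpolate_lt r node_inj.injOn
    · obtain ⟨τ, rfl⟩ := Set.mem_toFinset.1 hτ
      have : (conj τ) b.gen = (σ.1 : K →+* K) ((σ⁻¹ * τ).1 (s b.gen)) := by simp [conj]
      rw [hr, this, Polynomial.eval_map_apply, eval_q]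
      simp
  have hq : q.eval (s b.gen) = f := eval_q 1
  rw [← hq, Polynomial.eval_eq_sum]
  refine sum_mem fun n _ => mul_mem ?_ (pow_mem (subset_adjoin _ _ (Set.mem_range_self b.gen)) n)
  have coeff_mem : q.coeff n ∈ fixedField Γ := (mem_fixedField_iff _ _).2 fun σ hσ => by
    simpa using congr(($(q_fixed ⟨σ, hσ⟩)).coeff n)
  exact IntermediateField.algebraMap_mem _ (⟨q.coeff n, coeff_mem⟩ : fixedField Γ)

end Compositum

section PrimitiveVector

variable {ι Q K : Type*} [CommRing Q] [Field K] [Algebra Q K] [IsFractionRing Q K]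

/-- A family in a commutative ring is primitive if its only common divisors are the units. -/
def IsPrimitiveVector (v : ι → Q) : Prop :=
  ∀ z, (∀ i, z ∣ v i) → IsUnit z

lemma exists_isPrimitiveVector [IsDomain Q] [UniqueFactorizationMonoid Q] [Finite ι] {w : ι → K}
    (hw : w ≠ 0) : ∃ (z : Kˣ) (v : ι → Q), IsPrimitiveVector v ∧
      ∀ i, z * w i = algebraMap Q K (v i) := by
  classical
  have := Fintype.ofFinite ι
  let : StrongNormalizationMonoid Q := UniqueFactorizationMonoid.strongNormalizationMonoid
  let : NormalizedGCDMonoid Q := UniqueFactorizationMonoid.toNormalizedGCDMonoid Q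
  obtain ⟨i₀, hi₀⟩ := Function.ne_iff.1 hw
  obtain ⟨b, hb⟩ := IsLocalization.exist_integer_multiples (nonZeroDivisors Q) Finset.univ w
  choose f hf using fun i => hb i (Finset.mem_univ i)
  simp only [Algebra.smul_def] at hf
  have hb₀ : algebraMap Q K b ≠ 0 := IsFractionRing.to_map_ne_zero_of_mem_nonZeroDivisors b.2
  obtain ⟨v, hv, gcd_eq_one⟩ := Finset.extract_gcd f ⟨i₀, Finset.mem_univ i₀⟩
  have hgcd : algebraMap Q K (Finset.univ.gcd f) ≠ 0 := by
    intro h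
    have := hf i₀
    rw [hv i₀ (Finset.mem_univ i₀), map_mul, h, zero_mul] at this
    exact mul_ne_zero hb₀ hi₀ this.symm
  refine ⟨(Units.mk0 _ hgcd)⁻¹ * Units.mk0 _ hb₀, v, fun z hz => ?_, fun i => ?_⟩
  · exact isUnit_of_dvd_one (gcd_eq_one ▸ Finset.dvd_gcd fun i _ => hz i)
  · rw [Units.val_mul, mul_assoc, Units.val_inv_eq_inv_val, Units.val_mk0, Units.val_mk0, ← hf,
      hv i (Finset.mem_univ i), map_mul, inv_mul_cancel_left₀ hgcd]

lemma IsPrimitiveVector.exists_unit_of_smul_eq [IsDomain Q] [UniqueFactorizationMonoid Q]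
    {v w : ι → Q} (hv : IsPrimitiveVector v) (hw : IsPrimitiveVector w) {z : K}
    (h : ∀ i, algebraMap Q K (w i) = z * algebraMap Q K (v i)) :
    ∃ u : Qˣ, algebraMap Q K u = z := by
  obtain ⟨n, m, hnm, rfl⟩ := IsFractionRing.exists_reduced_fraction (A := Q) z
  have cross (i) : (m : Q) * w i = n * v i := IsFractionRing.injective Q K <| by
    rw [map_mul, map_mul, h i, ← mul_assoc, mul_comm (algebraMap Q K m),
      IsLocalization.mk'_spec]
  obtain ⟨m', hm'⟩ : IsUnit (m : Q) := hv _ fun i =>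
    hnm.symm.dvd_of_dvd_mul_left (Dvd.intro _ (cross i))
  obtain ⟨n', hn'⟩ : IsUnit n := hw _ fun i => hnm.dvd_of_dvd_mul_left (Dvd.intro _ (cross i).symm)
  refine ⟨n' * m'⁻¹, ?_⟩
  rw [IsLocalization.eq_mk'_iff_mul_eq, ← map_mul, ← hm', ← hn']
  simp

end PrimitiveVector

section AutomorphyFactor

open Matrix.GeneralLinearGroup (map scalar)
open scoped Topology

variable {F N : Type*} [Field F] [Field N] [Algebra F N]

namespace ProjectiveCocycle

variable {n : ℕ} (Y : ProjectiveCocycle F N n)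

lemma eq_one_of_scalar_eq_one [NeZero n] {z : Nˣ} (hz : scalar (Fin n) z = 1) : z = 1 :=
  Units.ext (by simpa using congr($hz 0 0))

@[simp]
lemma c_one_left [NeZero n] (g : Gal(N/F)) : Y.c 1 g = 1 := by
  refine eq_one_of_scalar_eq_one (n := n) (mul_eq_right.1 ((Y.mul 1 g).symm.trans ?_))
  rw [P_one, one_mul, one_mul]
  rfl

@[simp]
lemma c_one_right [NeZero n] (g : Gal(N/F)) : Y.c g 1 = 1 := by
  refine eq_one_of_scalar_eq_one (n := n) (mul_eq_right.1 ((Y.mul g 1).symm.trans ?_))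
  rw [P_one, map_one, mul_one, mul_one]

lemma det_mul (g h : Gal(N/F)) : (Y.P g).det * Units.map (g : N →* N) (Y.P h).det =
    Y.c g h ^ n * (Y.P (g * h)).det := by
  have := congr(($(Y.mul g h)).det)
  rw [map_mul, map_mul, Matrix.GeneralLinearGroup.map_det, Matrix.GeneralLinearGroup.det_scalar,
    Fintype.card_fin] at this
  exact this

lemma descent_of_coboundary [IsGalois F N] {C : Type*} [Ring C] [Algebra F C]
    {ρ : C →ₐ[F] Matrix (Fin n) (Fin n) N} (hY : Y.Intertwines ρ) {κ : Gal(N/F) → Nˣ}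
    (hκ : ∀ g h, κ g * Units.map (g : N →* N) (κ h) = Y.c g h * κ (g * h))
    (hκ_one : ∀ᶠ u in 𝓝 1, κ u = 1) : Nonempty (C →ₐ[F] Matrix (Fin n) (Fin n) F) := by
  let Y' : ProjectiveCocycle F N n :=
    { P := fun g => scalar (Fin n) (κ g)⁻¹ * Y.P g
      c := 1
      mul := fun g h => by
        rw [Y.scalar_mul, Pi.one_apply, Pi.one_apply, map_one, one_mul, map_inv, ← mul_inv, hκ,
          mul_inv, mul_right_comm, inv_mul_cancel, one_mul]
      eventually_eq_one := by
        filter_upwards [hκ_one, Y.eventually_eq_one] with u hu hu'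
        simp [hu, hu'] }
  exact Y'.descent (fun g => hY.scalar_mul _ g) fun _ _ => rfl

end ProjectiveCocycle

lemma mapDomain_sigma_fst_apply {α M : Type*} {β : α → Type*} [AddCommMonoid M] (a : α)
    [Fintype (β a)] (e : (Σ a, β a) →₀ M) : e.mapDomain Sigma.fst a = ∑ b, e ⟨a, b⟩ := by
  induction e using Finsupp.induction_linear with
  | zero => simp
  | add e e' h h' => simp [Finsupp.mapDomain_add, h, h', Finset.sum_add_distrib]
  | single v m =>
    classical
    obtain ⟨a', b⟩ := v
    rcases eq_or_ne a' a with rfl | h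
    · simp [Finsupp.single_apply]
    · simp [h]

lemma eq_of_forall_units_pow_eq [Infinite N] {a b : ℕ} (h : ∀ z : Nˣ, z ^ a = z ^ b) : a = b := by
  have : (Polynomial.X ^ (a + 1) : Polynomial N) = Polynomial.X ^ (b + 1) :=
    Polynomial.funext fun z => by
      rcases eq_or_ne z 0 with rfl | hz
      · simp
      · simpa [pow_succ] using congr($(h (.mk0 z hz)).val * z)
  simpa using congr(($this).natDegree)

variable {I : Type*} {T : I → Type*} {d : I → ℕ} [∀ q, MulAction Gal(N/F) (T q)] {n : ℕ}

/-- The multipliers `l a g` by which an invertible matrix is scaled under the semilinear operators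
`S ↦ W_g · twist Y a g S`. -/
def IsAutomorphyFactor (Y : ∀ q, ProjectiveCocycle F N (d q)) (W : ProjectiveCocycle F N n)
    (l : (∀ q, T q → Nˣ) → Gal(N/F) → Nˣ) : Prop :=
  ∀ a b g h, l a g * Units.map (g : N →* N) (l b h) = W.c g h *
    l (fun q t => a q (h • t) * Units.map (g : N →* N) (b q t) * (Y q).c g h) (g * h)

namespace IsAutomorphyFactor

variable {Y : ∀ q, ProjectiveCocycle F N (d q)} {W : ProjectiveCocycle F N n}
  {l : (∀ q, T q → Nˣ) → Gal(N/F) → Nˣ} [NeZero n] [∀ q, NeZero (d q)]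

lemma apply_one_mul (hl : IsAutomorphyFactor Y W l) (a g) :
    l a 1 * l 1 g = l (fun q t => a q (g • t)) g := by
  have := hl a 1 1 g
  simp only [Pi.one_apply, map_one, mul_one, one_mul, ProjectiveCocycle.c_one_left] at this
  exact this

lemma mul_map_apply_one (hl : IsAutomorphyFactor Y W l) (b g) :
    l 1 g * Units.map (g : N →* N) (l b 1) = l (fun q t => Units.map (g : N →* N) (b q t)) g := by
  simpa using hl 1 b g 1

lemma exponent_smul [Infinite N] (hl : IsAutomorphyFactor Y W l) {e : (Σ q, T q) →₀ ℕ}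
    (he : ∀ a, l a 1 = (e.prod fun v k => a v.1 v.2 ^ k)⁻¹) (g : Gal(N/F)) (q) (t : T q) :
    e ⟨q, g • t⟩ = e ⟨q, t⟩ := by
  classical
  let δ (w : Σ q, T q) (z : Nˣ) (q) (t : T q) : Nˣ := if ⟨q, t⟩ = w then z else 1
  have apply_δ (w z) : l (δ w z) 1 = (z ^ e w)⁻¹ := by
    have : e w = 0 → z ^ e w = 1 := by simp +contextual
    simpa [he, δ, ite_pow, Finsupp.prod_ite_eq', eq_comm] using this
  refine eq_of_forall_units_pow_eq (N := N) fun z => ?_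
  let z' := Units.map ((g⁻¹ : Gal(N/F)) : N →* N) z
  have map_z' : Units.map (g : N →* N) z' = z := Units.ext (g.apply_symm_apply z)
  have δ_smul : (fun q' t' => δ (g • ⟨q, t⟩) z q' (g • t')) =
      fun q' t' => Units.map (g : N →* N) (δ ⟨q, t⟩ z' q' t') := by
    funext q' t'
    have : (⟨q', g • t'⟩ : Σ q, T q) = g • ⟨q, t⟩ ↔ (⟨q', t'⟩ : Σ q, T q) = ⟨q, t⟩ :=
      smul_left_cancel_iff g (x := (⟨q', t'⟩ : Σ q, T q))
    simp only [δ, this, apply_ite (Units.map (g : N →* N)), map_z', map_one]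
  have := (hl.apply_one_mul (δ (g • ⟨q, t⟩) z) g).trans
    (congr(l $δ_smul g).trans (hl.mul_map_apply_one _ g).symm)
  rw [mul_comm, mul_right_inj, apply_δ, apply_δ, map_inv, map_pow, map_z', inv_inj] at this
  exact this

lemma dvd_mapDomain_fst [Infinite N] [∀ q, Finite (T q)]
    [∀ q, MulAction.IsPretransitive Gal(N/F) (T q)] (hdvd : ∀ q, d q ∣ Nat.card (T q))
    (hl : IsAutomorphyFactor Y W l) {e : (Σ q, T q) →₀ ℕ}
    (he : ∀ a, l a 1 = (e.prod fun v k => a v.1 v.2 ^ k)⁻¹) (q) :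
    d q ∣ e.mapDomain Sigma.fst q := by
  have := Fintype.ofFinite (T q)
  rw [mapDomain_sigma_fst_apply]
  rcases isEmpty_or_nonempty (T q) with h | ⟨⟨t₀⟩⟩
  · simp
  have e_const (t : T q) : e ⟨q, t⟩ = e ⟨q, t₀⟩ := by
    obtain ⟨g, rfl⟩ := MulAction.exists_smul_eq Gal(N/F) t₀ t
    exact hl.exponent_smul he g q t₀
  rw [Finset.sum_congr rfl fun t _ => e_const t, Finset.sum_const, Finset.card_univ,
    ← Nat.card_eq_fintype_card]
  exact (hdvd q).mul_right _

lemma exists_coboundary [Infinite N] [∀ q, Finite (T q)]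
    [∀ q, MulAction.IsPretransitive Gal(N/F) (T q)] (hdvd : ∀ q, d q ∣ Nat.card (T q))
    (hl : IsAutomorphyFactor Y W l) {e : (Σ q, T q) →₀ ℕ}
    (he : ∀ a, l a 1 = (e.prod fun v k => a v.1 v.2 ^ k)⁻¹) (hl_one : ∀ᶠ u in 𝓝 1, l 1 u = 1) :
    ∃ κ : Gal(N/F) → Nˣ, (∀ g h, κ g * Units.map (g : N →* N) (κ h) = W.c g h * κ (g * h)) ∧
      ∀ᶠ u in 𝓝 1, κ u = 1 := by
  choose k hk using hl.dvd_mapDomain_fst hdvd he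
  let s := (e.mapDomain Sigma.fst).support
  refine ⟨fun g => l 1 g * ∏ q ∈ s, ((Y q).P g).det ^ k q, fun g h => ?_, ?_⟩
  · have apply_c : l (fun q _ => (Y q).c g h) 1 = (∏ q ∈ s, (Y q).c g h ^ (d q * k q))⁻¹ := by
      simp only [he, ← hk]
      exact congr($(Finsupp.prod_mapDomain_index (h := fun q k => (Y q).c g h ^ k)
        (fun _ => pow_zero _) fun _ _ _ => pow_add _ _ _)⁻¹).symm
    have l_mul : l 1 g * Units.map (g : N →* N) (l 1 h) =
        W.c g h * (l (fun q _ => (Y q).c g h) 1 * l 1 (g * h)) := by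
      simpa [hl.apply_one_mul] using hl 1 1 g h
    calc l 1 g * (∏ q ∈ s, ((Y q).P g).det ^ k q) *
          Units.map (g : N →* N) (l 1 h * ∏ q ∈ s, ((Y q).P h).det ^ k q)
      _ = l 1 g * Units.map (g : N →* N) (l 1 h) *
          ∏ q ∈ s, (((Y q).P g).det * Units.map (g : N →* N) ((Y q).P h).det) ^ k q := by
        rw [map_mul, map_prod, mul_mul_mul_comm, ← Finset.prod_mul_distrib]
        simp only [map_pow, mul_pow]
      _ = W.c g h * (l 1 (g * h) * ∏ q ∈ s, ((Y q).P (g * h)).det ^ k q) := by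
        simp only [ProjectiveCocycle.det_mul, mul_pow, Finset.prod_mul_distrib, l_mul, apply_c,
          ← pow_mul]
        rw [mul_assoc (W.c g h), mul_mul_mul_comm, inv_mul_cancel, one_mul]
  · have : ∀ᶠ u in 𝓝 1, ∀ q ∈ s, (Y q).P u = 1 :=
      (Filter.eventually_all_finset s).2 fun q _ => (Y q).eventually_eq_one
    filter_upwards [hl_one, this] with u hu hs
    rw [hu, one_mul, Finset.prod_eq_one fun q hq => by simp [hs q hq]]

end IsAutomorphyFactor

end AutomorphyFactor

section Kernel

open Matrix.GeneralLinearGroup (map scalar)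
open scoped Topology

variable {F N : Type*} [Field F] [Field N] [Algebra F N] {I : Type*} {T : I → Type*} {d : I → ℕ}
  [∀ q, MulAction Gal(N/F) (T q)] {Y : ∀ q, ProjectiveCocycle F N (d q)} {n : ℕ}
  {W : ProjectiveCocycle F N n}

lemma exists_skolem_noether_isPrimitiveVector {C Q K : Type*} [Ring C] [Algebra F C]
    [Algebra.IsCentral F C] [IsSimpleRing C] [FiniteDimensional F C] [CommRing Q] [IsDomain Q]
    [UniqueFactorizationMonoid Q] [Field K] [Algebra F K] [Algebra Q K] [IsFractionRing Q K]
    (hC : Module.finrank F C = n ^ 2) (ρ r : C →ₐ[F] Matrix (Fin n) (Fin n) K) :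
    ∃ (S : GL (Fin n) K) (v : Fin n × Fin n → Q), (∀ x, ρ x * S = S * r x) ∧
      IsPrimitiveVector v ∧ ∀ i j, S i j = algebraMap Q K (v (i, j)) := by
  have := neZero_of_finrank_eq_sq hC
  obtain ⟨S, hS⟩ := skolem_noether hC ρ r
  have entries_ne_zero : (fun ij : Fin n × Fin n => S ij.1 ij.2) ≠ 0 := fun h =>
    S.ne_zero (Matrix.ext fun i j => congr($h (i, j)))
  obtain ⟨z, v, hv, hzv⟩ := exists_isPrimitiveVector (Q := Q) entries_ne_zero
  refine ⟨scalar (Fin n) z * S, v, fun x => ?_, hv, fun i j => ?_⟩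
  · rw [Matrix.GeneralLinearGroup.scalar_commute, Units.val_mul, ← mul_assoc, hS, mul_assoc,
      mul_assoc, Matrix.GeneralLinearGroup.coe_scalar,
      (Matrix.scalar_commute _ (Commute.all _) _).eq]
  · simp [← hzv]

lemma isPrimitiveVector_twist {v : Fin n × Fin n → CoordRing N T d} (hv : IsPrimitiveVector v)
    (a : ∀ q, T q → Nˣ) (g : Gal(N/F)) (P : GL (Fin n) N) :
    IsPrimitiveVector fun ij : Fin n × Fin n =>
      ∑ k, MvPolynomial.C (P ij.1 k) * twist Y a g (v (k, ij.2)) := by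
  intro z hz
  let V : Matrix (Fin n) (Fin n) (CoordRing N T d) := .of fun k j => twist Y a g (v (k, j))
  let A := P.val.map (MvPolynomial.C : N →+* CoordRing N T d)
  let B := P⁻¹.val.map (MvPolynomial.C : N →+* CoordRing N T d)
  have hBA : B * (A * V) = V := by
    rw [← mul_assoc, ← Matrix.map_mul, ← Units.val_mul, inv_mul_cancel, Units.val_one,
      Matrix.map_one _ (map_zero _) (map_one _), one_mul]
  have dvd_V (k j) : z ∣ V k j := by
    rw [← hBA, Matrix.mul_apply]
    exact Finset.dvd_sum fun i _ => (hz (i, j)).mul_left _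
  have : IsUnit ((twist Y a g).symm z) := hv _ fun ij => by
    simpa [V] using map_dvd (twist Y a g).symm (dvd_V ij.1 ij.2)
  simpa using this

lemma eq_of_map_scalar_mul_eq {K : Type*} [Field K] [NeZero n] (f : N →+* K) {S : GL (Fin n) K}
    {z z' : Nˣ} (h : map f (scalar (Fin n) z) * S = map f (scalar (Fin n) z') * S) : z = z' :=
  Units.ext (f.injective (by simpa using congr($(mul_right_cancel h) 0 0)))

lemma ProjectiveCocycle.Intertwines.map_mul_map {C : Type*} [Ring C] [Algebra F C]
    {ρ : C →ₐ[F] Matrix (Fin n) (Fin n) N} (hρ : W.Intertwines ρ) {K : Type*} [Field K]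
    {ι : N →+* K} {σ : K →+* K} {g : Gal(N/F)} (hι : ∀ z, σ (ι z) = ι (g z)) {S : GL (Fin n) K}
    {R : C → Matrix (Fin n) (Fin n) K} (hS : ∀ x, (ρ x).map ι * S = S * R x)
    (hR : ∀ x, (R x).map σ = R x) (x) :
    (ρ x).map ι * (map ι (W.P g) * map σ S).val = (map ι (W.P g) * map σ S).val * R x := by
  have hρ_ι : (ρ x).map ι * (W.P g).val.map ι = (W.P g).val.map ι * ((ρ x).map ι).map σ := by
    rw [← Matrix.map_mul, hρ, Matrix.map_mul]
    exact congr(_ * $(Matrix.ext fun i j => (hι _).symm))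
  have hS_σ : ((ρ x).map ι).map σ * S.val.map σ = S.val.map σ * R x := by
    rw [← Matrix.map_mul, hS, Matrix.map_mul, hR]
  calc (ρ x).map ι * ((W.P g).val.map ι * S.val.map σ)
    _ = (W.P g).val.map ι * S.val.map σ * R x := by
      rw [← mul_assoc, hρ_ι, mul_assoc, hS_σ, mul_assoc]

lemma map_mul_map_comp_eq {K : Type*} [Field K] {ι : N →+* K} {σ τ : K →+* K} {g : N →+* N}
    (hι : ∀ x, σ (ι x) = ι (g x)) {A B : GL (Fin n) N} {S : GL (Fin n) K} {z z' : Nˣ}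
    (hσ : map ι A * map σ S = map ι (scalar (Fin n) z) * S)
    (hτ : map ι B * map τ S = map ι (scalar (Fin n) z') * S) :
    map ι (A * map g B) * map (σ.comp τ) S =
      map ι (scalar (Fin n) (z * Units.map (g : N →* N) z')) * S := by
  have map_map_ι (A : GL (Fin n) N) : map σ (map ι A) = map ι (map g A) :=
    Matrix.GeneralLinearGroup.ext fun i j => hι (A i j)
  have map_scalar : map g (scalar (Fin n) z') = scalar (Fin n) (Units.map (g : N →* N) z') :=
    Matrix.GeneralLinearGroup.map_scalar g z'
  calc map ι (A * map g B) * map (σ.comp τ) S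
    _ = map ι A * map σ (map ι B * map τ S) := by
      rw [map_mul (map ι), map_mul (map σ), map_map_ι, mul_assoc]
      rfl
    _ = map ι (scalar (Fin n) (Units.map (g : N →* N) z')) * (map ι A * map σ S) := by
      rw [hτ, map_mul (map σ), map_map_ι, map_scalar, ← mul_assoc, ← mul_assoc, ← map_mul,
        ← map_mul, Matrix.GeneralLinearGroup.scalar_commute]
    _ = map ι (scalar (Fin n) (z * Units.map (g : N →* N) z')) * S := by
      rw [hσ, ← mul_assoc, ← map_mul, ← map_mul, mul_comm z]

lemma exists_multiplier {S : GL (Fin n) (CoordField N T d)}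
    {v : Fin n × Fin n → CoordRing N T d} (hv : IsPrimitiveVector v)
    (hSv : ∀ i j, S i j = algebraMap _ _ (v (i, j))) {a : ∀ q, T q → Nˣ} {g : Gal(N/F)}
    {c : (CoordField N T d)ˣ}
    (hc : map (algebraMap N (CoordField N T d)) (W.P g) *
      map (fieldTwist Y a g : CoordField N T d →+* CoordField N T d) S = scalar (Fin n) c * S) :
    ∃ z : Nˣ, map (algebraMap N (CoordField N T d)) (scalar (Fin n) z) = scalar (Fin n) c := by
  have entry (ij : Fin n × Fin n) : algebraMap _ (CoordField N T d)
      (∑ k, MvPolynomial.C (W.P g ij.1 k) * twist Y a g (v (k, ij.2))) =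
      c * algebraMap _ _ (v ij) := by
    have := congr($hc ij.1 ij.2)
    simpa [Matrix.mul_apply, Matrix.diagonal_apply, hSv, IsScalarTower.algebraMap_apply N
      (CoordRing N T d) (CoordField N T d), MvPolynomial.algebraMap_eq] using this
  obtain ⟨u, hu⟩ := hv.exists_unit_of_smul_eq (isPrimitiveVector_twist hv a g (W.P g)) entry
  obtain ⟨z, hz, hzu⟩ := MvPolynomial.isUnit_iff_eq_C_of_isReduced.1 u.isUnit
  refine ⟨hz.unit, ?_⟩
  rw [Matrix.GeneralLinearGroup.map_scalar]
  refine congr(scalar (Fin n) $(Units.ext ?_))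
  rw [← hu, hzu]
  exact IsScalarTower.algebraMap_apply N (CoordRing N T d) (CoordField N T d) z

/-- `S` is an eigenvector, with eigenvalues `l a g` in `N`, of the semilinear operators given by
left multiplication by `W_g` after the twisted action. -/
def IsSemiInvariant (Y : ∀ q, ProjectiveCocycle F N (d q)) (W : ProjectiveCocycle F N n)
    (l : (∀ q, T q → Nˣ) → Gal(N/F) → Nˣ) (S : GL (Fin n) (CoordField N T d)) : Prop :=
  ∀ a g, map (algebraMap N (CoordField N T d)) (W.P g) *
    map (fieldTwist Y a g : CoordField N T d →+* CoordField N T d) S =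
      map (algebraMap N (CoordField N T d)) (scalar (Fin n) (l a g)) * S

namespace IsSemiInvariant

variable {l : (∀ q, T q → Nˣ) → Gal(N/F) → Nˣ} {S : GL (Fin n) (CoordField N T d)}

lemma isAutomorphyFactor [NeZero n] (hS : IsSemiInvariant Y W l S) : IsAutomorphyFactor Y W l := by
  intro a b g h
  have composite := map_mul_map_comp_eq
    (σ := (fieldTwist Y a g : CoordField N T d →+* CoordField N T d)) (g := (g : N →+* N))
    (fun x => fieldTwist_algebraMap_base Y a g x) (hS a g) (hS b h)
  rw [W.mul, map_mul, mul_assoc] at composite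
  refine eq_of_map_scalar_mul_eq (algebraMap N (CoordField N T d)) (composite.symm.trans ?_)
  rw [map_mul, map_mul, mul_assoc, ← hS, ← fieldTwist_mul]
  rfl

lemma twist_entry (hS : IsSemiInvariant Y W l S) {v : Fin n × Fin n → CoordRing N T d}
    (hSv : ∀ i j, S i j = algebraMap _ _ (v (i, j))) {g : Gal(N/F)} (hg : W.P g = 1)
    (a : ∀ q, T q → Nˣ) (i j) :
    twist Y a g (v (i, j)) = MvPolynomial.C (l a g : N) * v (i, j) := by
  refine IsFractionRing.injective (CoordRing N T d) (CoordField N T d) ?_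
  have := congr($(hS a g) i j)
  simpa [hg, hSv, IsScalarTower.algebraMap_apply N (CoordRing N T d),
      MvPolynomial.algebraMap_eq] using this

lemma exists_exponent [NeZero n] (hS : IsSemiInvariant Y W l S)
    {v : Fin n × Fin n → CoordRing N T d} (hSv : ∀ i j, S i j = algebraMap _ _ (v (i, j))) :
    ∃ e : (Σ q, T q) →₀ ℕ, ∀ a, l a 1 = (e.prod fun w k => a w.1 w.2 ^ k)⁻¹ := by
  obtain ⟨i, j, hij⟩ : ∃ i j, S i j ≠ 0 := by
    by_contra! h
    exact S.ne_zero (Matrix.ext h)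
  have hv : v (i, j) ≠ 0 := fun h => hij (by rw [hSv, h, map_zero])
  obtain ⟨m, hm⟩ := MvPolynomial.ne_zero_iff.1 hv
  refine ⟨m.mapDomain fun w => ⟨w.1, w.2.1⟩, fun a => Units.ext ?_⟩
  have twist_entry : twist Y a 1 (v (i, j)) = MvPolynomial.C (l a 1 : N) * v (i, j) :=
    hS.twist_entry hSv W.P_one a i j
  have := congr(MvPolynomial.coeff m $twist_entry)
  rw [coeff_twist_one, MvPolynomial.coeff_C_mul, mul_left_inj' hm] at this
  rw [← this, Finsupp.prod_mapDomain_index (fun _ => pow_zero _) fun _ _ _ => pow_add _ _ _]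
  simp [Finsupp.prod]

lemma eventually_eq_one [NeZero n] [Algebra.IsIntegral F N]
    (hT : ∀ q (t : T q), ∀ᶠ u : Gal(N/F) in 𝓝 1, u • t = t) (hS : IsSemiInvariant Y W l S)
    {v : Fin n × Fin n → CoordRing N T d} (hSv : ∀ i j, S i j = algebraMap _ _ (v (i, j))) :
    ∀ᶠ u in 𝓝 1, l 1 u = 1 := by
  have entry_eq (i j) : ∀ᶠ u in 𝓝 1, twist Y 1 u (v (i, j)) = v (i, j) :=
    eventually_twist_eq_self Y hT _
  filter_upwards [W.eventually_eq_one, Filter.eventually_all.2 fun i =>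
    Filter.eventually_all.2 (entry_eq i)] with u hW hv
  refine eq_of_map_scalar_mul_eq (algebraMap N (CoordField N T d)) (S := S) ?_
  rw [← hS, hW, map_one, map_one, map_one]
  refine congr(1 * $(Matrix.GeneralLinearGroup.ext fun i j => ?_))
  simp [hSv, hv]

end IsSemiInvariant

lemma exists_isSemiInvariant {C : Type*} [Ring C] [Algebra F C] [Algebra.IsCentral F C]
    [IsSimpleRing C] [FiniteDimensional F C] (hC : Module.finrank F C = n ^ 2)
    {ρ : C →ₐ[F] Matrix (Fin n) (Fin n) N} (hρ : W.Intertwines ρ)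
    (r : C →ₐ[F] Matrix (Fin n) (Fin n) (IntermediateField.fixedField (twistGroup (T := T) Y))) :
    ∃ (l : (∀ q, T q → Nˣ) → Gal(N/F) → Nˣ) (S : GL (Fin n) (CoordField N T d))
      (v : Fin n × Fin n → CoordRing N T d),
      IsSemiInvariant Y W l S ∧ ∀ i j, S i j = algebraMap _ _ (v (i, j)) := by
  let ρK : C →ₐ[F] Matrix (Fin n) (Fin n) (CoordField N T d) :=
    (Algebra.algHom F N (CoordField N T d)).mapMatrix.comp ρ
  let rK : C →ₐ[F] Matrix (Fin n) (Fin n) (CoordField N T d) :=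
    (IntermediateField.val _).mapMatrix.comp r
  obtain ⟨S, v, hS, hv, hSv⟩ :=
    exists_skolem_noether_isPrimitiveVector (Q := CoordRing N T d) hC ρK rK
  have exists_multiplier (a : ∀ q, T q → Nˣ) (g : Gal(N/F)) : ∃ z : Nˣ,
      map (algebraMap N (CoordField N T d)) (W.P g) *
        map (fieldTwist Y a g : CoordField N T d →+* CoordField N T d) S =
      map (algebraMap N (CoordField N T d)) (scalar (Fin n) z) * S := by
    have rK_fixed (x) : (rK x).map (fieldTwist Y a g) = rK x :=
      Matrix.ext fun i j => (r x i j).2 ⟨_, a, g, rfl⟩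
    obtain ⟨c, hc⟩ := exists_eq_scalar_mul hC ρK rK (hρ.map_mul_map
      (σ := (fieldTwist Y a g : CoordField N T d →+* CoordField N T d))
      (fun z => fieldTwist_algebraMap_base Y a g z) hS rK_fixed) hS
    obtain ⟨z, hz⟩ := exists_multiplier hv hSv hc
    exact ⟨z, hz ▸ hc⟩
  choose l hl using exists_multiplier
  exact ⟨l, S, v, hl, hSv⟩

lemma nonempty_algHom_matrix_of_fixedField_twistGroup [IsGalois F N] [Infinite N]
    [∀ q, NeZero (d q)] [∀ q, Finite (T q)] [∀ q, MulAction.IsPretransitive Gal(N/F) (T q)]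
    (hdvd : ∀ q, d q ∣ Nat.card (T q)) (hT : ∀ q (t : T q), ∀ᶠ u : Gal(N/F) in 𝓝 1, u • t = t)
    {C : Type*} [Ring C] [Algebra F C] [Algebra.IsCentral F C] [IsSimpleRing C]
    [FiniteDimensional F C] (hC : Module.finrank F C = n ^ 2)
    (ρ : C →ₐ[F] Matrix (Fin n) (Fin n) N)
    (r : C →ₐ[F] Matrix (Fin n) (Fin n) (IntermediateField.fixedField (twistGroup (T := T) Y))) :
    Nonempty (C →ₐ[F] Matrix (Fin n) (Fin n) F) := by
  have := neZero_of_finrank_eq_sq hC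
  obtain ⟨W, hW⟩ := ProjectiveCocycle.exists_intertwines hC ρ
  obtain ⟨l, S, v, hS, hSv⟩ := exists_isSemiInvariant hC hW r
  obtain ⟨e, he⟩ := hS.exists_exponent hSv
  obtain ⟨κ, hκ, hκ_one⟩ := hS.isAutomorphyFactor.exists_coboundary hdvd he
    (hS.eventually_eq_one hT hSv)
  exact W.descent_of_coboundary hW hκ hκ_one

end Kernel

section Embeddings

open scoped Topology

variable {F N L : Type*} [Field F] [Field N] [Algebra F N] [Field L] [Algebra F L]

/-- The action on the embeddings of `L` into `N` by composition. -/
instance : MulAction Gal(N/F) (L →ₐ[F] N) where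
  smul g t := g.toAlgHom.comp t
  one_smul _ := rfl
  mul_smul _ _ _ := rfl

instance [Normal F N] : MulAction.IsPretransitive Gal(N/F) (L →ₐ[F] N) :=
  ⟨exists_algEquiv_comp_eq⟩

lemma eventually_smul_algHom_eq_self [FiniteDimensional F L] [Algebra.IsIntegral F N]
    (t : L →ₐ[F] N) : ∀ᶠ u : Gal(N/F) in 𝓝 1, u • t = t := by
  let b := Module.finBasis F L
  have basis_fixed : ∀ᶠ u : Gal(N/F) in 𝓝 1, ∀ k, u (t (b k)) = t (b k) :=
    Filter.eventually_all.2 fun k =>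
      (stabilizer_isOpen_of_isIntegral (t (b k))).mem_nhds (one_smul _ _)
  filter_upwards [basis_fixed] with u hu
  exact AlgHom.toLinearMap_injective (b.ext hu)

lemma card_algHom_of_isSepClosed [IsSepClosed N] [FiniteDimensional F L]
    [Algebra.IsSeparable F L] : Nat.card (L →ₐ[F] N) = Module.finrank F L := by
  rw [Nat.card_eq_fintype_card, AlgHom.card_of_splits]
  exact fun x => IsSepClosed.splits_of_separable _
    (Polynomial.Separable.map (Algebra.IsSeparable.isSeparable F x))

lemma infinite_of_isSepClosed (N : Type*) [Field N] [IsSepClosed N] : Infinite N := by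
  by_contra h
  have := not_infinite_iff_finite.1 h
  have : IsAlgClosed N := inferInstance
  exact not_finite N

end Embeddings

lemma isSplit_of_algHom_matrix {F C K : Type u} [Field F] [Ring C] [Algebra F C]
    [Algebra.IsCentral F C] [IsSimpleRing C] [FiniteDimensional F C] [Field K] [Algebra F K]
    {d : ℕ} (hC : Module.finrank F C = d ^ 2) (ρ : C →ₐ[F] Matrix (Fin d) (Fin d) K) :
    IsSplit K (K ⊗[F] C) :=
  ⟨d, (neZero_of_finrank_eq_sq hC).pos, ⟨splittingEquiv hC ρ⟩⟩

lemma exists_algHom_matrix_adjoin {F N L C : Type*} [Field F] [Field N] [Algebra F N]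
    [Field L] [Algebra F L] [FiniteDimensional F L] [Algebra.IsSeparable F L] [Ring C] [Algebra F C]
    [Algebra.IsCentral F C] [IsSimpleRing C] [FiniteDimensional F C]
    {I : Type*} {T : I → Type*} {d : I → ℕ} [∀ q, MulAction Gal(N/F) (T q)]
    {Y : ∀ q, ProjectiveCocycle F N (d q)} {q : I}
    (hC : Module.finrank F C = d q ^ 2) {ρ : C →ₐ[F] Matrix (Fin (d q)) (Fin (d q)) N}
    (hρ : (Y q).Intertwines ρ) (s : L →ₐ[F] N) (t : T q)
    (ht : ∀ g : Gal(N/F), (∀ x, g (s x) = s x) → g • t = t) :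
    Nonempty (C →ₐ[F] Matrix (Fin (d q)) (Fin (d q))
      (IntermediateField.adjoin (IntermediateField.fixedField (twistGroup (T := T) Y))
        (Set.range ((Algebra.algHom F N (CoordField N T d)).comp s)))) := by
  let E := IntermediateField.fixedField (twistGroup (T := T) Y)
  let M := IntermediateField.adjoin E (Set.range ((Algebra.algHom F N (CoordField N T d)).comp s))
  refine exists_algHom_matrix_of_twistGroup Y (M := M.restrictScalars F) hC hρ t fun f hf => ?_
  refine mem_adjoin_of_fixed _ _ ?_
  rintro _ ⟨a, g, rfl⟩ hg
  exact hf a g (ht g fun x => (algebraMap N (CoordField N T d)).injective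
    ((fieldTwist_algebraMap_base Y a g (s x)).symm.trans (hg x)))

theorem exists_splitting_extension_family_general (F : Type u) [Field F] {ι μ : Type u}
    (D : ι → Type u) [∀ i, Ring (D i)] [∀ i, Algebra F (D i)] (hD : ∀ i, IsCSA F (D i))
    {d : ι → ℕ} (hd : ∀ i, Module.finrank F (D i) = d i ^ 2)
    (L : μ → Type u) [∀ j, Field (L j)] [∀ j, Algebra F (L j)] [∀ j, FiniteDimensional F (L j)]
    [∀ j, Algebra.IsSeparable F (L j)] (hdvd : ∀ i j, d i ∣ Module.finrank F (L j)) :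
    ∃ (K : Type u) (_ : Field K) (_ : Algebra F K) (E : IntermediateField F K)
      (s : ∀ j, L j →ₐ[F] K), ResInj F E (algebraMap F E) ∧
        ∀ i j, IsSplit (IntermediateField.adjoin E (Set.range (s j)))
          (IntermediateField.adjoin E (Set.range (s j)) ⊗[F] D i) := by
  have central (i) : Algebra.IsCentral F (D i) := (hD i).1
  have simple (i) : IsSimpleRing (D i) := (hD i).2.1
  have finite (i) : FiniteDimensional F (D i) := (hD i).2.2
  have degree_ne_zero (q : ι × μ) : NeZero (d q.1) := neZero_of_finrank_eq_sq (hd q.1)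
  let N := SeparableClosure F
  have : Infinite N := infinite_of_isSepClosed N
  have exists_cocycle (i) : ∃ (Y : ProjectiveCocycle F N (d i))
      (ρ : D i →ₐ[F] Matrix (Fin (d i)) (Fin (d i)) N), Y.Intertwines ρ := by
    obtain ⟨m, hm, ⟨ρ⟩⟩ := exists_algHom_matrix_of_isSepClosed F (D i) N
    obtain rfl : d i = m := Nat.pow_left_injective two_ne_zero ((hd i).symm.trans hm)
    obtain ⟨Y, hY⟩ := ProjectiveCocycle.exists_intertwines (hd i) ρ
    exact ⟨Y, ρ, hY⟩
  choose Y ρ hρ using exists_cocycle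
  let t (j) : L j →ₐ[F] N := IsSepClosed.lift
  let T (q : ι × μ) : Type u := L q.2 →ₐ[F] N
  let K := CoordField N T fun q => d q.1
  let Γ : Subgroup Gal(K/F) := twistGroup fun q : ι × μ => Y q.1
  refine ⟨K, inferInstance, inferInstance, .fixedField Γ,
    fun j => (Algebra.algHom F N K).comp (t j),
    TrivialBrauerKernel.resInj fun C _ _ _ _ _ n hC r => ?_, fun i j => ?_⟩
  · obtain ⟨m, hm, ⟨ρ⟩⟩ := exists_algHom_matrix_of_isSepClosed F C N
    obtain rfl : n = m := Nat.pow_left_injective two_ne_zero (hC.symm.trans hm)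
    exact nonempty_algHom_matrix_of_fixedField_twistGroup
      (fun q => by rw [card_algHom_of_isSepClosed]; exact hdvd q.1 q.2)
      (fun q t => eventually_smul_algHom_eq_self t) hC ρ r
  · obtain ⟨r⟩ := exists_algHom_matrix_adjoin (T := T) (d := fun q => d q.1) (q := (i, j))
      (Y := fun q => Y q.1) (hd i) (hρ i) (t j) (t j) fun g hg => AlgHom.ext hg
    exact isSplit_of_algHom_matrix (hd i) r

lemma isSeparable_of_finrank_ne_zero {F L : Type*} [Field F] [Field L] [Algebra F L]
    (h : (Module.finrank F L : F) ≠ 0) : Algebra.IsSeparable F L := by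
  by_contra h'
  have trace_one := Algebra.trace_algebraMap (S := L) (1 : F)
  rw [Algebra.trace_eq_zero_of_not_isSeparable h', nsmul_one] at trace_one
  exact h trace_one.symm

lemma ResInj.resInjP {F E : Type u} [Field F] [Field E] {f : F →+* E} (h : ResInj F E f) (p : ℕ) :
    ResInjP p F E f :=
  fun A B _ _ _ _ hA hB _ _ => h A B hA hB

lemma algebra_adjoin_range_eq_top {F L K : Type*} [Field F] [Field L] [Algebra F L]
    [Algebra.IsAlgebraic F L] [Field K] [Algebra F K] (E : IntermediateField F K)
    (s : L →ₐ[F] K) (t : L → IntermediateField.adjoin E (Set.range s)) (ht : ∀ x, (t x : K) = s x) :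
    Algebra.adjoin E (Set.range t) = ⊤ := by
  refine Subalgebra.map_injective
    (f := (IntermediateField.adjoin E (Set.range s)).val) Subtype.val_injective ?_
  have algebraic : ∀ x ∈ Set.range s, IsAlgebraic E x := by
    rintro _ ⟨x, rfl⟩
    exact ((isAlgebraic_algHom_iff s s.injective).2 (Algebra.IsAlgebraic.isAlgebraic x)).tower_top E
  rw [AlgHom.map_adjoin, Algebra.map_top, ← Set.range_comp, IntermediateField.range_val,
    show (IntermediateField.adjoin E (Set.range s)).val ∘ t = s from funext ht]
  exact (IntermediateField.adjoin_toSubalgebra_of_isAlgebraic algebraic).symm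

/-- The composita `E L` of subextensions of a common overfield `K` form a
`SplittingExtensionFamily`. -/
noncomputable def SplittingExtensionFamily.ofAdjoin {p : ℕ} {F : Type u} [Field F] {ι μ : Type u}
    {D : ι → Type u} [∀ i, DivisionRing (D i)] [∀ i, Algebra F (D i)]
    {L : μ → Type u} [∀ j, Field (L j)] [∀ j, Algebra F (L j)] [∀ j, Algebra.IsAlgebraic F (L j)]
    {K : Type u} [Field K] [Algebra F K] {E : IntermediateField F K} (s : ∀ j, L j →ₐ[F] K)
    (hE : ResInjP p F E (algebraMap F E))
    (hs : ∀ i j, IsSplit (IntermediateField.adjoin E (Set.range (s j)))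
      (IntermediateField.adjoin E (Set.range (s j)) ⊗[F] D i)) :
    SplittingExtensionFamily p F D L :=
  let toCompositum (j) : L j →+* IntermediateField.adjoin E (Set.range (s j)) :=
    (s j : L j →+* K).codRestrict _ fun x =>
      IntermediateField.subset_adjoin E _ (Set.mem_range_self x)
  letI algLN (j) : Algebra (L j) (IntermediateField.adjoin E (Set.range (s j))) :=
    (toCompositum j).toAlgebra
  have tower (j) : IsScalarTower F (L j) (IntermediateField.adjoin E (Set.range (s j))) :=
    .of_algebraMap_eq fun x => Subtype.ext ((s j).commutes x).symm
  { E := E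
    resInj := hE
    N := fun _ j => IntermediateField.adjoin E (Set.range (s j))
    algLN := fun _ j => algLN j
    towerL := fun _ j => tower j
    compositum := fun _ j => algebra_adjoin_range_eq_top E (s j) _ fun _ => rfl
    splits := hs }

/-- for a set `A = {D i}` of central division `F`-algebras of degree `p` and a
set `S = {L j}` of degree-`p` extensions of `F` (char `F ≠ p`), there is `E/F` with
`Br(F)[p] → Br(E)[p]` injective such that each compositum `E·(L j)` splits each `(D i) ⊗_F E`. -/
theorem exists_splitting_extension_family (p : ℕ) (hp : p.Prime)
    (F : Type u) [Field F] (hchar : ringChar F ≠ p) {ι μ : Type u}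
    (D : ι → Type u) [∀ i, DivisionRing (D i)] [∀ i, Algebra F (D i)]
    (hD : ∀ i, IsCentralDivisionOfDeg F (D i) p)
    (L : μ → Type u) [∀ j, Field (L j)] [∀ j, Algebra F (L j)]
    (hL : ∀ j, Module.finrank F (L j) = p) :
    Nonempty (SplittingExtensionFamily p F D L) := by
  have p_ne_zero : (p : F) ≠ 0 := fun h => ((Nat.dvd_prime hp).1 (ringChar.dvd h)).elim
    CharP.ringChar_ne_one hchar
  have finite (j) : FiniteDimensional F (L j) :=
    Module.finite_of_finrank_pos ((hL j).symm ▸ hp.pos)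
  have separable (j) : Algebra.IsSeparable F (L j) :=
    isSeparable_of_finrank_ne_zero ((hL j).symm ▸ p_ne_zero)
  obtain ⟨K, _, _, E, s, hE, hs⟩ := exists_splitting_extension_family_general F D
    (fun i => ⟨(hD i).1, inferInstance, (hD i).2.1⟩) (fun i => (hD i).2.2) L
    fun _ j => (hL j).symm.dvd
  exact ⟨.ofAdjoin s (hE.resInjP p) hs⟩
end
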